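/- arXiv:1611.06196 — 2 statements merged into one kernel-verified Lean document; each statement's English description precedes it below -/
import Mathlib

section
/- Let F be a finite field and let G₀ = PSL₂(F) × PSL₂(F). Then G₀ has trivial center, so it may be identified with the group Inn(G₀) of inner automorphisms inside Aut(G₀). For every group G with Inn(G₀) ≤ G ≤ Aut(G₀) and every maximal subgroup H of G, one has d(G) ≤ 6, d(H) ≤ 8, and d(H ∩ Inn(G₀)) ≤ 4. -/
/-- The minimal number of generators of a group `G`. -/
noncomputable def minGen (G : Type*) [Group G] : ℕ :=
  sInf {n : ℕ | ∃ S : Finset G, S.card = n ∧ Subgroup.closure (S : Set G) = ⊤}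

/-- `PSL₂(F)`: the quotient of `SL₂(F)` by its center. -/
abbrev PSL2 (F : Type*) [Field F] :=
  Matrix.SpecialLinearGroup (Fin 2) F ⧸
    Subgroup.center (Matrix.SpecialLinearGroup (Fin 2) F)


theorem orbit_sum {M X : Type*} [Group M] [Finite M] [MulAction M X] (Y : Finset X)
    (hY : ∀ g : M, ∀ T ∈ Y, g • T ∈ Y) (f : X → ℤ) (hf : ∀ (g : M) (T : X), f (g • T) = f T) :
    ∃ R : Finset X, R ⊆ Y ∧ (∀ T ∈ Y, ∃ P ∈ R, T ∈ MulAction.orbit M P) ∧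
      (∀ P ∈ R, ∀ P' ∈ R, P' ∈ MulAction.orbit M P → P' = P) ∧
      ∑ T ∈ Y, f T = ∑ P ∈ R, ((MulAction.orbit M P).ncard : ℤ) * f P := by
  classical
  induction Y using Finset.strongInduction with
  | H Y ih =>
    rcases Y.eq_empty_or_nonempty with rfl | ⟨T, hT⟩
    · exact ⟨∅, by simp⟩
    have hfin : (MulAction.orbit M T).Finite := Set.finite_range _
    set O := hfin.toFinset with hO
    have hOm : ∀ x, x ∈ O ↔ x ∈ MulAction.orbit M T := by simp [hO]
    have hOY : O ⊆ Y := by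
      intro x hx
      obtain ⟨g, rfl⟩ := (hOm x).1 hx
      exact hY g T hT
    have hTO : T ∈ O := (hOm T).2 (MulAction.mem_orbit_self T)
    obtain ⟨R, hRY, hcov, hdis, hsum⟩ := ih (Y \ O)
      (Finset.ssubset_iff_subset_ne.2 ⟨Finset.sdiff_subset, fun h => by
        have := h ▸ hT
        simp [hTO] at this⟩)
      (by
        intro g x hx
        rw [Finset.mem_sdiff, hOm] at hx ⊢
        exact ⟨hY g x hx.1, fun h => hx.2 (by
          have := MulAction.mem_orbit_of_mem_orbit g⁻¹ h
          rwa [inv_smul_smul] at this)⟩)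
    have hTR : T ∉ R := fun h => by
      have := hRY h
      simp [hTO] at this
    have hRO : ∀ x ∈ R, x ∉ MulAction.orbit M T := fun x hx h => by
      have := hRY hx
      rw [Finset.mem_sdiff, hOm] at this
      exact this.2 h
    refine ⟨insert T R, ?_, ?_, ?_, ?_⟩
    · intro x hx
      rcases Finset.mem_insert.1 hx with rfl | hx
      · exact hT
      · exact (Finset.mem_sdiff.1 (hRY hx)).1
    · intro x hx
      by_cases hxO : x ∈ O
      · exact ⟨T, Finset.mem_insert_self _ _, (hOm x).1 hxO⟩
      · obtain ⟨P, hP, h⟩ := hcov x (Finset.mem_sdiff.2 ⟨hx, hxO⟩)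
        exact ⟨P, Finset.mem_insert_of_mem hP, h⟩
    · intro P hP P' hP' h
      rcases Finset.mem_insert.1 hP with hP | hP <;> rcases Finset.mem_insert.1 hP' with hP' | hP'
      · rw [hP, hP']
      · exact absurd (hP ▸ h) (hRO _ hP')
      · exact absurd (MulAction.mem_orbit_symm.1 (hP' ▸ h)) (hRO _ hP)
      · exact hdis _ hP _ hP' h
    · rw [Finset.sum_insert hTR, ← hsum, ← Finset.sum_sdiff hOY, add_comm]
      congr 1
      rw [Finset.sum_congr rfl (g := fun _ => f T), Finset.sum_const,
        Set.ncard_eq_toFinset_card _ hfin, nsmul_eq_mul]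
      intro x hx
      obtain ⟨g, rfl⟩ := (hOm x).1 hx
      exact hf g T

theorem orbit_mul_stab {M X : Type*} [Group M] [MulAction M X] (P : X) :
    (MulAction.orbit M P).ncard * Nat.card (MulAction.stabilizer M P) = Nat.card M := by
  rw [← MulAction.index_stabilizer, mul_comm, Subgroup.card_mul_index]

/-- All stabilizers of the same order. -/
theorem dvd_of_stab {M X : Type*} [Group M] [Finite M] [MulAction M X] (Y : Finset X)
    (hY : ∀ g : M, ∀ T ∈ Y, g • T ∈ Y) (c : ℕ)
    (hc : ∀ T ∈ Y, Nat.card (MulAction.stabilizer M T) = c) : Nat.card M ∣ c * Y.card := by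
  obtain ⟨R, hR, -, -, h⟩ := orbit_sum Y hY (fun _ => 1) (fun _ _ => rfl)
  rw [← Int.natCast_dvd_natCast]
  have : ((c * Y.card : ℕ) : ℤ) = ∑ P ∈ R, (Nat.card M : ℤ) := by
    push_cast
    have h2 : (Y.card : ℤ) = ∑ T ∈ Y, 1 := by simp
    rw [h2, h, Finset.mul_sum]
    refine Finset.sum_congr rfl fun P hP => ?_
    rw [← orbit_mul_stab P, hc P (hR hP)]
    push_cast; ring
  rw [this, Finset.sum_const]
  simp

theorem card_subgroupOf' {G : Type*} [Group G] (M H : Subgroup G) :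
    Nat.card (H.subgroupOf M) = Nat.card (M ⊓ H : Subgroup G) := by
  rw [inf_comm, ← Subgroup.inf_subgroupOf_right]
  exact Nat.card_congr (Subgroup.subgroupOfEquivOfLe inf_le_right).toEquiv

/-- Möbius-like actions. -/
structure ZAct (Γ X K : Type*) [Group Γ] [MulAction Γ X] [Field K] (Q : X → Subgroup Γ) :
    Prop where
  ex_fix : ∀ g : Γ, g ≠ 1 → ∃ P : X, g • P = P
  three : ∀ (g : Γ) (P R T : X), P ≠ R → P ≠ T → R ≠ T →
    g • P = P → g • R = R → g • T = T → g = 1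
  mem_Q : ∀ (g : Γ) (P : X), g ∈ Q P ↔ g = 1 ∨ (g • P = P ∧ ∀ R, g • R = R → R = P)
  chi : ∀ P : X, ∃ χ : MulAction.stabilizer Γ P →* Kˣ, ∀ g, χ g = 1 ↔ (g : Γ) ∈ Q P
  comm : ∀ P, ∀ a ∈ Q P, ∀ b ∈ Q P, a * b = b * a

set_option linter.unusedSectionVars false

namespace ZAct

open MulAction

section defs
variable {Γ X : Type*} [Group Γ] [MulAction Γ X]

/-- stabilizer order -/
noncomputable def sc (M : Subgroup Γ) (P : X) : ℕ := Nat.card ↥(M ⊓ stabilizer Γ P)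
/-- unipotent order -/
noncomputable def qc (Q : X → Subgroup Γ) (M : Subgroup Γ) (P : X) : ℕ := Nat.card ↥(M ⊓ Q P)
/-- torus order -/
noncomputable def kc (Q : X → Subgroup Γ) (M : Subgroup Γ) (P : X) : ℕ :=
  (Q P).relIndex (M ⊓ stabilizer Γ P)
/-- orbit size -/
noncomputable def nc (M : Subgroup Γ) (P : X) : ℕ := (orbit M P).ncard
end defs

variable {Γ X K : Type*} [Group Γ] [MulAction Γ X] [Field K] {Q : X → Subgroup Γ}

theorem nc_mul_sc (M : Subgroup Γ) (P : X) : nc M P * sc M P = Nat.card M := by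
  rw [nc, sc, ← orbit_mul_stab (M := M) P, ← card_subgroupOf']
  rfl

theorem Q_le (Z : ZAct Γ X K Q) (P : X) : Q P ≤ stabilizer Γ P := by
  intro g hg
  rcases (Z.mem_Q g P).1 hg with rfl | h
  · exact one_mem _
  · exact h.1

theorem sc_eq [Finite Γ] (Z : ZAct Γ X K Q) (M : Subgroup Γ) (P : X) :
    sc M P = qc Q M P * kc Q M P := by
  rw [sc, qc, kc]
  have h := Subgroup.card_mul_index ((Q P).subgroupOf (M ⊓ stabilizer Γ P))
  rw [card_subgroupOf', inf_assoc, inf_eq_right.2 (Z.Q_le P)] at h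
  exact h.symm

theorem kc_mono [Finite Γ] {L M : Subgroup Γ} (h : L ≤ M) (P : X) : kc Q L P ≤ kc Q M P :=
  Subgroup.relIndex_le_of_le_right (inf_le_inf_right _ h) Subgroup.index_ne_zero_of_finite

theorem qc_dvd {L M : Subgroup Γ} (h : L ≤ M) (P : X) : qc Q L P ∣ qc Q M P :=
  Subgroup.card_dvd_of_le (inf_le_inf_right _ h)

theorem sc_dvd {L M : Subgroup Γ} (h : L ≤ M) (P : X) : sc L P ∣ sc M P :=
  Subgroup.card_dvd_of_le (inf_le_inf_right _ h)

theorem sc_pos [Finite Γ] (M : Subgroup Γ) (P : X) : 0 < sc M P := Nat.card_pos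
theorem qc_pos [Finite Γ] (M : Subgroup Γ) (P : X) : 0 < qc Q M P := Nat.card_pos
theorem nc_pos [Finite Γ] (M : Subgroup Γ) (P : X) : 0 < nc M P := by
  have := nc_mul_sc M P
  have h2 : 0 < Nat.card M := Nat.card_pos
  exact Nat.pos_of_mul_pos_right (this ▸ h2) 
theorem kc_pos [Finite Γ] (M : Subgroup Γ) (P : X) : 0 < kc Q M P :=
  Nat.pos_of_ne_zero Subgroup.index_ne_zero_of_finite

theorem uni_unique (Z : ZAct Γ X K Q) {P R : X} {y : Γ} (hy : y ∈ Q P) (h1 : y ≠ 1)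
    (hR : y • R = R) : R = P := by
  rcases (Z.mem_Q y P).1 hy with rfl | h
  · exact absurd rfl h1
  · exact h.2 R hR

theorem Q_disj (Z : ZAct Γ X K Q) {P R : X} {y : Γ} (hy : y ∈ Q P) (hy' : y ∈ Q R) (h1 : y ≠ 1) :
    R = P := Z.uni_unique hy h1 (Z.Q_le R hy')

theorem conj_Q (Z : ZAct Γ X K Q) {P : X} {y : Γ} (g : Γ) (hy : y ∈ Q P) :
    g * y * g⁻¹ ∈ Q (g • P) := by
  rw [Z.mem_Q] at hy ⊢
  rcases hy with rfl | ⟨h, h'⟩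
  · left; simp
  · right
    refine ⟨by simp [mul_smul, h], fun R hR => ?_⟩
    rw [mul_smul, mul_smul, smul_eq_iff_eq_inv_smul] at hR
    have := h' _ hR
    rw [← this, smul_inv_smul]

theorem conj_Q_iff (Z : ZAct Γ X K Q) {P : X} {y : Γ} (g : Γ) :
    g * y * g⁻¹ ∈ Q (g • P) ↔ y ∈ Q P := by
  refine ⟨fun h => ?_, Z.conj_Q g⟩
  have := Z.conj_Q g⁻¹ h
  simpa [mul_assoc] using this

/-- Centralizers of unipotents. -/
theorem cent (Z : ZAct Γ X K Q) {P : X} {y z : Γ} (hy : y ∈ Q P) (h1 : y ≠ 1)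
    (hc : z * y = y * z) : z ∈ Q P := by
  have hyP : y • P = P := Z.Q_le P hy
  have hzP : z • P = P := by
    apply Z.uni_unique hy h1
    rw [← mul_smul, ← hc, mul_smul, hyP]
  rw [Z.mem_Q]
  by_contra hcon
  push Not at hcon
  obtain ⟨hz1, hz2⟩ := hcon
  obtain ⟨R, hR, hRP⟩ := hz2 hzP
  refine hz1 (Z.three z P R (y • R) (Ne.symm hRP) ?_ ?_ hzP hR ?_)
  · intro h
    apply hRP
    rw [← hyP] at h
    exact (smul_left_cancel y h).symm
  · intro h
    exact hRP (Z.uni_unique hy h1 h.symm)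
  · rw [← mul_smul, hc, mul_smul, hR]

theorem orbit_q (Z : ZAct Γ X K Q) (M : Subgroup Γ) {g : Γ} (hg : g ∈ M) (P : X) :
    qc Q M (g • P) = qc Q M P := by
  refine (Nat.card_congr ((MulAut.conj g).toEquiv.subtypeEquiv ?_)).symm
  intro y
  simp only [Subgroup.mem_inf, MulEquiv.toEquiv_eq_coe, MulEquiv.coe_toEquiv, MulAut.conj_apply,
    Z.conj_Q_iff]
  have : g * y * g⁻¹ ∈ M ↔ y ∈ M := by
    rw [Subgroup.mul_mem_cancel_right _ (inv_mem hg), Subgroup.mul_mem_cancel_left _ hg]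
  rw [this]

theorem orbit_n (M : Subgroup Γ) {g : Γ} (hg : g ∈ M) (P : X) :
    nc M (g • P) = nc M P := by
  rw [nc, nc]
  congr 1
  exact orbit_smul (⟨g, hg⟩ : M) P

theorem orbit_s [Finite Γ] (M : Subgroup Γ) {g : Γ} (hg : g ∈ M) (P : X) :
    sc M (g • P) = sc M P := by
  have h1 := nc_mul_sc M P
  have h2 := nc_mul_sc M (g • P)
  rw [orbit_n M hg, ← h1] at h2
  exact Nat.eq_of_mul_eq_mul_left (nc_pos M P) h2

theorem kc_dvd [Finite Γ] (Z : ZAct Γ X K Q) (M : Subgroup Γ) (P : X) :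
    kc Q M P ∣ qc Q M P - 1 := by
  classical
  have := Fintype.ofFinite Γ
  let A := M ⊓ stabilizer Γ P
  let : MulAction A Γ := MulAction.compHom Γ (MulAut.conj.comp A.subtype)
  have hsm : ∀ (a : A) (y : Γ), a • y = a * y * (a : Γ)⁻¹ := fun a y => rfl
  let Y : Finset Γ := Finset.univ.filter fun y => y ∈ M ⊓ Q P ∧ y ≠ 1
  have hYc : Y.card = qc Q M P - 1 := by
    have : Y = (Finset.univ.filter fun y => y ∈ M ⊓ Q P).erase 1 := by
      ext y; simp [Y, and_comm, and_assoc]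
    rw [this, Finset.card_erase_of_mem (by simp)]
    congr 1
    rw [qc, Nat.card_eq_fintype_card, Fintype.card_subtype]
  have hd := dvd_of_stab (M := A) Y ?_ (qc Q M P) ?_
  · rw [hYc] at hd
    have h2 : Nat.card A = qc Q M P * kc Q M P := Z.sc_eq M P
    rw [h2] at hd
    exact Nat.dvd_of_mul_dvd_mul_left (qc_pos M P) hd
  · intro g y hy
    simp only [Y, Finset.mem_filter, Finset.mem_univ, true_and, Subgroup.mem_inf] at hy ⊢
    obtain ⟨⟨hy1, hy2⟩, hy3⟩ := hy
    have hgP : (g : Γ) • P = P := g.2.2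
    refine ⟨⟨?_, ?_⟩, ?_⟩
    · exact mul_mem (mul_mem g.2.1 hy1) (inv_mem g.2.1)
    · have := Z.conj_Q (g : Γ) hy2
      rwa [hgP] at this
    · rw [hsm]
      simpa using hy3
  · intro y hy
    simp only [Y, Finset.mem_filter, Finset.mem_univ, true_and, Subgroup.mem_inf] at hy
    obtain ⟨⟨hy1, hy2⟩, hy3⟩ := hy
    have : stabilizer A y = (Q P).subgroupOf A := by
      ext a
      rw [mem_stabilizer_iff, hsm, Subgroup.mem_subgroupOf, mul_inv_eq_iff_eq_mul]
      exact ⟨fun h => Z.cent hy2 hy3 h, fun h => Z.comm P _ h _ hy2⟩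
    rw [this, card_subgroupOf', inf_assoc, inf_eq_right.2 (Z.Q_le P)]
    rfl

theorem nc_mod [Finite Γ] (Z : ZAct Γ X K Q) (M : Subgroup Γ) (P : X) :
    qc Q M P ∣ nc M P - 1 := by
  classical
  have hfin : (orbit M P).Finite := Set.finite_range _
  let A := M ⊓ Q P
  let Y : Finset X := hfin.toFinset.erase P
  have hYc : Y.card = nc M P - 1 := by
    rw [Finset.card_erase_of_mem (by simp), nc, Set.ncard_eq_toFinset_card _ hfin]
  have hd := dvd_of_stab (M := A) Y ?_ 1 ?_
  · rw [one_mul, hYc] at hd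
    exact hd
  · intro g T hT
    simp only [Y, Finset.mem_erase, Set.Finite.mem_toFinset] at hT ⊢
    have hgP : (g : Γ) • P = P := Z.Q_le P g.2.2
    refine ⟨fun h => hT.1 ?_, ?_⟩
    · have h' : (g : Γ) • T = (g : Γ) • P := by rw [hgP]; exact h
      exact smul_left_cancel _ h'
    · have := hT.2
      exact MulAction.mem_orbit_of_mem_orbit (⟨g, g.2.1⟩ : M) this
  · intro T hT
    simp only [Y, Finset.mem_erase, Set.Finite.mem_toFinset] at hT
    rw [Subgroup.card_eq_one, eq_bot_iff]
    intro a ha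
    rw [Subgroup.mem_bot]
    by_contra h1
    refine hT.1 (Z.uni_unique (y := (a : Γ)) a.2.2 (fun h => h1 (Subtype.ext h)) ha)

end ZAct

namespace ZAct
open MulAction
variable {Γ X K : Type*} [Group Γ] [MulAction Γ X] [Field K] {Q : X → Subgroup Γ}

theorem fix_cases (Z : ZAct Γ X K Q) {g : Γ} (hg : g ≠ 1) :
    (∃ P, ∀ R, (g • R = R ↔ R = P) ∧ (g ∈ Q R ↔ R = P)) ∨
    (∃ P P', P ≠ P' ∧ ∀ R, (g • R = R ↔ R = P ∨ R = P') ∧ g ∉ Q R) := by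
  obtain ⟨P, hP⟩ := Z.ex_fix g hg
  by_cases h : ∀ R, g • R = R → R = P
  · left
    refine ⟨P, fun R => ⟨⟨h R, fun e => e ▸ hP⟩, fun hR => h R (Z.Q_le R hR), ?_⟩⟩
    rintro rfl
    exact (Z.mem_Q _ _).2 (Or.inr ⟨hP, h⟩)
  · right
    push Not at h
    obtain ⟨P', hP', hne⟩ := h
    refine ⟨P, P', hne.symm, fun R => ⟨⟨fun hR => ?_, ?_⟩, fun hR => ?_⟩⟩
    · by_contra hcon
      push Not at hcon
      exact hg (Z.three g P P' R hne.symm hcon.1.symm hcon.2.symm hP hP' hR)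
    · rintro (rfl | rfl) <;> assumption
    · have h1 := Z.uni_unique hR hg hP
      have h2 := Z.uni_unique hR hg hP'
      exact hne (h2.trans h1.symm)

theorem fix_finite (Z : ZAct Γ X K Q) {g : Γ} (hg : g ≠ 1) : {P : X | g • P = P}.Finite := by
  rcases Z.fix_cases hg with ⟨P, hP⟩ | ⟨P, P', -, hP⟩
  · exact (Set.finite_singleton P).subset fun R hR => ((hP R).1).1 hR
  · exact (Set.toFinite {P, P'}).subset fun R hR => ((hP R).1).1 hR

theorem two_le_sc_iff [Finite Γ] (M : Subgroup Γ) (P : X) :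
    2 ≤ sc M P ↔ ∃ g ∈ M, g ≠ 1 ∧ g • P = P := by
  have h0 := sc_pos M P
  have : 2 ≤ sc M P ↔ M ⊓ stabilizer Γ P ≠ ⊥ := by
    rw [Ne, ← Subgroup.card_eq_one]
    change _ ↔ ¬ (sc M P = 1)
    omega
  rw [this, Subgroup.ne_bot_iff_exists_ne_one]
  constructor
  · rintro ⟨a, ha⟩
    exact ⟨a, a.2.1, fun h => ha (Subtype.ext h), a.2.2⟩
  · rintro ⟨g, hg, h1, h2⟩
    exact ⟨⟨g, hg, h2⟩, fun h => h1 (congrArg Subtype.val h)⟩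

theorem RH [Finite Γ] (Z : ZAct Γ X K Q) (M : Subgroup Γ) :
    ∃ R : Finset X, (∀ P ∈ R, 2 ≤ sc M P) ∧ (∀ T, 2 ≤ sc M T → ∃ P ∈ R, T ∈ orbit M P) ∧
      (∀ P ∈ R, ∀ P' ∈ R, P' ∈ orbit M P → P' = P) ∧
      2 * ((Nat.card M : ℤ) - 1) = ∑ P ∈ R, (nc M P : ℤ) * (sc M P + qc Q M P - 2) := by
  classical
  have := Fintype.ofFinite Γ
  have hfin : {P : X | 2 ≤ sc M P}.Finite := by
    refine (Set.Finite.biUnion (Set.toFinite {g : Γ | g ≠ 1}) (t := fun g => {P : X | g • P = P})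
      (fun g hg => Z.fix_finite hg)).subset ?_
    intro P hP
    obtain ⟨g, hg, h1, h2⟩ := (two_le_sc_iff M P).1 hP
    exact Set.mem_biUnion (show g ∈ {g : Γ | g ≠ 1} from h1) h2
  let Y := hfin.toFinset
  have hY : ∀ P, P ∈ Y ↔ 2 ≤ sc M P := by simp [Y]
  obtain ⟨R, h1, h2, h3, h4⟩ := orbit_sum (M := M) Y
    (by
      intro g T hT
      rw [hY] at hT ⊢
      have := orbit_s M g.2 T
      rwa [← this] at hT)
    (fun P => (sc M P + qc Q M P - 2 : ℤ))
    (by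
      intro g T
      have h1 := orbit_s M g.2 T
      have h2 := Z.orbit_q M g.2 T
      change ((sc M ((g : Γ) • T) : ℤ) + qc Q M ((g : Γ) • T) - 2) = _
      rw [h1, h2])
  refine ⟨R, fun P hP => (hY P).1 (h1 hP), fun T hT => h2 T ((hY T).2 hT), h3, ?_⟩
  refine Eq.trans ?_ h4
  let E : Finset Γ := Finset.univ.filter fun g => g ∈ M ∧ g ≠ 1
  have hcard : ∀ (H : Subgroup Γ), H ≤ M →
      (∑ g ∈ E, if g ∈ H then (1 : ℤ) else 0) = (Nat.card H : ℤ) - 1 := by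
    intro H hH
    rw [Finset.sum_boole]
    have : E.filter (fun g => g ∈ H) = (Finset.univ.filter fun g => g ∈ H).erase 1 := by
      ext g
      simp only [E, Finset.mem_filter, Finset.mem_univ, true_and, Finset.mem_erase]
      constructor
      · rintro ⟨⟨a, b⟩, c⟩; exact ⟨b, c⟩
      · rintro ⟨b, c⟩; exact ⟨⟨hH c, b⟩, c⟩
    rw [this, Finset.card_erase_of_mem (by simp), Nat.cast_sub]
    · rw [Nat.card_eq_fintype_card, Fintype.card_subtype]; simp
    · exact Finset.card_pos.2 ⟨1, by simp⟩
  have hP : ∀ P ∈ Y, (sc M P + qc Q M P - 2 : ℤ) =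
      ∑ g ∈ E, ((if g ∈ M ⊓ stabilizer Γ P then (1 : ℤ) else 0) +
        (if g ∈ M ⊓ Q P then (1 : ℤ) else 0)) := by
    intro P _
    rw [Finset.sum_add_distrib, hcard _ inf_le_left, hcard _ inf_le_left]
    change _ = ((sc M P : ℤ) - 1) + (qc Q M P - 1)
    ring
  rw [Finset.sum_congr rfl hP, Finset.sum_comm]
  have hg : ∀ g ∈ E, ∑ P ∈ Y, ((if g ∈ M ⊓ stabilizer Γ P then (1 : ℤ) else 0) +
        (if g ∈ M ⊓ Q P then (1 : ℤ) else 0)) = 2 := by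
    intro g hg
    simp only [E, Finset.mem_filter, Finset.mem_univ, true_and] at hg
    have hin : ∀ P, g • P = P → P ∈ Y := fun P h =>
      (hY P).2 ((two_le_sc_iff M P).2 ⟨g, hg.1, hg.2, h⟩)
    simp only [Subgroup.mem_inf, hg.1, true_and, mem_stabilizer_iff]
    rcases Z.fix_cases hg.2 with ⟨P, hP⟩ | ⟨P, P', hne, hP⟩
    · simp only [fun R => (hP R).1, fun R => (hP R).2]
      have := hin P ((hP P).1.2 rfl)
      simp [Finset.sum_add_distrib, this]
    · simp only [fun R => (hP R).1, fun R => (hP R).2, if_false, add_zero]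
      rw [Finset.sum_boole]
      have : Y.filter (fun R => R = P ∨ R = P') = {P, P'} := by
        ext R
        simp only [Finset.mem_filter, Finset.mem_insert, Finset.mem_singleton]
        constructor
        · exact fun h => h.2
        · intro h
          exact ⟨hin R ((hP R).1.2 h), h⟩
      rw [this, Finset.card_pair hne]
      norm_num
  rw [Finset.sum_congr rfl hg, Finset.sum_const]
  have h5 := hcard M le_rfl
  have : (∑ g ∈ E, if g ∈ M then (1 : ℤ) else 0) = E.card := by
    rw [Finset.sum_congr rfl (g := fun _ => (1 : ℤ)), Finset.sum_const]
    · simp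
    · intro g hg
      simp only [E, Finset.mem_filter, Finset.mem_univ, true_and] at hg
      simp [hg.1]
  rw [this] at h5
  rw [← h5]
  simp [mul_comm]
end ZAct


theorem num_ss {g n1 n2 n3 s1 s2 s3 : ℕ} (h1 : n1 * s1 = g) (h2 : n2 * s2 = g) (h3 : n3 * s3 = g)
    (hs : 2 ≤ s1) (h12 : s1 ≤ s2) (h23 : s2 ≤ s3) (h : g + 2 = n1 + n2 + n3) :
    s1 = 2 ∧ ((s2 = 2 ∧ g = 2 * s3) ∨
      (s2 = 3 ∧ ((s3 = 3 ∧ g = 12) ∨ (s3 = 4 ∧ g = 24) ∨ (s3 = 5 ∧ g = 60)))) := by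
  have a1 : s1 = 2 := by
    by_contra hne
    have : 3 ≤ s1 := by omega
    have e1 : n1 * 3 ≤ g := h1 ▸ Nat.mul_le_mul_left _ this
    have e2 : n2 * 3 ≤ g := h2 ▸ Nat.mul_le_mul_left _ (by omega)
    have e3 : n3 * 3 ≤ g := h3 ▸ Nat.mul_le_mul_left _ (by omega)
    omega
  subst a1
  refine ⟨rfl, ?_⟩
  have a2 : s2 ≤ 3 := by
    by_contra hne
    have e2 : n2 * 4 ≤ g := h2 ▸ Nat.mul_le_mul_left _ (by omega)
    have e3 : n3 * 4 ≤ g := h3 ▸ Nat.mul_le_mul_left _ (by omega)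
    omega
  interval_cases s2
  · left
    refine ⟨rfl, ?_⟩
    have : n3 = 2 := by omega
    subst this
    exact h3.symm
  · right
    refine ⟨rfl, ?_⟩
    have a3 : s3 ≤ 5 := by
      by_contra hne
      have e3 : n3 * 6 ≤ g := h3 ▸ Nat.mul_le_mul_left _ (by omega)
      omega
    interval_cases s3 <;> omega

/-- Numerical types with unipotents. -/
def NumU (q k s g : ℕ) : Prop :=
  (q = 2 ∧ k = 1 ∧ 3 ≤ s ∧ g = 2 * s) ∨
  (3 ≤ q ∧ ∃ e, (e = 1 ∨ e = 2) ∧ e * k + 1 = q ∧ e * s = q + 1 ∧ g = (q + 1) * q * k) ∨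
  (q = 3 ∧ k = 2 ∧ s = 5 ∧ g = 60)

theorem num_u {g n1 n2 q k s m : ℕ} (h1 : n1 * (q * k) = g) (h2 : n2 * s = g) (hq : 2 ≤ q)
    (hm : n1 = 1 + q * m) (hm1 : 1 ≤ m) (hk : k ∣ q - 1) (hk0 : 0 < k)
    (h : (n2 : ℤ) = n1 * ((q : ℤ) - 2) + 2) : NumU q k s g := by
  obtain ⟨r, rfl⟩ : ∃ r, q = r + 2 := ⟨q - 2, by omega⟩
  have h' : n2 = n1 * r + 2 := by
    have : ((r + 2 : ℕ) : ℤ) - 2 = r := by push_cast; ring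
    rw [this] at h
    exact_mod_cast h
  have hn2 : n2 = (r + 2) * (1 + r * m) := by rw [h', hm]; ring
  have key : (1 + r * m) * s = (1 + (r + 2) * m) * k := by
    have : (r + 2) * ((1 + r * m) * s) = (r + 2) * ((1 + (r + 2) * m) * k) := by
      rw [← mul_assoc, ← hn2, h2, ← h1, hm]; ring
    exact Nat.eq_of_mul_eq_mul_left (by omega) this
  have hk1 : k ≤ r + 1 := Nat.le_of_dvd (by omega) (by simpa using hk)
  rcases Nat.eq_zero_or_pos r with rfl | hr
  · left
    have : k = 1 := by omega
    subst this
    simp at key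
    refine ⟨rfl, rfl, by omega, ?_⟩
    rw [← h1, hm, key]; ring
  · right
    have hD : (1 + r * m) ∣ 2 * k := by
      have h3 : (1 + r * m) ∣ (1 + (r + 2) * m) * k := ⟨s, key.symm⟩
      have h4 : (1 + (r + 2) * m) * k = (1 + r * m) * k + m * (2 * k) := by ring
      rw [h4, Nat.dvd_add_right (Dvd.intro _ rfl)] at h3
      have : Nat.Coprime (1 + r * m) m := by simp
      exact this.dvd_of_dvd_mul_left h3
    have hle : 1 + r * m ≤ 2 * k := Nat.le_of_dvd (by omega) hD
    have hm3 : m ≤ 3 := by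
      by_contra hne
      have : r * 4 ≤ r * m := Nat.mul_le_mul_left _ (by omega)
      omega
    interval_cases m
    · left
      refine ⟨by omega, ?_⟩
      obtain ⟨e, he⟩ := hD
      have he0 : e ≠ 0 := by rintro rfl; omega
      have he2 : e ≤ 2 := by
        by_contra hne
        have : (1 + r * 1) * 3 ≤ (1 + r * 1) * e := Nat.mul_le_mul_left _ (by omega)
        omega
      have : e = 1 ∨ e = 2 := by omega
      rcases this with rfl | rfl
      · refine ⟨2, Or.inr rfl, by omega, ?_, ?_⟩
        · have : (1 + r * 1) * (2 * s) = (1 + r * 1) * (r + 2 + 1) := by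
            calc _ = 2 * ((1 + r * 1) * s) := by ring
              _ = (1 + (r + 2) * 1) * (2 * k) := by rw [key]; ring
              _ = _ := by rw [he]; ring
          exact Nat.eq_of_mul_eq_mul_left (by omega) this
        · rw [← h1, hm]; ring
      · have hkk : k = 1 + r := by omega
        refine ⟨1, Or.inl rfl, by omega, ?_, ?_⟩
        · have : (1 + r * 1) * (1 * s) = (1 + r * 1) * (r + 2 + 1) := by
            rw [one_mul, key, hkk]; ring
          exact Nat.eq_of_mul_eq_mul_left (by omega) this
        · rw [← h1, hm]; ring
    · exfalso
      have : Nat.Coprime (1 + r * 2) 2 := by simp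
      have := Nat.le_of_dvd hk0 (this.dvd_of_dvd_mul_left hD)
      omega
    · right
      have : r = 1 := by omega
      subst this
      have : k = 2 := by omega
      subst this
      refine ⟨rfl, rfl, by omega, ?_⟩
      rw [← h1, hm]

namespace ZAct
open MulAction
variable {Γ X K : Type*} [Group Γ] [MulAction Γ X] [Field K] {Q : X → Subgroup Γ}

theorem le_stab_of_nc [Finite Γ] {M : Subgroup Γ} {P : X} (h : nc M P = 1) :
    M ≤ stabilizer Γ P := by
  have h1 := nc_mul_sc M P
  rw [h, one_mul] at h1
  have : M ⊓ stabilizer Γ P = M := Subgroup.eq_of_le_of_card_ge inf_le_left h1.ge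
  exact inf_eq_left.1 this

theorem class_ss [Finite Γ] (Z : ZAct Γ X K Q) (M : Subgroup Γ) (hM : ∀ T : X, qc Q M T = 1) :
    M = ⊥ ∨ (∃ P : X, 2 ≤ sc M P ∧ M ≤ stabilizer Γ P) ∨
    (∃ P : X, 2 ≤ sc M P ∧ Nat.card M = 2 * sc M P ∧
      (∀ T : X, 2 ≤ sc M T → sc M T = 2 ∨ sc M T = sc M P) ∧
      (∀ T : X, 3 ≤ sc M T → T ∈ orbit M P)) ∨
    (∃ P : X, (∀ T : X, 2 ≤ sc M T → sc M T = 2 ∨ sc M T = 3 ∨ sc M T = sc M P) ∧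
      ((sc M P = 3 ∧ Nat.card M = 12) ∨ (sc M P = 4 ∧ Nat.card M = 24) ∨
        (sc M P = 5 ∧ Nat.card M = 60))) := by
  classical
  obtain ⟨R, h1, h2, h3, h4⟩ := Z.RH M
  have hg0 : 0 < Nat.card M := Nat.card_pos
  have hterm : ∀ P : X, (nc M P : ℤ) * (sc M P + qc Q M P - 2) = Nat.card M - nc M P := by
    intro P
    rw [hM P, ← nc_mul_sc M P]; push_cast; ring
  simp only [hterm] at h4
  have hn : ∀ P ∈ R, 2 * nc M P ≤ Nat.card M := by
    intro P hP
    have := nc_mul_sc M P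
    have h5 := Nat.mul_le_mul_left (nc M P) (h1 P hP)
    omega
  have hos : ∀ P T : X, T ∈ orbit M P → sc M T = sc M P := by
    rintro P T ⟨a, rfl⟩
    exact orbit_s M a.2 P
  have hcard : R.card ≤ 3 := by
    by_contra hne
    have h5 : ∑ P ∈ R, (Nat.card M : ℤ) ≤ ∑ P ∈ R, 2 * ((Nat.card M : ℤ) - nc M P) := by
      refine Finset.sum_le_sum fun P hP => ?_
      have := hn P hP
      zify at this
      linarith
    rw [← Finset.mul_sum, ← h4, Finset.sum_const, nsmul_eq_mul] at h5
    have : (4 : ℤ) ≤ R.card := by exact_mod_cast (by omega : 4 ≤ R.card)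
    nlinarith
  have : R.card = 0 ∨ R.card = 1 ∨ R.card = 2 ∨ R.card = 3 := by omega
  rcases this with h | h | h | h
  · left
    rw [Finset.card_eq_zero] at h
    subst h
    rw [← Subgroup.card_eq_one]
    simp at h4
    omega
  · exfalso
    obtain ⟨P, rfl⟩ := Finset.card_eq_one.1 h
    simp at h4
    have := hn P (by simp)
    have h6 := nc_pos M P
    omega
  · right; left
    obtain ⟨P, P', hne, rfl⟩ := Finset.card_eq_two.1 h
    rw [Finset.sum_pair hne] at h4
    have h6 := nc_pos M P
    have h7 := nc_pos M P'
    exact ⟨P, h1 P (by simp), le_stab_of_nc (by omega)⟩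
  · right; right
    have hsort : ∃ a b c : X, R = {a, b, c} ∧ a ≠ b ∧ a ≠ c ∧ b ≠ c ∧ sc M a ≤ sc M b ∧
        sc M b ≤ sc M c := by
      obtain ⟨a, b, c, hab, hac, hbc, rfl⟩ := Finset.card_eq_three.1 h
      rcases le_total (sc M a) (sc M b) with x | x <;> rcases le_total (sc M b) (sc M c) with y | y
        <;> rcases le_total (sc M a) (sc M c) with z | z
      · exact ⟨a, b, c, rfl, hab, hac, hbc, x, y⟩
      · exact ⟨a, b, c, rfl, hab, hac, hbc, x, y⟩
      · exact ⟨a, c, b, by ext; simp; tauto, hac, hab, hbc.symm, z, y⟩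
      · exact ⟨c, a, b, by ext; simp; tauto, hac.symm, hbc.symm, hab, z, x⟩
      · exact ⟨b, a, c, by ext; simp; tauto, hab.symm, hbc, hac, x, z⟩
      · exact ⟨b, c, a, by ext; simp; tauto, hbc, hab.symm, hac.symm, y, z⟩
      · exact ⟨c, b, a, by ext; simp; tauto, hbc.symm, hac.symm, hab.symm, y, x⟩
      · exact ⟨c, b, a, by ext; simp; tauto, hbc.symm, hac.symm, hab.symm, y, x⟩
    obtain ⟨a, b, c, rfl, hab, hac, hbc, x, y⟩ := hsort
    rw [Finset.sum_insert (by simp [hab, hac]), Finset.sum_pair hbc] at h4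
    obtain ⟨e1, e2⟩ := num_ss (nc_mul_sc M a) (nc_mul_sc M b) (nc_mul_sc M c) (h1 a (by simp)) x y
      (by omega)
    have hcov : ∀ T : X, 2 ≤ sc M T → T ∈ orbit M a ∨ T ∈ orbit M b ∨ T ∈ orbit M c := by
      intro T hT
      obtain ⟨P, hP, h⟩ := h2 T hT
      simp only [Finset.mem_insert, Finset.mem_singleton] at hP
      rcases hP with rfl | rfl | rfl <;> tauto
    rcases e2 with ⟨e2, e3⟩ | ⟨e2, e3⟩
    · left
      refine ⟨c, h1 c (by simp), e3, fun T hT => ?_, fun T hT => ?_⟩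
      · rcases hcov T hT with h | h | h <;> rw [hos _ _ h] <;> omega
      · rcases hcov T (by omega) with h | h | h
        · rw [hos _ _ h] at hT; omega
        · rw [hos _ _ h] at hT; omega
        · exact h
    · right
      refine ⟨c, fun T hT => ?_, e3⟩
      rcases hcov T hT with h | h | h <;> rw [hos _ _ h] <;> omega

theorem class_u [Finite Γ] (Z : ZAct Γ X K Q) (M : Subgroup Γ) (P : X) (hP : 2 ≤ qc Q M P) :
    M ≤ stabilizer Γ P ∨ ∃ T : X, qc Q M T = 1 ∧ 2 ≤ sc M T ∧
      (∀ T', 2 ≤ sc M T' → T' ∈ orbit M P ∨ T' ∈ orbit M T) ∧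
      NumU (qc Q M P) (kc Q M P) (sc M T) (Nat.card M) := by
  classical
  obtain ⟨R, h1, h2, h3, h4⟩ := Z.RH M
  have hg0 : 0 < Nat.card M := Nat.card_pos
  have hsP : 2 ≤ sc M P := by
    rw [Z.sc_eq]
    have := kc_pos (Q := Q) M P
    nlinarith
  obtain ⟨P1, hP1, hPP⟩ := h2 P hsP
  have horb : orbit M P1 = orbit M P := (orbit_eq_iff.2 hPP).symm
  have hn1 : nc M P1 = nc M P := by rw [nc, nc, horb]
  have hs1 : sc M P1 = sc M P := by
    obtain ⟨a, rfl⟩ := hPP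
    exact (orbit_s M a.2 P1).symm
  have hq1 : qc Q M P1 = qc Q M P := by
    obtain ⟨a, rfl⟩ := hPP
    exact (Z.orbit_q M a.2 P1).symm
  have hns : ∀ T : X, (nc M T : ℤ) * sc M T = Nat.card M := fun T => by exact_mod_cast nc_mul_sc M T
  have hterm : ∀ T : X, (nc M T : ℤ) * (sc M T + qc Q M T - 2) =
      Nat.card M + nc M T * ((qc Q M T : ℤ) - 2) := by
    intro T
    rw [← hns T]; ring
  simp only [hterm] at h4
  rw [← Finset.add_sum_erase _ _ hP1, hn1, hq1] at h4
  have hhalf : ∀ T ∈ R, (Nat.card M : ℤ) ≤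
      2 * (Nat.card M + nc M T * ((qc Q M T : ℤ) - 2)) := by
    intro T hT
    have h5 : (1 : ℤ) ≤ qc Q M T := by exact_mod_cast qc_pos M T
    have h6 : (2 : ℤ) ≤ sc M T := by exact_mod_cast h1 T hT
    have h7 := hns T
    have h8 : (0 : ℤ) ≤ nc M T := by positivity
    nlinarith
  have hnonneg : (0 : ℤ) ≤ nc M P * ((qc Q M P : ℤ) - 2) := by
    have : (2 : ℤ) ≤ qc Q M P := by exact_mod_cast hP
    have h8 : (0 : ℤ) ≤ nc M P := by positivity
    nlinarith
  have hcard : (R.erase P1).card ≤ 1 := by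
    by_contra hne
    have h5 : ∑ T ∈ R.erase P1, (Nat.card M : ℤ) ≤
        ∑ T ∈ R.erase P1, 2 * (Nat.card M + nc M T * ((qc Q M T : ℤ) - 2)) :=
      Finset.sum_le_sum fun T hT => hhalf T (Finset.mem_of_mem_erase hT)
    rw [← Finset.mul_sum, Finset.sum_const, nsmul_eq_mul] at h5
    have : (2 : ℤ) ≤ (R.erase P1).card := by exact_mod_cast (by omega : 2 ≤ (R.erase P1).card)
    nlinarith
  have hgP := nc_mul_sc M P
  rw [Z.sc_eq] at hgP
  have hk0 := kc_pos (Q := Q) M P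
  have hn0 := nc_pos M P
  rcases (by omega : (R.erase P1).card = 0 ∨ (R.erase P1).card = 1) with h | h
  · left
    apply le_stab_of_nc
    rw [Finset.card_eq_zero] at h
    rw [h, Finset.sum_empty] at h4
    have h5 : (nc M P : ℤ) * (qc Q M P * kc Q M P) = Nat.card M := by exact_mod_cast hgP
    have h6 : (1 : ℤ) ≤ kc Q M P := by exact_mod_cast hk0
    have h7 : (1 : ℤ) ≤ nc M P := by exact_mod_cast hn0
    have h8 : (2 : ℤ) ≤ qc Q M P := by exact_mod_cast hP
    have h9 : (nc M P : ℤ) * qc Q M P ≤ Nat.card M := by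
      rw [← h5]
      have : (0:ℤ) ≤ (nc M P : ℤ) * qc Q M P := by positivity
      nlinarith
    have : (nc M P : ℤ) ≤ 1 := by nlinarith
    omega
  · obtain ⟨T, hT⟩ := Finset.card_eq_one.1 h
    rw [hT, Finset.sum_singleton] at h4
    have hTR : T ∈ R := Finset.mem_of_mem_erase (hT ▸ Finset.mem_singleton_self T)
    have hqT : qc Q M T = 1 := by
      by_contra hne
      have h5 : 1 ≤ qc Q M T := qc_pos M T
      have h6 : (2 : ℤ) ≤ qc Q M T := by exact_mod_cast (by omega : 2 ≤ qc Q M T)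
      have h8 : (0 : ℤ) ≤ nc M T := by positivity
      nlinarith
    rw [hqT] at h4
    by_cases hn : nc M P = 1
    · exact Or.inl (le_stab_of_nc hn)
    right
    refine ⟨T, hqT, h1 T hTR, fun T' hT' => ?_, ?_⟩
    · obtain ⟨P', hP', h⟩ := h2 T' hT'
      by_cases he : P' = P1
      · left
        rwa [he, horb] at h
      · right
        have : P' ∈ R.erase P1 := Finset.mem_erase.2 ⟨he, hP'⟩
        rw [hT, Finset.mem_singleton] at this
        rwa [this] at h
    · obtain ⟨m, hm⟩ := Z.nc_mod M P
      refine num_u (m := m) hgP (nc_mul_sc M T) hP (by omega) ?_ (Z.kc_dvd M P) hk0 ?_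
      · rcases Nat.eq_zero_or_pos m with rfl | h
        · simp at hm; omega
        · exact h
      · push_cast at h4
        linarith
end ZAct


theorem num_cmp {q k s g q' k' g' : ℕ} (h : NumU q k s g) (h' : NumU q' k' s g') (hd : q' ∣ q) :
    g' = g ∨ (3 ≤ q ∧ g' = 2 * s) ∨ (q = 9 ∧ k = 4 ∧ s = 5 ∧ g = 360) := by
  rcases h with ⟨a, b, c, d⟩ | ⟨a, e, he, b, c, d⟩ | ⟨a, b, c, d⟩
  · subst a
    have hle := Nat.le_of_dvd (by norm_num) hd
    rcases h' with ⟨a', b', c', d'⟩ | ⟨a', e', he', b', c', d'⟩ | ⟨a', b', c', d'⟩ <;> omega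
  · have hle := Nat.le_of_dvd (by omega) hd
    rcases h' with ⟨a', b', c', d'⟩ | ⟨a', e', he', b', c', d'⟩ | ⟨a', b', c', d'⟩
    · omega
    · left
      rcases he with rfl | rfl <;> rcases he' with rfl | rfl
      · have : q = q' := by omega
        subst this
        have : k = k' := by omega
        subst this
        omega
      · omega
      · exfalso
        have : q = q' * 2 + 1 := by omega
        rw [this, Nat.dvd_add_right (Dvd.intro _ rfl)] at hd
        have := Nat.le_of_dvd (by norm_num) hd
        omega
      · have : q = q' := by omega
        subst this
        have : k = k' := by omega
        subst this
        omega
    · subst a' b' c'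
      rcases he with rfl | rfl
      · have : q = 4 := by omega
        subst this
        omega
      · have : q = 9 := by omega
        subst this
        have : k = 4 := by omega
        subst this
        right; right
        omega
  · subst a
    have hle := Nat.le_of_dvd (by norm_num) hd
    rcases h' with ⟨a', b', c', d'⟩ | ⟨a', e', he', b', c', d'⟩ | ⟨a', b', c', d'⟩ 
    · subst a'; omega
    · rcases he' with rfl | rfl <;> omega
    · omega

theorem NumU.k_lt {q k s g : ℕ} (h : NumU q k s g) : k < s := by
  rcases h with ⟨a, b, c, d⟩ | ⟨a, e, he, b, c, d⟩ | ⟨a, b, c, d⟩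
  · omega
  · rcases he with rfl | rfl <;> omega
  · omega

namespace ZAct
open MulAction
variable {Γ X K : Type*} [Group Γ] [MulAction Γ X] [Field K] {Q : X → Subgroup Γ}

theorem cyc [Finite Γ] (Z : ZAct Γ X K Q) (M : Subgroup Γ) (T : X) (h : qc Q M T = 1) :
    ∃ x, M ⊓ stabilizer Γ T = Subgroup.zpowers x := by
  obtain ⟨χ, hχ⟩ := Z.chi T
  let f : ↥(M ⊓ stabilizer Γ T) →* K :=
    (Units.coeHom K).comp (χ.comp (Subgroup.inclusion inf_le_right))
  have hf : Function.Injective f := by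
    have h1 : Function.Injective (χ.comp (Subgroup.inclusion
        (inf_le_right : M ⊓ stabilizer Γ T ≤ stabilizer Γ T))) := by
      rw [injective_iff_map_eq_one]
      rintro ⟨a, ha⟩ h2
      have h3 : a ∈ M ⊓ Q T := ⟨ha.1, (hχ _).1 h2⟩
      rw [Subgroup.card_eq_one.1 h] at h3
      ext
      simpa using h3
    exact Units.val_injective.comp h1
  have : IsCyclic ↥(M ⊓ stabilizer Γ T) := isCyclic_of_injective_ringHom f hf
  obtain ⟨x, hx⟩ := (Subgroup.isCyclic_iff_exists_zpowers_eq_top _).1 this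
  exact ⟨x, hx.symm⟩

theorem stab_eq_of_sub [Finite Γ] {L M : Subgroup Γ} (hL : L ≤ M) {T : X} {x : Γ}
    (hx : M ⊓ stabilizer Γ T = Subgroup.zpowers x) (hxL : x ∈ L) :
    sc L T = sc M T := by
  have : L ⊓ stabilizer Γ T = M ⊓ stabilizer Γ T := by
    refine le_antisymm (inf_le_inf_right _ hL) (le_inf ?_ inf_le_right)
    rw [hx]; simpa using hxL
  rw [sc, sc, this]

theorem two_pts {x : Γ} (Z : ZAct Γ X K Q) (h1 : x ≠ 1) {P : X} (hP : x • P = P)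
    (hq : x ∉ Q P) : ∃ P', P' ≠ P ∧ ∀ R, x • R = R ↔ R = P ∨ R = P' := by
  rcases Z.fix_cases h1 with ⟨A, hA⟩ | ⟨A, B, hAB, hA⟩
  · exact absurd ((hA P).2.2 ((hA P).1.1 hP)) hq
  · rcases (hA P).1.1 hP with rfl | rfl
    · exact ⟨B, hAB.symm, fun R => (hA R).1⟩
    · exact ⟨A, hAB, fun R => (hA R).1.trans or_comm⟩

theorem qc_one_of_le [Finite Γ] {L M : Subgroup Γ} (h : L ≤ M) {T : X} (hM : qc Q M T = 1) :
    qc Q L T = 1 := by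
  have := qc_dvd (Q := Q) h T
  rw [hM] at this
  exact Nat.dvd_one.1 this

theorem mem_zp {L : Subgroup Γ} {T : X} {x : Γ} (hx : L ⊓ stabilizer Γ T = Subgroup.zpowers x) :
    x ∈ L ∧ x • T = T := by
  have : x ∈ L ⊓ stabilizer Γ T := hx ▸ Subgroup.mem_zpowers x
  exact this

theorem ord_zp {L : Subgroup Γ} {T : X} {x : Γ} (hx : L ⊓ stabilizer Γ T = Subgroup.zpowers x) :
    orderOf x = sc L T := by
  rw [sc, hx, Nat.card_zpowers]

theorem zp_fix {x z : Γ} (hz : z ∈ Subgroup.zpowers x) {T : X} (h : x • T = T) : z • T = T := by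
  have : Subgroup.zpowers x ≤ stabilizer Γ T := by simpa using h
  exact this hz

theorem gen_ss [Finite Γ] (Z : ZAct Γ X K Q) (M : Subgroup Γ) (hM : ∀ T : X, qc Q M T = 1) :
    ∃ x y, Subgroup.closure {x, y} = M := by
  rcases Z.class_ss M hM with rfl | ⟨P, -, h⟩ | ⟨P, h1, h2, -, -⟩ | ⟨P, h1, h2⟩
  · exact ⟨1, 1, by simp⟩
  · obtain ⟨x, hx⟩ := Z.cyc M P (hM P)
    rw [inf_eq_left.2 h] at hx
    exact ⟨x, x, by rw [hx]; simp [Subgroup.zpowers_eq_closure]⟩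
  · obtain ⟨x, hx⟩ := Z.cyc M P (hM P)
    obtain ⟨y, hyM, hy⟩ : ∃ y ∈ M, y ∉ stabilizer Γ P := by
      by_contra! hne
      have : M ⊓ stabilizer Γ P = M := inf_eq_left.2 hne
      have h3 : sc M P = Nat.card M := by rw [sc, this]
      omega
    have hle : Subgroup.closure {x, y} ≤ M := by
      rw [Subgroup.closure_le]
      rintro z (rfl | rfl)
      · exact (mem_zp hx).1
      · exact hyM
    refine ⟨x, y, Subgroup.eq_of_le_of_card_ge hle ?_⟩
    have hxL : x ∈ Subgroup.closure {x, y} := Subgroup.subset_closure (by simp)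
    have hyL : y ∈ Subgroup.closure {x, y} := Subgroup.subset_closure (by simp)
    have e1 := stab_eq_of_sub hle hx hxL
    have e2 := nc_mul_sc (Subgroup.closure {x, y}) P
    have e3 : nc (Subgroup.closure {x, y}) P ≠ 1 := fun h => hy (le_stab_of_nc h hyL)
    have e4 := nc_pos (Subgroup.closure {x, y}) P
    rw [e1] at e2
    rw [h2, ← e2]
    exact Nat.mul_le_mul_right _ (by omega)
  · set n := sc M P with hn
    have hn3 : 3 ≤ n ∧ 4 * n ≤ Nat.card M := by omega
    obtain ⟨x, hx⟩ := Z.cyc M P (hM P)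
    have hxM := mem_zp hx
    have hx1 : x ≠ 1 := by
      rintro rfl
      have := ord_zp hx
      simp at this
      omega
    have notQ : ∀ z ∈ M, z ≠ 1 → ∀ T, z ∉ Q T := by
      intro z hz h1 T hT
      have h3 : z ∈ M ⊓ Q T := ⟨hz, hT⟩
      rw [Subgroup.card_eq_one.1 (hM T)] at h3
      exact h1 (by simpa using h3)
    obtain ⟨P', hne, hfix⟩ := Z.two_pts hx1 hxM.2 (notQ x hxM.1 hx1 P)
    have hxP' : x • P' = P' := (hfix P').2 (Or.inr rfl)
    have hP' : M ⊓ stabilizer Γ P' = Subgroup.zpowers x := by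
      refine (Subgroup.eq_of_le_of_card_ge ?_ ?_).symm
      · rw [Subgroup.zpowers_le]
        exact ⟨hxM.1, hxP'⟩
      · rw [Nat.card_zpowers, ord_zp hx]
        have := h1 P' ((two_le_sc_iff M P').2 ⟨x, hxM.1, hx1, hxP'⟩)
        change sc M P' ≤ sc M P
        omega
    obtain ⟨R, hR, hRn⟩ : ∃ R ∈ orbit M P, R ∉ ({P, P'} : Set X) := by
      by_contra! hcon
      have h3 : nc M P ≤ 2 := by
        refine (Set.ncard_le_ncard (fun T hT => hcon T hT)).trans ?_
        exact (Set.ncard_insert_le _ _).trans (by simp)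
      have h4 := nc_mul_sc M P
      have := Nat.mul_le_mul_right (sc M P) h3
      omega
    have hsR : sc M R = n := by
      obtain ⟨a, rfl⟩ := hR
      exact orbit_s M a.2 P
    obtain ⟨y, hy⟩ := Z.cyc M R (hM R)
    have hyM := mem_zp hy
    have hy1 : y ≠ 1 := by
      rintro rfl
      have := ord_zp hy
      simp at this
      omega
    set L := Subgroup.closure {x, y} with hLdef
    have hle : L ≤ M := by
      rw [Subgroup.closure_le]
      rintro z (rfl | rfl)
      · exact hxM.1
      · exact hyM.1
    have hxL : x ∈ L := Subgroup.subset_closure (by simp)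
    have hyL : y ∈ L := Subgroup.subset_closure (by simp)
    have sP : sc L P = n := stab_eq_of_sub hle hx hxL
    have sP' : sc L P' = n := by
      rw [stab_eq_of_sub hle hP' hxL, ← ord_zp hP', ord_zp hx]
    have sR : sc L R = n := (stab_eq_of_sub hle hy hyL).trans hsR
    have hRP : R ≠ P := fun h => hRn (by simp [h])
    have hRP' : R ≠ P' := fun h => hRn (by simp [h])
    refine ⟨x, y, Subgroup.eq_of_le_of_card_ge hle ?_⟩
    change Nat.card M ≤ Nat.card L
    rcases Z.class_ss L (fun T => qc_one_of_le hle (hM T)) with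
      h | ⟨T, -, h⟩ | ⟨T, h3, h4, -, h5⟩ | ⟨T, h3, h4⟩
    · rw [h] at hxL
      exact absurd (by simpa using hxL) hx1
    · exfalso
      have hyz : y ∈ Subgroup.zpowers x := by
        rcases (hfix T).1 (h hxL) with rfl | rfl
        · rw [← hx]; exact ⟨hyM.1, h hyL⟩
        · rw [← hP']; exact ⟨hyM.1, h hyL⟩
      exact hy1 (Z.three y P P' R hne.symm hRP.symm hRP'.symm (zp_fix hyz hxM.2)
        (zp_fix hyz hxP') hyM.2)
    · exfalso
      have hsub : ({P, P', R} : Set X) ⊆ orbit L T := by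
        rintro A (rfl | rfl | rfl)
        · exact h5 _ (by omega)
        · exact h5 _ (by omega)
        · exact h5 _ (by omega)
      have h6 := Set.ncard_le_ncard hsub (Set.finite_range _)
      have h7 : ({P, P', R} : Set X).ncard = 3 :=
        Set.ncard_eq_three.2 ⟨P, P', R, hne.symm, hRP.symm, hRP'.symm, rfl⟩
      have h8 := nc_mul_sc L T
      have : nc L T = 2 := Nat.eq_of_mul_eq_mul_right (sc_pos L T) (h8.trans h4)
      rw [nc] at this
      omega
    · have h5 := h3 P (by omega)
      have h6 := sc_dvd hle T
      have h7 := h1 T (by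
        have := Nat.le_of_dvd (sc_pos M T) h6
        omega)
      rw [sP] at h5
      by_cases h9 : sc L T = n
      · omega
      · exfalso
        have h10 : n = 3 := by omega
        have h11 := Nat.le_of_dvd (sc_pos M T) h6
        omega

theorem fix_s_le [Finite Γ] (Z : ZAct Γ X K Q) {M : Subgroup Γ} {P T : X} {x : Γ}
    (hx : M ⊓ stabilizer Γ T = Subgroup.zpowers x) (hPT : P ≠ T) (hP : x • P = P) :
    sc M T ≤ kc Q M P := by
  have h1 : qc Q (Subgroup.zpowers x) P = 1 := by
    rw [qc, Subgroup.card_eq_one, eq_bot_iff]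
    rintro z ⟨hz, hz'⟩
    by_contra hne
    exact hPT (Z.uni_unique hz' (by simpa using hne) (zp_fix hz (mem_zp hx).2)).symm
  have h2 := Z.sc_eq (Subgroup.zpowers x) P
  rw [h1, one_mul] at h2
  have h3 : sc (Subgroup.zpowers x) P = sc M T := by
    rw [← ord_zp hx, sc, inf_eq_left.2, Nat.card_zpowers]
    simpa using hP
  rw [← h3, h2]
  exact kc_mono (by simpa using (mem_zp hx).1) P

/-- coprime 2-generation -/
theorem gen_u [Finite Γ] (Z : ZAct Γ X K Q) (M : Subgroup Γ) (P : X) (hP : 2 ≤ qc Q M P)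
    (hs : ¬ M ≤ stabilizer Γ P) :
    ∃ x y, Subgroup.closure {x, y} = M ∧ Nat.Coprime (orderOf x) (orderOf y) := by
  rcases Z.class_u M P hP with h | ⟨T, hT, hT2, hcov, hnum⟩
  · exact absurd h hs
  have hPT : P ≠ T := by rintro rfl; omega
  obtain ⟨x, hx⟩ := Z.cyc M T hT
  have hxM := mem_zp hx
  have hox := ord_zp hx
  have hx1 : x ≠ 1 := by
    rintro rfl
    simp at hox
    omega
  have hnmod := Z.nc_mod M P
  have hcop : Nat.Coprime (sc M T) (qc Q M P) := by
    have e := nc_mul_sc M P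
    have e0 := nc_pos M P
    rw [Z.sc_eq] at e
    rcases hnum with ⟨a, b, c, d⟩ | ⟨a, e, he, b, c, d⟩ | ⟨a, b, c, d⟩
    · rw [a, b, d] at e
      rw [a] at hnmod ⊢
      have h1 : nc M P = sc M T := by omega
      rw [← h1, Nat.coprime_two_right, Nat.odd_iff]
      omega
    · have : Nat.Coprime (e * sc M T) (qc Q M P) := by rw [c]; simp
      exact this.coprime_mul_left
    · rw [a, c]; norm_num
  -- generic choice
  have main : ∀ y ∈ M ⊓ Q P, y ≠ 1 →
      (Subgroup.closure {x, y} = M) ∨ (3 ≤ qc Q M P ∧ y • T ≠ T ∧ x • y • T = y • T) ∨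
      (qc Q M P = 9 ∧ kc Q M P = 4 ∧ sc M T = 5 ∧ Nat.card M = 360) := by
    intro y hy hy1
    set L := Subgroup.closure {x, y} with hLdef
    have hle : L ≤ M := by
      rw [Subgroup.closure_le]
      rintro z (rfl | rfl)
      · exact hxM.1
      · exact hy.1
    have hxL : x ∈ L := Subgroup.subset_closure (by simp)
    have hyL : y ∈ L := Subgroup.subset_closure (by simp)
    have hqL : 2 ≤ qc Q L P := by
      have h0 := qc_pos (Q := Q) L P
      have h1 : qc Q L P ≠ 1 := by
        rw [qc, Ne, Subgroup.card_eq_one]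
        intro h
        have : y ∈ L ⊓ Q P := ⟨hyL, hy.2⟩
        rw [h] at this
        exact hy1 (by simpa using this)
      omega
    have sT : sc L T = sc M T := stab_eq_of_sub hle hx hxL
    rcases Z.class_u L P hqL with h | ⟨T1, hT1, hT12, hcov1, hnum1⟩
    · exfalso
      have := Z.fix_s_le hx hPT (h hxL)
      have := hnum.k_lt
      omega
    · have hTT : T ∈ orbit L T1 := by
        rcases hcov1 T (by omega) with ⟨a, rfl⟩ | h
        · exfalso
          have h1 := Z.orbit_q L a.2 P
          have h2 := qc_one_of_le hle hT
          change qc Q L ((a : Γ) • P) = 1 at h2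
          omega
        · exact h
      have hTT1 : sc L T1 = sc M T := by
        rw [← sT]
        obtain ⟨a, rfl⟩ := hTT
        exact (orbit_s L a.2 T1).symm
      rw [hTT1] at hnum1
      rcases num_cmp hnum hnum1 (qc_dvd hle P) with h | ⟨h3, h⟩ | h
      · left
        exact Subgroup.eq_of_le_of_card_ge hle h.ge
      · right; left
        have hyT : y • T ≠ T := fun h => hPT (Z.uni_unique hy.2 hy1 h).symm
        refine ⟨h3, hyT, ?_⟩
        by_contra hne
        have hsub : ({T, y • T, x • y • T} : Set X) ⊆ orbit L T := by
          rintro A (rfl | rfl | rfl)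
          · exact mem_orbit_self _
          · exact ⟨⟨y, hyL⟩, rfl⟩
          · exact ⟨⟨x, hxL⟩ * ⟨y, hyL⟩, mul_smul x y T⟩
        have h6 := Set.ncard_le_ncard hsub (Set.finite_range _)
        have h7 : ({T, y • T, x • y • T} : Set X).ncard = 3 := by
          refine Set.ncard_eq_three.2 ⟨_, _, _, hyT.symm, ?_, Ne.symm hne, rfl⟩
          intro h
          have : x • T = x • y • T := hxM.2.trans h
          exact hyT (smul_left_cancel _ this).symm
        have h8 := nc_mul_sc L T
        rw [h, sT] at h8
        have : nc L T = 2 := Nat.eq_of_mul_eq_mul_right (sc_pos M T) h8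
        rw [nc] at this
        omega
      · right; right; exact h
  by_cases hex : qc Q M P = 9 ∧ kc Q M P = 4 ∧ sc M T = 5 ∧ Nat.card M = 360
  · obtain ⟨e1, e2, e3, e4⟩ := hex
    have scP : sc M P = 36 := by rw [Z.sc_eq, e1, e2]
    obtain ⟨y, hyM, hyP, hy4⟩ : ∃ y ∈ M, y • P = P ∧ orderOf y = 4 := by
      obtain ⟨χ, hχ⟩ := Z.chi P
      let f : ↥(M ⊓ stabilizer Γ P) →* Kˣ := χ.comp (Subgroup.inclusion inf_le_right)
      have hk : f.ker = (Q P).subgroupOf (M ⊓ stabilizer Γ P) := by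
        ext a
        rw [MonoidHom.mem_ker, Subgroup.mem_subgroupOf]
        exact hχ _
      have hcard : Nat.card f.range = 4 := by
        rw [← e2, kc, Subgroup.relIndex, ← hk, Subgroup.index_ker]
      have : Finite f.range := Set.finite_range f
      have : IsCyclic f.range := isCyclic_of_injective_ringHom
        ((Units.coeHom K).comp f.range.subtype) (Units.val_injective.comp Subtype.val_injective)
      obtain ⟨⟨_, z, rfl⟩, hg⟩ := IsCyclic.exists_ofOrder_eq_natCard (α := f.range)
      rw [hcard] at hg
      have hg' : orderOf (f z) = 4 := by rw [← hg, ← Subgroup.orderOf_coe]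
      have h4 : 4 ∣ orderOf z := hg' ▸ orderOf_map_dvd f z
      obtain ⟨z, hz⟩ := z
      rw [Subgroup.orderOf_mk] at h4
      obtain ⟨c, hc⟩ := h4
      have h0 : 0 < orderOf z := orderOf_pos z
      refine ⟨z ^ c, pow_mem hz.1 _, ?_, ?_⟩
      · exact (pow_mem hz.2 c : z ^ c ∈ stabilizer Γ P)
      · have hc0 : c ≠ 0 := by rintro rfl; omega
        rw [orderOf_pow_of_dvd hc0 (hc ▸ Dvd.intro_left _ rfl), hc]
        exact Nat.mul_div_cancel _ (Nat.pos_of_ne_zero hc0)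
    refine ⟨x, y, ?_, by rw [hox, hy4, e3]; norm_num⟩
    set L := Subgroup.closure {x, y} with hLdef
    have hle : L ≤ M := by
      rw [Subgroup.closure_le]
      rintro z (rfl | rfl)
      · exact hxM.1
      · exact hyM
    have hxL : x ∈ L := Subgroup.subset_closure (by simp)
    have hyL : y ∈ L := Subgroup.subset_closure (by simp)
    have sT : sc L T = 5 := (stab_eq_of_sub hle hx hxL).trans e3
    have sP : 4 ∣ sc L P := by
      rw [← hy4, ← Nat.card_zpowers]
      apply Subgroup.card_dvd_of_le
      rw [Subgroup.zpowers_le]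
      exact ⟨hyL, hyP⟩
    have sP0 := sc_pos L P
    have sP2 : 2 ≤ sc L P := by
      have := Nat.le_of_dvd sP0 sP
      omega
    have hMcov : ∀ A : X, 2 ≤ sc M A → (sc M A = 36 ∧ qc Q M A = 9) ∨ (sc M A = 5 ∧ qc Q M A = 1) := by
      intro A hA
      rcases hcov A hA with ⟨a, rfl⟩ | ⟨a, rfl⟩
      · left; exact ⟨(orbit_s M a.2 P).trans scP, (Z.orbit_q M a.2 P).trans e1⟩
      · right; exact ⟨(orbit_s M a.2 T).trans e3, (Z.orbit_q M a.2 T).trans hT⟩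
    have hmono : ∀ A : X, sc L A ≤ sc M A := fun A => Nat.le_of_dvd (sc_pos M A) (sc_dvd hle A)
    refine Subgroup.eq_of_le_of_card_ge hle ?_
    change Nat.card M ≤ Nat.card L
    by_cases hu : ∀ A : X, qc Q L A = 1
    · exfalso
      rcases Z.class_ss L hu with h | ⟨A, h0, h⟩ | ⟨A, h3, h4, h5, -⟩ | ⟨A, h3, h4⟩
      · rw [h] at hxL
        exact absurd (by simpa using hxL) hx1
      · have h1 : sc L A = Nat.card L := by rw [sc, inf_eq_left.2 h]
        have h2 : sc L T ∣ Nat.card L := Subgroup.card_dvd_of_le inf_le_left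
        have h3 : sc L P ∣ Nat.card L := Subgroup.card_dvd_of_le inf_le_left
        have h4 := sP.trans h3
        rw [sT] at h2
        have h5 := sc_dvd hle A
        rw [h1] at h5
        have h6 := h2.trans h5
        have h7 := h4.trans h5
        rcases hMcov A (h0.trans (hmono A)) with h | h
        · rw [h.1] at h6; omega
        · rw [h.1] at h7; omega
      · have h6 := h5 T (by omega)
        have h7 := h5 P sP2
        omega
      · have h6 := h3 T (by omega)
        have h7 := h3 P sP2
        omega
    · push Not at hu
      obtain ⟨A, hA⟩ := hu
      have hA2 : 2 ≤ qc Q L A := by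
        have := qc_pos (Q := Q) L A
        omega
      have hsA : 2 ≤ sc M A := by
        have h1 := Z.sc_eq L A
        have h2 := kc_pos (Q := Q) L A
        have := hmono A
        nlinarith
      have hqd := qc_dvd (Q := Q) hle A
      have hMA : sc M A = 36 ∧ qc Q M A = 9 := by
        rcases hMcov A hsA with h | h
        · exact h
        · rw [h.2] at hqd
          exact absurd (Nat.dvd_one.1 hqd) hA
      have hkA : kc Q M A = 4 := by
        have := Z.sc_eq M A
        rw [hMA.1, hMA.2] at this
        omega
      rcases Z.class_u L A hA2 with h | ⟨T1, hT1, hT12, hcov1, hnum1⟩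
      · exfalso
        have hAT : A ≠ T := by rintro rfl; omega
        have := Z.fix_s_le hx hAT (h hxL)
        omega
      · have hTT1 : sc L T1 = 5 := by
          rw [← sT]
          rcases hcov1 T (by omega) with ⟨a, rfl⟩ | ⟨a, rfl⟩
          · exfalso
            have h1 := Z.orbit_q L a.2 A
            have h2 := qc_one_of_le hle hT
            change qc Q L ((a : Γ) • A) = 1 at h2
            omega
          · exact (orbit_s L a.2 T1).symm
        have hPs : sc L P = sc L A ∨ sc L P = 5 := by
          rcases hcov1 P sP2 with ⟨a, rfl⟩ | ⟨a, rfl⟩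
          · left; exact orbit_s L a.2 A
          · right; exact (orbit_s L a.2 T1).trans hTT1
        rw [hTT1] at hnum1
        rw [hMA.2] at hqd
        have h8 := Z.sc_eq L A
        have h9 := Nat.le_of_dvd (by norm_num) hqd
        rw [e4]
        rcases hnum1 with ⟨a, b, c, d⟩ | ⟨a, e, he, b, c, d⟩ | ⟨a, b, c, d⟩
        · rw [a] at hqd; omega
        · rcases he with rfl | rfl
          · have : qc Q L A = 4 := by omega
            rw [this] at hqd; omega
          · have h10 : qc Q L A = 9 := by omega
            have h11 : kc Q L A = 4 := by omega
            rw [d, h10, h11]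
        · rw [a, b] at h8
          omega
  · have hcopy : ∀ y ∈ M ⊓ Q P, Nat.Coprime (orderOf x) (orderOf y) := by
      intro y hy
      rw [hox]
      refine hcop.coprime_dvd_right ?_
      rw [← Nat.card_zpowers]
      apply Subgroup.card_dvd_of_le
      simpa using hy
    obtain ⟨y1, hy1, hne1⟩ : ∃ y ∈ M ⊓ Q P, y ≠ 1 := by
      by_contra! h
      have : M ⊓ Q P = ⊥ := by
        rw [eq_bot_iff]
        intro z hz
        simp [h z hz]
      rw [← Subgroup.card_eq_one] at this
      change qc Q M P = 1 at this
      omega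
    rcases main y1 hy1 hne1 with h | ⟨h3, h, h'⟩ | h
    · exact ⟨x, y1, h, hcopy y1 hy1⟩
    · obtain ⟨y2, hy2, hne2, hne12⟩ : ∃ y ∈ M ⊓ Q P, y ≠ 1 ∧ y ≠ y1 := by
        by_contra! h
        have h5 : ((M ⊓ Q P : Subgroup Γ) : Set Γ) ⊆ {1, y1} := by
          intro z hz
          by_cases hz1 : z = 1
          · simp [hz1]
          · simp [h z hz hz1]
        have h6 := (Set.ncard_le_ncard h5).trans ((Set.ncard_insert_le _ _).trans (by simp) : _ ≤ 2)
        have h7 : qc Q M P = ((M ⊓ Q P : Subgroup Γ) : Set Γ).ncard := rfl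
        omega
      rcases main y2 hy2 hne2 with g | ⟨-, g, g'⟩ | g
      · exact ⟨x, y2, g, hcopy y2 hy2⟩
      · exfalso
        have hT12 : y1 • T = y2 • T := by
          by_contra hc
          exact hx1 (Z.three x T (y1 • T) (y2 • T) h.symm g.symm hc hxM.2 h' g')
        have h5 : (y2⁻¹ * y1) • T = T := by
          rw [mul_smul, hT12, inv_smul_smul]
        have h6 : y2⁻¹ * y1 ∈ Q P := mul_mem (inv_mem hy2.2) hy1.2
        by_cases h7 : y2⁻¹ * y1 = 1
        · exact hne12 (inv_mul_eq_one.1 h7)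
        · exact hPT (Z.uni_unique h6 h7 h5).symm
      · exact absurd g hex
    · exact absurd h hex

theorem two_gen [Finite Γ] (Z : ZAct Γ X K Q) (M : Subgroup Γ) :
    (∃ x y, Subgroup.closure {x, y} = M) ∨ ∃ P : X, M ≤ stabilizer Γ P ∧ M ⊓ Q P ≠ ⊥ := by
  by_cases h : ∀ T : X, qc Q M T = 1
  · exact Or.inl (Z.gen_ss M h)
  · push Not at h
    obtain ⟨P, hP⟩ := h
    have hP2 : 2 ≤ qc Q M P := by
      have := qc_pos (Q := Q) M P
      omega
    by_cases hs : M ≤ stabilizer Γ P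
    · exact Or.inr ⟨P, hs, fun h => hP (by rw [qc, Subgroup.card_eq_one, h])⟩
    · obtain ⟨x, y, h, -⟩ := Z.gen_u M P hP2 hs
      exact Or.inl ⟨x, y, h⟩
end ZAct


namespace PS
open MulAction OnePoint

/-- alg closure -/
abbrev Kb (F : Type*) [Field F] := AlgebraicClosure F
/-- proj line -/
abbrev PX (F : Type*) [Field F] := OnePoint (Kb F)

variable {F : Type} [Field F]

noncomputable instance decK : DecidableEq (Kb F) := Classical.decEq _

/-- embedding -/
noncomputable def io : F →+* Kb F := algebraMap F (Kb F)

theorem io_inj : Function.Injective (io : F →+* Kb F) := (algebraMap F (Kb F)).injective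

/-- action hom on SL -/
noncomputable def actSL : Matrix.SpecialLinearGroup (Fin 2) F →* Equiv.Perm (PX F) :=
  (MulAction.toPermHom (GL (Fin 2) (Kb F)) (PX F)).comp
    (Matrix.SpecialLinearGroup.mapGL (Kb F))

theorem actSL_inf (A : Matrix.SpecialLinearGroup (Fin 2) F) :
    actSL A (∞ : PX F) = if io (A 1 0) = 0 then ∞ else ((io (A 0 0) / io (A 1 0) : Kb F) : PX F) := by
  change (Matrix.SpecialLinearGroup.mapGL (Kb F) A) • (∞ : PX F) = _
  rw [OnePoint.smul_infty_eq_ite]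
  rfl

theorem actSL_coe (A : Matrix.SpecialLinearGroup (Fin 2) F) (z : Kb F) :
    actSL A (z : PX F) = if io (A 1 0) * z + io (A 1 1) = 0 then ∞ else
      (((io (A 0 0) * z + io (A 0 1)) / (io (A 1 0) * z + io (A 1 1)) : Kb F) : PX F) := by
  change (Matrix.SpecialLinearGroup.mapGL (Kb F) A) • (z : PX F) = _
  rw [OnePoint.smul_some_eq_ite]
  rfl

/-- center -/
theorem center_iff (A : Matrix.SpecialLinearGroup (Fin 2) F) :
    A ∈ Subgroup.center (Matrix.SpecialLinearGroup (Fin 2) F) ↔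
      A 0 1 = 0 ∧ A 1 0 = 0 ∧ A 0 0 = A 1 1 := by
  rw [Matrix.SpecialLinearGroup.mem_center_iff]
  constructor
  · rintro ⟨r, -, h⟩
    have := fun i j => congrFun (congrFun h i) j
    simp [Matrix.scalar_apply, Matrix.diagonal_apply] at this
    simp [← this]
  · rintro ⟨h1, h2, h3⟩
    have hd := A.det_coe
    rw [Matrix.det_fin_two, h1, h3] at hd
    refine ⟨A 1 1, by simp [sq]; linear_combination hd, ?_⟩
    ext i j
    fin_cases i <;> fin_cases j <;> simp [h1, h2, h3]

theorem center_act (A : Matrix.SpecialLinearGroup (Fin 2) F)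
    (hA : A ∈ Subgroup.center (Matrix.SpecialLinearGroup (Fin 2) F)) : actSL A = 1 := by
  obtain ⟨h1, h2, h3⟩ := (center_iff A).1 hA
  have hd := A.det_coe
  rw [Matrix.det_fin_two, h1, h3] at hd
  have hne : io (A 1 1) ≠ 0 := by
    intro h
    have : A 1 1 = 0 := io_inj (by simpa using h)
    simp [this] at hd
  ext P
  induction P using OnePoint.rec with
  | infty => simp [actSL_inf, h2]
  | coe z => simp [actSL_coe, h1, h2, h3, hne]

/-- action hom -/
noncomputable def actP : PSL2 F →* Equiv.Perm (PX F) :=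
  QuotientGroup.lift _ actSL (fun A hA => center_act A hA)

noncomputable instance actPSL : MulAction (PSL2 F) (PX F) := MulAction.compHom _ actP

/-- matrix -/
def sl (a b c d : F) (h : a * d - b * c = 1) : Matrix.SpecialLinearGroup (Fin 2) F :=
  ⟨!![a, b; c, d], by rw [Matrix.det_fin_two]; simpa using h⟩

/-- class of a matrix -/
def mk (a b c d : F) (h : a * d - b * c = 1) : PSL2 F := QuotientGroup.mk (sl a b c d h)

theorem mk_surj (g : PSL2 F) : ∃ a b c d h, g = mk a b c d h := by
  obtain ⟨A, rfl⟩ := QuotientGroup.mk_surjective g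
  refine ⟨A 0 0, A 0 1, A 1 0, A 1 1, (by have := A.det_coe; rwa [Matrix.det_fin_two] at this), ?_⟩
  rw [mk]
  congr 1
  ext i j
  fin_cases i <;> fin_cases j <;> rfl

theorem mk_mul (a b c d h a' b' c' d' h') : (mk a b c d h : PSL2 F) * mk a' b' c' d' h' =
    mk (a * a' + b * c') (a * b' + b * d') (c * a' + d * c') (c * b' + d * d')
      (by linear_combination h' + (a' * d' - b' * c') * h) := by
  rw [mk, mk, mk, ← QuotientGroup.mk_mul]
  congr 1
  apply Subtype.ext
  change !![a, b; c, d] * !![a', b'; c', d'] = !![_, _; _, _]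
  rw [Matrix.mul_fin_two]

theorem mk_one_iff (a b c d h) : (mk a b c d h : PSL2 F) = 1 ↔ b = 0 ∧ c = 0 ∧ a = d := by
  rw [mk, QuotientGroup.eq_one_iff, center_iff]
  simp [sl]

theorem mk_inv (a b c d h) : (mk a b c d h : PSL2 F)⁻¹ =
    mk d (-b) (-c) a (by linear_combination h) := by
  apply inv_eq_of_mul_eq_one_right
  rw [mk_mul, mk_one_iff]
  refine ⟨by ring, by ring, by ring⟩

theorem mk_eq_iff (a b c d h a' b' c' d' h') : (mk a b c d h : PSL2 F) = mk a' b' c' d' h' ↔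
    ∃ e, e ^ 2 = 1 ∧ a' = e * a ∧ b' = e * b ∧ c' = e * c ∧ d' = e * d := by
  rw [← inv_mul_eq_one, mk_inv, mk_mul, mk_one_iff]
  constructor
  · rintro ⟨h1, h2, h3⟩
    refine ⟨d * a' - b * c', ?_, ?_, ?_, ?_, ?_⟩
    · have e1 : (d * a' - b * c') * (d * a' - b * c') = 1 := by
        have : d * a' - b * c' = -c * b' + a * d' := by linear_combination h3
        nth_rewrite 2 [this]
        have : (d * a' - b * c') * (-c * b' + a * d') - (d * b' - b * d') * (- c * a' + a * c') = 1 := by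
          linear_combination h' + (a' * d' - b' * c') * h
        linear_combination this + (-c * a' + a * c') * h1
      linear_combination e1
    · linear_combination -a' * h + b * h2
    · linear_combination -b' * h - b * h3 + a * h1
    · linear_combination -c' * h + d * h2
    · linear_combination -d' * h + c * h1 - d * h3
  · rintro ⟨e, he, rfl, rfl, rfl, rfl⟩
    refine ⟨by ring, by ring, by ring⟩

theorem fix_inf (a b c d h) : (mk a b c d h : PSL2 F) • (∞ : PX F) = ∞ ↔ c = 0 := by
  have e := actSL_inf (sl a b c d h)
  change (mk a b c d h : PSL2 F) • (∞ : PX F) = (if io c = 0 then _ else _) at e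
  rw [e]
  by_cases hc : c = 0
  · rw [if_pos (by simp [hc])]; simp [hc]
  · rw [if_neg (by rwa [map_eq_zero])]; simp [hc]

theorem smul_inf (a b c d h) (hc : c ≠ 0) : (mk a b c d h : PSL2 F) • (∞ : PX F) =
    ((io a / io c : Kb F) : PX F) := by
  have e := actSL_inf (sl a b c d h)
  change (mk a b c d h : PSL2 F) • (∞ : PX F) = (if io c = 0 then _ else _) at e
  rw [e, if_neg (by rwa [map_eq_zero])]
  rfl

theorem det_io {a b c d : F} (h : a * d - b * c = 1) : io a * io d - io b * io c = 1 := by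
  rw [← map_mul, ← map_mul, ← map_sub, h, map_one]

theorem smul_coe (a b c d h) (z : Kb F) (hz : io c * z + io d ≠ 0) :
    (mk a b c d h : PSL2 F) • (z : PX F) =
    (((io a * z + io b) / (io c * z + io d) : Kb F) : PX F) := by
  change actSL (sl a b c d h) z = _
  rw [actSL_coe]
  change (if io c * z + io d = 0 then _ else _) = _
  rw [if_neg hz]
  rfl

theorem smul_coe' (a b c d h) (z : Kb F) (hz : io c * z + io d = 0) :
    (mk a b c d h : PSL2 F) • (z : PX F) = ∞ := by
  change actSL (sl a b c d h) z = _
  rw [actSL_coe]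
  change (if io c * z + io d = 0 then _ else _) = _
  rw [if_pos hz]

theorem fix_coe (a b c d h) (z : Kb F) : (mk a b c d h : PSL2 F) • (z : PX F) = z ↔
    io c * z ^ 2 + (io d - io a) * z - io b = 0 := by
  by_cases hz : io c * z + io d = 0
  · rw [smul_coe' _ _ _ _ _ _ hz]
    simp only [OnePoint.infty_ne_coe, false_iff]
    intro h1
    have h2 := det_io h
    have h3 : io a * z + io b = 0 := by linear_combination -h1 + z * hz
    have : (1 : Kb F) = 0 := by linear_combination -h2 + io a * hz - io c * h3
    exact one_ne_zero this
  · rw [smul_coe _ _ _ _ _ _ hz, OnePoint.coe_eq_coe, div_eq_iff hz]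
    constructor <;> intro h <;> linear_combination -h

/-- eigenvalue -/
noncomputable def lam (a c d : F) : PX F → Kb F := fun P => OnePoint.elim P (io a) (fun z => io c * z + io d)

@[simp] theorem lam_inf (a c d : F) : lam a c d ∞ = io a := rfl
@[simp] theorem lam_coe (a c d : F) (z : Kb F) : lam a c d z = io c * z + io d := rfl

/-- relational character -/
def Chi (g : PSL2 F) (P : PX F) (t : Kb F) : Prop :=
  g • P = P ∧ ∃ a b c d h, g = mk a b c d h ∧ t = lam a c d P ^ 2

theorem Chi.unique {g : PSL2 F} {P : PX F} {s t : Kb F} (hs : Chi g P s) (ht : Chi g P t) :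
    s = t := by
  obtain ⟨-, a, b, c, d, h, rfl, rfl⟩ := hs
  obtain ⟨-, a', b', c', d', h', e, rfl⟩ := ht
  rw [mk_eq_iff] at e
  obtain ⟨e, he, rfl, rfl, rfl, rfl⟩ := e
  have he' : io e ^ 2 = 1 := by rw [← map_pow, he, map_one]
  induction P using OnePoint.rec with
  | infty => simp [mul_pow, he']
  | coe z => simp only [lam_coe, map_mul]; linear_combination -(io c * z + io d) ^ 2 * he'

theorem Chi.ex {g : PSL2 F} {P : PX F} (h : g • P = P) : ∃ t, Chi g P t := by
  obtain ⟨a, b, c, d, hh, e⟩ := mk_surj g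
  exact ⟨_, h, a, b, c, d, hh, e, rfl⟩

theorem Chi.ne {g : PSL2 F} {P : PX F} {t : Kb F} (h : Chi g P t) : t ≠ 0 := by
  obtain ⟨hf, a, b, c, d, h, rfl, rfl⟩ := h
  apply pow_ne_zero
  have hd := det_io h
  induction P using OnePoint.rec with
  | infty =>
    rw [fix_inf] at hf
    rintro (h0 : io a = 0)
    simp [hf, h0] at hd
  | coe z =>
    rw [fix_coe] at hf
    rintro (h0 : io c * z + io d = 0)
    have h3 : io a * z + io b = 0 := by linear_combination -hf + z * h0
    have : (1 : Kb F) = 0 := by linear_combination -hd + io a * h0 - io c * h3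
    exact one_ne_zero this

theorem Chi.mul {g g' : PSL2 F} {P : PX F} {t t' : Kb F} (h : Chi g P t) (h' : Chi g' P t') :
    Chi (g * g') P (t * t') := by
  obtain ⟨hf, a, b, c, d, h, rfl, rfl⟩ := h
  obtain ⟨hf', a', b', c', d', h', rfl, rfl⟩ := h'
  refine ⟨by rw [mul_smul, hf', hf], _, _, _, _, _, mk_mul .., ?_⟩
  induction P using OnePoint.rec with
  | infty =>
    rw [fix_inf] at hf hf'
    simp [hf, hf']
    ring
  | coe z =>
    rw [fix_coe] at hf hf'
    rw [← mul_pow]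
    congr 1
    simp only [lam_coe, map_add, map_mul]
    linear_combination (io c) * hf'

theorem Chi.one (P : PX F) : Chi 1 P 1 := by
  refine ⟨one_smul _ _, 1, 0, 0, 1, by simp, ((mk_one_iff _ _ _ _ _).2 (by simp)).symm, ?_⟩
  induction P using OnePoint.rec <;> simp

/-- unipotent radical -/
noncomputable def chiHom (P : PX F) : stabilizer (PSL2 F) P →* (Kb F)ˣ where
  toFun g := Units.mk0 (Chi.ex g.2).choose (Chi.ne (Chi.ex g.2).choose_spec)
  map_one' := by
    ext
    exact Chi.unique (Chi.ex (one_mem (stabilizer (PSL2 F) P))).choose_spec (Chi.one P)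
  map_mul' g g' := by
    ext
    exact Chi.unique (Chi.ex (g * g').2).choose_spec
      (Chi.mul (Chi.ex g.2).choose_spec (Chi.ex g'.2).choose_spec)

/-- unipotent radical -/
noncomputable def Qp (P : PX F) : Subgroup (PSL2 F) := (chiHom P).ker.map (Subgroup.subtype _)

theorem mem_ker_chi {P : PX F} (g : stabilizer (PSL2 F) P) : chiHom P g = 1 ↔ (g : PSL2 F) ∈ Qp P := by
  rw [Qp, Subgroup.mem_map]
  constructor
  · intro h; exact ⟨g, h, rfl⟩
  · rintro ⟨g', h, e⟩
    have : g' = g := Subtype.ext e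
    rw [← this]; exact h

theorem mem_Qp {P : PX F} {g : PSL2 F} : g ∈ Qp P ↔ Chi g P 1 := by
  constructor
  · rintro ⟨g, h, rfl⟩
    have h1 : chiHom P g = 1 := h
    have h2 : (Chi.ex g.2).choose = 1 := congrArg Units.val h1
    have := (Chi.ex g.2).choose_spec
    rw [h2] at this
    exact this
  · intro h
    rw [← mem_ker_chi ⟨g, h.1⟩]
    ext
    exact Chi.unique (Chi.ex h.1).choose_spec h

/-- explicit -/
theorem mem_Qp_mk {P : PX F} {a b c d h} : (mk a b c d h : PSL2 F) ∈ Qp P ↔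
    mk a b c d h • P = P ∧ lam a c d P ^ 2 = 1 := by
  rw [mem_Qp]
  have : Chi (mk a b c d h) P 1 ↔ mk a b c d h • P = P ∧ Chi (mk a b c d h) P 1 :=
    ⟨fun h => ⟨h.1, h⟩, fun h => h.2⟩
  rw [this]
  refine and_congr_right fun hf => ⟨fun h1 => ?_, fun h1 => ⟨hf, _, _, _, _, _, rfl, h1.symm⟩⟩
  exact (h1.unique ⟨hf, _, _, _, _, _, rfl, rfl⟩).symm

theorem ex_fix (g : PSL2 F) : ∃ P : PX F, g • P = P := by
  obtain ⟨a, b, c, d, h, rfl⟩ := mk_surj g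
  by_cases hc : c = 0
  · exact ⟨∞, (fix_inf ..).2 hc⟩
  · have hc' : io c ≠ 0 := by rwa [Ne, map_eq_zero]
    let p : Polynomial (Kb F) := .C (io c) * .X ^ 2 + .C (io d - io a) * .X + .C (- io b)
    have hp : p.degree ≠ 0 := by
      rw [Polynomial.degree_quadratic hc']; decide
    obtain ⟨z, hz⟩ := IsAlgClosed.exists_root p hp
    refine ⟨z, (fix_coe ..).2 ?_⟩
    simp [p, Polynomial.IsRoot] at hz
    linear_combination hz

theorem three2 (g : PSL2 F) (w z : Kb F) (hwz : w ≠ z) (h0 : g • (∞ : PX F) = ∞)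
    (h1 : g • (w : PX F) = w) (h2 : g • (z : PX F) = z) : g = 1 := by
  obtain ⟨a, b, c, d, h, rfl⟩ := mk_surj g
  rw [fix_inf] at h0
  rw [fix_coe] at h1 h2
  subst h0
  simp only [map_zero, zero_mul, zero_add] at h1 h2
  have e1 : (io d - io a) * (w - z) = 0 := by linear_combination h1 - h2
  have e2 : io d - io a = 0 := (mul_eq_zero.1 e1).resolve_right (sub_ne_zero.2 hwz)
  rw [e2] at h1
  rw [mk_one_iff]
  refine ⟨io_inj (by rw [map_zero]; linear_combination -h1), rfl, io_inj (by linear_combination -e2)⟩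

theorem three3 (g : PSL2 F) (w z t : Kb F) (hwz : w ≠ z) (hwt : w ≠ t) (hzt : z ≠ t)
    (h0 : g • (t : PX F) = t)
    (h1 : g • (w : PX F) = w) (h2 : g • (z : PX F) = z) : g = 1 := by
  have key : g • (∞ : PX F) = ∞ := by
    obtain ⟨a, b, c, d, h, rfl⟩ := mk_surj g
    rw [fix_inf]
    rw [fix_coe] at h0 h1 h2
    have e1 : (io c * (w + z) + (io d - io a)) * (w - z) = 0 := by linear_combination h1 - h2
    have e2 := (mul_eq_zero.1 e1).resolve_right (sub_ne_zero.2 hwz)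
    have e3 : (io c * (w + t) + (io d - io a)) * (w - t) = 0 := by linear_combination h1 - h0
    have e4 := (mul_eq_zero.1 e3).resolve_right (sub_ne_zero.2 hwt)
    have e5 : io c * (z - t) = 0 := by linear_combination e2 - e4
    have := (mul_eq_zero.1 e5).resolve_right (sub_ne_zero.2 hzt)
    rwa [map_eq_zero] at this
  exact three2 g w z hwz key h1 h2

theorem three (g : PSL2 F) (P R T : PX F) (h1 : P ≠ R) (h2 : P ≠ T) (h3 : R ≠ T)
    (hP : g • P = P) (hR : g • R = R) (hT : g • T = T) : g = 1 := by
  induction P using OnePoint.rec with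
  | infty =>
    induction R using OnePoint.rec with
    | infty => exact absurd rfl h1
    | coe w =>
      induction T using OnePoint.rec with
      | infty => exact absurd rfl h2
      | coe z => exact three2 g w z (by simpa using h3) hP hR hT
  | coe w =>
    induction R using OnePoint.rec with
    | infty =>
      induction T using OnePoint.rec with
      | infty => exact absurd rfl h3
      | coe z => exact three2 g w z (by simpa using h2) hR hP hT
    | coe z =>
      induction T using OnePoint.rec with
      | infty => exact three2 g w z (by simpa using h1) hT hP hR
      | coe t => exact three3 g w z t (by simpa using h1) (by simpa using h2) (by simpa using h3) hT hP hR

/-- matrix of a unipotent at a finite point -/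
theorem uni_coe {a b c d : F} {h} {z : Kb F} (hm : (mk a b c d h : PSL2 F) ∈ Qp (z : PX F)) :
    io a = lam a c d z + io c * z ∧ io d = lam a c d z - io c * z ∧ io b = -(io c * z ^ 2) := by
  obtain ⟨h1, h2⟩ := mem_Qp_mk.1 hm
  rw [fix_coe] at h1
  simp only [lam_coe] at h2 ⊢
  have hd := det_io h
  have e : (io c * z + io d) * (io a - io c * z) = 1 := by linear_combination hd - io c * h1
  have e2 : io a - io c * z = io c * z + io d := by
    linear_combination (-(io a - io c * z)) * h2 + (io c * z + io d) * e
  refine ⟨by linear_combination e2, by ring, ?_⟩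
  linear_combination -h1 - z * e2

theorem mem_Q_fwd (g : PSL2 F) (P R : PX F) (hg : g ∈ Qp P) (hR : g • R = R) (hne : R ≠ P) : g = 1 := by
  obtain ⟨a, b, c, d, h, rfl⟩ := mk_surj g
  have hd := det_io h
  rw [mk_one_iff]
  induction P using OnePoint.rec with
  | infty =>
    obtain ⟨h1, h2⟩ := mem_Qp_mk.1 hg
    induction R using OnePoint.rec with
    | infty => exact absurd rfl hne
    | coe z =>
      rw [fix_inf] at h1
      rw [fix_coe] at hR
      subst h1
      simp only [lam_inf, map_zero, zero_mul, zero_add] at h2 hR hd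
      have : io a = io d := by linear_combination (io d) * h2 - io a * hd
      rw [this] at hR
      exact ⟨io_inj (by rw [map_zero]; linear_combination -hR), rfl, io_inj this⟩
  | coe w =>
    obtain ⟨e1, e2, e3⟩ := uni_coe hg
    have hc : io c = 0 := by
      induction R using OnePoint.rec with
      | infty => rw [fix_inf] at hR; rw [hR, map_zero]
      | coe z =>
        rw [fix_coe] at hR
        have : io c * (z - w) ^ 2 = 0 := by linear_combination hR - z * e2 + z * e1 + e3
        refine (mul_eq_zero.1 this).resolve_right (pow_ne_zero _ (sub_ne_zero.2 ?_))
        simpa using hne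
    rw [hc] at e1 e2 e3
    refine ⟨io_inj (by rw [map_zero]; linear_combination e3), io_inj (by simpa using hc),
      io_inj (by linear_combination e1 - e2)⟩

theorem mem_Q_bwd (g : PSL2 F) (P : PX F) (hP : g • P = P) (hu : ∀ R : PX F, g • R = R → R = P) :
    g ∈ Qp P := by
  obtain ⟨a, b, c, d, h, rfl⟩ := mk_surj g
  have hd := det_io h
  rw [mem_Qp_mk]
  refine ⟨hP, ?_⟩
  induction P using OnePoint.rec with
  | infty =>
    rw [fix_inf] at hP
    subst hP
    simp only [lam_inf, map_zero, mul_zero, sub_zero] at hd ⊢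
    by_contra hne
    have hda : io d - io a ≠ 0 := by
      intro h0
      exact hne (by linear_combination hd - io a * h0)
    have := hu ((io b / (io d - io a) : Kb F) : PX F) ((fix_coe ..).2 (by
      simp only [map_zero, zero_mul, zero_add]
      field_simp
      ring))
    exact absurd this (OnePoint.coe_ne_infty _)
  | coe z =>
    have hc : c ≠ 0 := fun hc => OnePoint.infty_ne_coe z (hu ∞ ((fix_inf ..).2 hc))
    have hc' : io c ≠ 0 := by rwa [Ne, map_eq_zero]
    have hP' := (fix_coe ..).1 hP
    have := hu (((io a - io d) / io c - z : Kb F) : PX F) ((fix_coe ..).2 (by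
      have : io c * ((io a - io d) / io c) = io a - io d := by field_simp
      linear_combination hP' + ((io a - io d) / io c - 2 * z) * this))
    rw [OnePoint.coe_eq_coe] at this
    have e : io a - io d = 2 * io c * z := by
      field_simp at this
      linear_combination this
    simp only [lam_coe]
    linear_combination hd - io c * hP' - (io c * z + io d) * e

theorem Q_comm (P : PX F) (g : PSL2 F) (hg : g ∈ Qp P) (g' : PSL2 F) (hg' : g' ∈ Qp P) :
    g * g' = g' * g := by
  obtain ⟨a, b, c, d, h, rfl⟩ := mk_surj g
  obtain ⟨a', b', c', d', h', rfl⟩ := mk_surj g'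
  rw [mk_mul, mk_mul, mk_eq_iff]
  refine ⟨1, by simp, ?_⟩
  have hd := det_io h
  have hd' := det_io h'
  induction P using OnePoint.rec with
  | infty =>
    obtain ⟨h1, h2⟩ := mem_Qp_mk.1 hg
    obtain ⟨h1', h2'⟩ := mem_Qp_mk.1 hg'
    rw [fix_inf] at h1 h1'
    subst h1 h1'
    simp only [lam_inf, map_zero, mul_zero, sub_zero] at h2 h2' hd hd'
    have e : a = d := io_inj (by linear_combination (io d) * h2 - io a * hd)
    have e' : a' = d' := io_inj (by linear_combination (io d') * h2' - io a' * hd')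
    subst e e'
    refine ⟨by ring, by ring, by ring, by ring⟩
  | coe z =>
    obtain ⟨e1, e2, e3⟩ := uni_coe hg
    obtain ⟨e1', e2', e3'⟩ := uni_coe hg'
    refine ⟨io_inj ?_, io_inj ?_, io_inj ?_, io_inj ?_⟩ <;>
      simp only [map_add, map_mul, map_one, one_mul, e1, e2, e3, e1', e2', e3'] <;> ring

theorem zact : ZAct (PSL2 F) (PX F) (Kb F) Qp where
  ex_fix g _ := ex_fix g
  three := three
  mem_Q g P := by
    constructor
    · intro h
      by_cases h1 : g = 1
      · exact Or.inl h1
      · refine Or.inr ⟨(mem_Qp.1 h).1, fun R hR => ?_⟩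
        by_contra hne
        exact h1 (mem_Q_fwd g P R h hR hne)
    · rintro (rfl | ⟨h, h'⟩)
      · exact one_mem _
      · exact mem_Q_bwd g P h h'
  chi P := ⟨chiHom P, mem_ker_chi⟩
  comm := Q_comm

end PS


namespace PS
open MulAction OnePoint

variable {F : Type} [Field F]

/-- upper unipotent -/
def u (x : F) : PSL2 F := mk 1 x 0 1 (by ring)
/-- lower unipotent -/
def v (x : F) : PSL2 F := mk 1 0 x 1 (by ring)
/-- torus -/
def hh (a : Fˣ) : PSL2 F := mk a 0 0 (a⁻¹ : Fˣ) (by simp)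

theorem mk_congr {a b c d a' b' c' d' : F} {h h'} (ha : a = a') (hb : b = b') (hc : c = c')
    (hd : d = d') : (mk a b c d h : PSL2 F) = mk a' b' c' d' h' := by
  subst ha hb hc hd; rfl

theorem u_add (x y : F) : u (x + y) = u x * u y := by
  rw [u, u, u, mk_mul]
  apply mk_congr <;> ring

theorem v_add (x y : F) : v (x + y) = v x * v y := by
  rw [v, v, v, mk_mul]
  apply mk_congr <;> ring

@[simp] theorem u_eq_one {x : F} : u x = 1 ↔ x = 0 := by simp [u, mk_one_iff]
@[simp] theorem v_eq_one {x : F} : v x = 1 ↔ x = 0 := by simp [v, mk_one_iff]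
theorem u_zero : u (0 : F) = 1 := by simp
theorem v_zero : v (0 : F) = 1 := by simp
theorem u_neg (x : F) : u (-x) = (u x)⁻¹ := by
  rw [eq_inv_iff_mul_eq_one, ← u_add]; simp
theorem v_neg (x : F) : v (-x) = (v x)⁻¹ := by
  rw [eq_inv_iff_mul_eq_one, ← v_add]; simp
theorem u_inj {x y : F} (h : u x = u y) : x = y := by
  rw [← mul_inv_eq_one, ← u_neg, ← u_add, u_eq_one] at h
  linear_combination h
theorem v_inj {x y : F} (h : v x = v y) : x = y := by
  rw [← mul_inv_eq_one, ← v_neg, ← v_add, v_eq_one] at h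
  linear_combination h
theorem u_pow (x : F) (n : ℕ) : u x ^ n = u (n * x) := by
  induction n with
  | zero => simp [u_zero]
  | succ n ih => rw [pow_succ, ih, ← u_add]; congr 1; push_cast; ring

theorem hh_u (a : Fˣ) (x : F) : hh a * u x * (hh a)⁻¹ = u (a ^ 2 * x) := by
  rw [hh, u, u, mk_inv, mk_mul, mk_mul]
  apply mk_congr <;> simp
  ring

theorem hh_v (a : Fˣ) (x : F) : hh a * v x * (hh a)⁻¹ = v (x / a ^ 2) := by
  rw [hh, v, v, mk_inv, mk_mul, mk_mul]
  apply mk_congr <;> simp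
  field_simp

theorem mem_Q_inf {g : PSL2 F} : g ∈ Qp (∞ : PX F) ↔ ∃ x, g = u x := by
  constructor
  · intro hg
    obtain ⟨a, b, c, d, h, rfl⟩ := mk_surj g
    obtain ⟨h1, h2⟩ := mem_Qp_mk.1 hg
    rw [fix_inf] at h1
    subst h1
    rw [lam_inf, ← map_pow] at h2
    have h3 : a ^ 2 = 1 := io_inj (by rw [h2, map_one])
    have h4 : a * d = 1 := by linear_combination h
    have h5 : a = d := by linear_combination d * h3 - a * h4
    refine ⟨a * b, ?_⟩
    rw [u, mk_eq_iff]
    refine ⟨a, h3, by linear_combination -h3, rfl, by ring, by linear_combination -h4⟩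
  · rintro ⟨x, rfl⟩
    rw [u, mem_Qp_mk, fix_inf]
    simp

theorem mem_Q_zero {g : PSL2 F} : g ∈ Qp ((0 : Kb F) : PX F) ↔ ∃ x, g = v x := by
  constructor
  · intro hg
    obtain ⟨a, b, c, d, h, rfl⟩ := mk_surj g
    obtain ⟨h1, h2⟩ := mem_Qp_mk.1 hg
    rw [fix_coe] at h1
    have h1' : b = 0 := io_inj (by rw [map_zero]; linear_combination -h1)
    subst h1'
    rw [lam_coe, mul_zero, zero_add, ← map_pow] at h2
    have h3 : d ^ 2 = 1 := io_inj (by rw [h2, map_one])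
    have h4 : a * d = 1 := by linear_combination h
    refine ⟨d * c, ?_⟩
    rw [v, mk_eq_iff]
    refine ⟨d, h3, by linear_combination -h4, by ring, rfl, by linear_combination -h3⟩
  · rintro ⟨x, rfl⟩
    rw [v, mem_Qp_mk, fix_coe]
    simp

theorem stab_inf {g : PSL2 F} (hg : g • (∞ : PX F) = ∞) : ∃ a x, g = hh a * u x := by
  obtain ⟨a, b, c, d, h, rfl⟩ := mk_surj g
  rw [fix_inf] at hg
  subst hg
  have h4 : a * d = 1 := by linear_combination h
  refine ⟨⟨a, d, h4, by rw [mul_comm, h4]⟩, d * b, ?_⟩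
  rw [hh, u, mk_mul]
  apply mk_congr <;> simp
  linear_combination -b * h4

theorem hh_inf (a : Fˣ) : hh a • (∞ : PX F) = ∞ := by rw [hh, fix_inf]
theorem u_infty (x : F) : u x • (∞ : PX F) = ∞ := by rw [u, fix_inf]

theorem gen_uv (N : Subgroup (PSL2 F)) (hu : ∀ x, u x ∈ N) (hv : ∀ x, v x ∈ N) : N = ⊤ := by
  rw [eq_top_iff]
  have key : ∀ a b c d h, c ≠ 0 → mk a b c d h ∈ N := by
    intro a b c d h hc
    have : mk a b c d h = u ((a - 1) / c) * v c * u ((d - 1) / c) := by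
      rw [u, v, u, mk_mul, mk_mul]
      apply mk_congr
      · field_simp; ring
      · field_simp; linear_combination -h
      · ring
      · field_simp; ring
    rw [this]
    exact mul_mem (mul_mem (hu _) (hv _)) (hu _)
  rintro g -
  obtain ⟨a, b, c, d, h, rfl⟩ := mk_surj g
  by_cases hc : c = 0
  · have : mk a b c d h = v (-1) * (v 1 * mk a b c d h) := by
      rw [← mul_assoc, ← v_add]; simp
    rw [this]
    refine mul_mem (hv _) ?_
    rw [v, mk_mul]
    apply key
    subst hc
    intro h0
    have : a = 0 := by linear_combination h0
    simp [this] at h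
  · exact key _ _ _ _ _ hc

theorem sq_eq_one_iff_eq {K : Type*} [Field K] {l : K} (h : l ^ 2 = 1) : l = 1 ∨ l = -1 := by
  have : (l - 1) * (l + 1) = 0 := by linear_combination h
  rcases mul_eq_zero.1 this with h | h
  · left; linear_combination h
  · right; linear_combination h

theorem rat_pt {y : PSL2 F} {P : PX F} (h1 : y ≠ 1) (hy : y ∈ Qp P) :
    P = ∞ ∨ ∃ z : F, P = ((io z : Kb F) : PX F) := by
  obtain ⟨a, b, c, d, h, rfl⟩ := mk_surj y
  induction P using OnePoint.rec with
  | infty => left; rfl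
  | coe z =>
    right
    have h2 := (mem_Qp_mk.1 hy).2
    obtain ⟨e1, e2, e3⟩ := uni_coe hy
    have hc : c ≠ 0 := by
      rintro rfl
      apply h1
      rw [mk_one_iff]
      simp only [map_zero, zero_mul, add_zero, sub_zero, neg_zero] at e1 e2 e3
      exact ⟨io_inj (by simpa using e3), rfl, io_inj (e1.trans e2.symm)⟩
    have hc' : io c ≠ 0 := by rwa [Ne, map_eq_zero]
    have hlam : ∃ l : F, lam a c d (z : PX F) = io l := by
      rcases (sq_eq_one_iff_eq h2) with h | h
      · exact ⟨1, by rw [h, map_one]⟩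
      · exact ⟨-1, by rw [h, map_neg, map_one]⟩
    obtain ⟨l, hl⟩ := hlam
    rw [hl] at e1
    refine ⟨(a - l) / c, ?_⟩
    rw [OnePoint.coe_eq_coe, map_div₀, map_sub, e1]
    field_simp
    ring

theorem tr_inf {y : PSL2 F} {P : PX F} (h1 : y ≠ 1) (hy : y ∈ Qp P) :
    ∃ s : PSL2 F, s • (∞ : PX F) = P := by
  rcases rat_pt h1 hy with rfl | ⟨z, rfl⟩
  · exact ⟨1, one_smul _ _⟩
  · refine ⟨mk z (-1) 1 0 (by ring), ?_⟩
    rw [smul_inf _ _ _ _ _ one_ne_zero]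
    simp

theorem u_smul (x : F) (z : Kb F) : u x • (z : PX F) = ((z + io x : Kb F) : PX F) := by
  rw [u, smul_coe _ _ _ _ _ _ (by simp)]
  simp

theorem v_inf {t : F} (ht : t ≠ 0) : v t • (∞ : PX F) = ((io (1 / t) : Kb F) : PX F) := by
  rw [v, smul_inf _ _ _ _ _ ht]
  simp

theorem v_fix0 (t : F) : v t • ((0 : Kb F) : PX F) = ((0 : Kb F) : PX F) := by
  rw [v, fix_coe]
  simp

theorem uv_zero {x t : F} (ht : t ≠ 0) :
    (u x * v t) • (∞ : PX F) = ((0 : Kb F) : PX F) ↔ x = -(1 / t) := by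
  rw [mul_smul, v_inf ht, u_smul, OnePoint.coe_eq_coe, ← map_add, map_eq_zero]
  constructor <;> intro h <;> linear_combination h

theorem inf_ne_zero : (∞ : PX F) ≠ ((0 : Kb F) : PX F) := OnePoint.infty_ne_coe _

theorem no_fix (P : PX F) : stabilizer (PSL2 F) P ≠ ⊤ := by
  intro h
  have h1 : u (1 : F) ∈ stabilizer (PSL2 F) P := h ▸ Subgroup.mem_top _
  have h2 : v (1 : F) ∈ stabilizer (PSL2 F) P := h ▸ Subgroup.mem_top _
  have e1 := zact.uni_unique (mem_Q_inf.2 ⟨1, rfl⟩) (by simp : u (1 : F) ≠ 1) h1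
  have e2 := zact.uni_unique (mem_Q_zero.2 ⟨1, rfl⟩) (by simp : v (1 : F) ≠ 1) h2
  exact inf_ne_zero (e1.symm.trans e2)

theorem center_bot : Subgroup.center (PSL2 F) = ⊥ := by
  rw [eq_bot_iff]
  intro z hz
  rw [Subgroup.mem_center_iff] at hz
  have h1 := zact.cent (mem_Q_inf.2 ⟨1, rfl⟩) (by simp : u (1 : F) ≠ 1) (hz _).symm
  have h2 := zact.cent (mem_Q_zero.2 ⟨1, rfl⟩) (by simp : v (1 : F) ≠ 1) (hz _).symm
  by_contra hne
  exact inf_ne_zero (zact.Q_disj h2 h1 (by simpa using hne))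

theorem Qp_ne_bot {P : PX F} {y : PSL2 F} (h1 : y ≠ 1) (hy : y ∈ Qp P) : Qp P ≠ ⊥ := by
  intro h
  rw [h] at hy
  exact h1 (by simpa using hy)

variable [Fintype F]

theorem uni_iff {y : PSL2 F} (h1 : y ≠ 1) : (∃ P : PX F, y ∈ Qp P) ↔ y ^ (ringChar F) = 1 := by
  have hp : (ringChar F).Prime := CharP.prime_ringChar F
  have : Fact (ringChar F).Prime := ⟨hp⟩
  constructor
  · rintro ⟨P, hy⟩
    obtain ⟨s, rfl⟩ := tr_inf h1 hy
    have h2 := zact.conj_Q s⁻¹ hy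
    rw [inv_smul_smul, inv_inv] at h2
    obtain ⟨x, hx⟩ := mem_Q_inf.1 h2
    have h3 : (s⁻¹ * y * s) ^ (ringChar F) = 1 := by
      rw [hx, u_pow]; simp
    have e : y = MulAut.conj s (s⁻¹ * y * s) := by simp [mul_assoc]
    rw [e, ← map_pow, h3, map_one]
  · intro h
    obtain ⟨P, hP⟩ := ex_fix y
    refine ⟨P, (mem_ker_chi ⟨y, hP⟩).1 ?_⟩
    have h2 : (chiHom P ⟨y, hP⟩) ^ (ringChar F) = 1 := by
      rw [← map_pow]
      convert! map_one (chiHom P)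
      ext
      exact h
    have h3 : ((chiHom P ⟨y, hP⟩ : (Kb F)ˣ) : Kb F) ^ (ringChar F) = 1 := by
      rw [← Units.val_pow_eq_pow_val, h2, Units.val_one]
    have : CharP (Kb F) (ringChar F) := charP_of_injective_algebraMap (algebraMap F (Kb F)).injective _
    ext
    rw [Units.val_one]
    have h4 := sub_pow_char ((chiHom P ⟨y, hP⟩ : (Kb F)ˣ) : Kb F) 1 (p := ringChar F)
    rw [h3, one_pow, sub_self] at h4
    have := pow_eq_zero_iff hp.ne_zero |>.1 h4
    linear_combination this

/-- squares generate additively -/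
theorem sq_span (N : AddSubgroup F) (h : ∀ a : F, a ^ 2 ∈ N) : N = ⊤ := by
  rw [eq_top_iff]
  rintro x -
  by_cases h2 : (2 : F) = 0
  · have : CharP F 2 := CharTwo.of_one_ne_zero_of_two_eq_zero one_ne_zero h2
    obtain ⟨y, rfl⟩ := FiniteField.isSquare_of_char_two (CharP.ringChar_of_prime_eq_zero Nat.prime_two (by exact_mod_cast h2)) x
    rw [← sq]; exact h y
  · have : x = ((x + 1) / 2) ^ 2 - ((x - 1) / 2) ^ 2 := by field_simp; ring
    rw [this]
    exact sub_mem (h _) (h _)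

theorem borel_inf : ∃ x y, Subgroup.closure {x, y} = stabilizer (PSL2 F) (∞ : PX F) := by
  obtain ⟨l, hl⟩ := IsCyclic.exists_generator (α := Fˣ)
  refine ⟨hh l, u 1, le_antisymm ?_ ?_⟩
  · rw [Subgroup.closure_le]
    rintro z (rfl | rfl)
    · exact hh_inf l
    · exact u_infty 1
  · set N := Subgroup.closure {hh l, u (1 : F)} with hN
    have hhm : ∀ a b : Fˣ, hh (a * b) = hh a * hh b := by
      intro a b
      rw [hh, hh, hh, mk_mul]
      apply mk_congr <;> simp
      ring
    have hlN : ∀ a, hh a ∈ N := by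
      let f : Fˣ →* PSL2 F := MonoidHom.mk' hh hhm
      intro a
      have h1 : Subgroup.zpowers l ≤ N.comap f := by
        rw [Subgroup.zpowers_le]
        exact Subgroup.subset_closure (by simp [f])
      exact h1 (hl a)
    have huN : ∀ x, u x ∈ N := by
      let A : AddSubgroup F :=
        { carrier := {x | u x ∈ N}
          zero_mem' := by change u 0 ∈ N; rw [u_zero]; exact one_mem _
          add_mem' := fun {a b} ha hb => by
            change u (a + b) ∈ N
            rw [u_add]; exact mul_mem ha hb
          neg_mem' := fun {a} ha => by
            change u (-a) ∈ N
            rw [u_neg]; exact inv_mem ha }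
      have hA : A = ⊤ := by
        apply sq_span
        intro a
        by_cases ha : a = 0
        · subst ha; simpa using A.zero_mem
        · change u (a ^ 2) ∈ N
          have := hh_u (Units.mk0 a ha) 1
          rw [mul_one] at this
          change _ = u (a ^ 2) at this
          rw [← this]
          exact mul_mem (mul_mem (hlN _) (Subgroup.subset_closure (by simp))) (inv_mem (hlN _))
      intro x
      have : x ∈ A := hA ▸ AddSubgroup.mem_top x
      exact this
    intro g hg
    obtain ⟨a, x, rfl⟩ := stab_inf hg
    exact mul_mem (hlN _) (huN _)

theorem borel {P : PX F} {y : PSL2 F} (h1 : y ≠ 1) (hy : y ∈ Qp P) :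
    ∃ x y, Subgroup.closure {x, y} = stabilizer (PSL2 F) P := by
  obtain ⟨s, rfl⟩ := tr_inf h1 hy
  obtain ⟨x, y, h⟩ := borel_inf (F := F)
  refine ⟨MulAut.conj s x, MulAut.conj s y, ?_⟩
  have : stabilizer (PSL2 F) (s • (∞ : PX F)) = (stabilizer (PSL2 F) (∞ : PX F)).map
      (MulAut.conj s).toMonoidHom := MulAction.stabilizer_smul_eq_stabilizer_map_conj s _
  rw [this, ← h, MonoidHom.map_closure, Set.image_pair]
  rfl

theorem gen_S : ∃ x y : PSL2 F, Subgroup.closure {x, y} = ⊤ ∧ Nat.Coprime (orderOf x) (orderOf y) := by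
  have := Finite.of_fintype F
  refine zact.gen_u ⊤ (∞ : PX F) ?_ ?_
  · have h0 := ZAct.qc_pos (Q := Qp) (⊤ : Subgroup (PSL2 F)) (∞ : PX F)
    have h1 : ZAct.qc Qp (⊤ : Subgroup (PSL2 F)) (∞ : PX F) ≠ 1 := by
      rw [ZAct.qc, Ne, Subgroup.card_eq_one, top_inf_eq]
      exact Qp_ne_bot (by simp : u (1 : F) ≠ 1) (mem_Q_inf.2 ⟨1, rfl⟩)
    omega
  · rw [top_le_iff]
    exact no_fix _

end PS


set_option linter.unusedSectionVars false
namespace PS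
open MulAction OnePoint

variable {F : Type} [Field F]

theorem fix_iff {P : PX F} {y : PSL2 F} (h1 : y ≠ 1) (hy : y ∈ Qp P) (g : PSL2 F) :
    g • P = P ↔ g * y * g⁻¹ ∈ Qp P := by
  have h := zact.conj_Q g hy
  refine ⟨fun e => by rwa [e] at h, fun h' => ?_⟩
  exact zact.Q_disj h' h (by simpa [mul_inv_eq_one] using h1)

theorem conj_ne {G : Type*} [Group G] {g y : G} (h : y ≠ 1) : g * y * g⁻¹ ≠ 1 := by
  intro e
  apply h
  have : y = g⁻¹ * (g * y * g⁻¹) * g := by group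
  rw [this, e]; group

theorem comm_u (x y : F) : u x * u y = u y * u x := by rw [← u_add, add_comm, u_add]

theorem u_one_ne : u (1 : F) ≠ 1 := by simp
theorem v_one_ne : v (1 : F) ≠ 1 := by simp
theorem u_mem (x : F) : u x ∈ Qp (∞ : PX F) := mem_Q_inf.2 ⟨x, rfl⟩
theorem v_mem (x : F) : v x ∈ Qp ((0 : Kb F) : PX F) := mem_Q_zero.2 ⟨x, rfl⟩

theorem fix_conj {t : PSL2 F} (ht : t • (∞ : PX F) = ∞) : ∃ a : Fˣ, ∀ x, t * u x * t⁻¹ = u ((a : F) ^ 2 * x) := by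
  obtain ⟨a, z, rfl⟩ := stab_inf ht
  refine ⟨a, fun x => ?_⟩
  rw [← hh_u]
  have : u z * u x * (u z)⁻¹ = u x := by rw [comm_u]; group
  calc hh a * u z * u x * (hh a * u z)⁻¹ = hh a * (u z * u x * (u z)⁻¹) * (hh a)⁻¹ := by group
    _ = _ := by rw [this]

variable [Fintype F]

theorem aut_Q (α : MulAut (PSL2 F)) {P : PX F} {y : PSL2 F} (h1 : y ≠ 1) (hy : y ∈ Qp P) :
    ∃ P' : PX F, ∀ z, z ∈ Qp P ↔ α z ∈ Qp P' := by
  have h1' : α y ≠ 1 := by simpa using h1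
  obtain ⟨P', hP'⟩ := (uni_iff h1').2 (by rw [← map_pow, (uni_iff h1).1 ⟨P, hy⟩, map_one])
  refine ⟨P', fun z => ⟨fun hz => ?_, fun hz => ?_⟩⟩
  · refine zact.cent hP' h1' ?_
    rw [← map_mul, ← map_mul, zact.comm P z hz y hy]
  · refine zact.cent hy h1 ?_
    apply α.injective
    rw [map_mul, map_mul, zact.comm P' _ hz _ hP']

theorem aut_fix (α : MulAut (PSL2 F)) {P P' : PX F} {y : PSL2 F} (h1 : y ≠ 1) (hy : y ∈ Qp P)
    (h : ∀ z, z ∈ Qp P ↔ α z ∈ Qp P') (g : PSL2 F) : g • P = P ↔ α g • P' = P' := by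
  rw [fix_iff h1 hy, fix_iff (y := α y) (by simpa using h1) ((h y).1 hy), h, map_mul, map_mul, map_inv]

/-- relation of automorphisms and field automorphisms -/
def Rel (α : MulAut (PSL2 F)) (τ : RingAut F) : Prop :=
  ∃ s c, c ≠ 0 ∧ ∀ x, α (u x) = s * u (c * τ x) * s⁻¹

theorem Rel_ex (α : MulAut (PSL2 F)) : ∃ τ, Rel α τ := by
  obtain ⟨P', hP'⟩ := aut_Q α u_one_ne (u_mem (F := F) 1)
  obtain ⟨s, hs⟩ := tr_inf (y := α (u 1)) (by simp) ((hP' _).1 (u_mem 1))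
  have h1 : ∀ x, ∃ y, s⁻¹ * α (u x) * s = u y := by
    intro x
    have := zact.conj_Q s⁻¹ ((hP' _).1 (u_mem x))
    rw [← hs, inv_smul_smul, inv_inv] at this
    exact mem_Q_inf.1 this
  choose f hf using h1
  have hadd : ∀ x y, f (x + y) = f x + f y := by
    intro x y
    apply u_inj
    rw [u_add, ← hf, ← hf, ← hf, u_add, map_mul]
    group
  have hinj : ∀ x, f x = 0 → x = 0 := by
    intro x hx
    have := hf x
    rw [hx, u_zero, mul_eq_one_iff_eq_inv, inv_mul_eq_iff_eq_mul, mul_inv_cancel] at this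
    simpa using this
  have hsq : ∀ a : Fˣ, ∃ b : Fˣ, ∀ x, f ((a : F) ^ 2 * x) = (b : F) ^ 2 * f x := by
    intro a
    have h2 := (aut_fix α u_one_ne (u_mem (F := F) 1) hP' (hh a)).1 (hh_inf a)
    have h3 : (s⁻¹ * α (hh a) * s) • (∞ : PX F) = ∞ := by
      rw [mul_smul, mul_smul, hs, h2, ← hs, inv_smul_smul]
    obtain ⟨b, hb⟩ := fix_conj h3
    refine ⟨b, fun x => ?_⟩
    apply u_inj
    rw [← hb, ← hf, ← hf, ← hh_u, map_mul, map_mul, map_inv]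
    group
  have hc : f 1 ≠ 0 := fun h => one_ne_zero (hinj 1 h)
  have hm : ∀ y x, f (y * x) / f 1 = (f y / f 1) * (f x / f 1) := by
    let A : AddSubgroup F :=
      { carrier := {y | ∀ x, f (y * x) / f 1 = (f y / f 1) * (f x / f 1)}
        zero_mem' := by
          intro x
          have : f 0 = 0 := by simpa using hadd 0 0
          simp [this]
        add_mem' := by
          intro a b ha hb x
          rw [add_mul, hadd, hadd, add_div, ha, hb]; ring
        neg_mem' := by
          intro a ha x
          have h0 : f 0 = 0 := by simpa using hadd 0 0
          have hn : ∀ z, f (-z) = - f z := by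
            intro z
            have := hadd (-z) z
            rw [neg_add_cancel, h0] at this
            linear_combination -this
          rw [neg_mul, hn, hn, neg_div, ha]; ring }
    have hA : A = ⊤ := by
      apply sq_span
      intro a
      by_cases ha : a = 0
      · subst ha
        simp only [ne_eq, OfNat.ofNat_ne_zero, not_false_eq_true, zero_pow]
        exact A.zero_mem
      · intro x
        obtain ⟨b, hb⟩ := hsq (Units.mk0 a ha)
        have h2 := hb 1
        rw [mul_one] at h2
        rw [Units.val_mk0] at h2 hb
        rw [hb, h2]
        field_simp
    intro y
    have : y ∈ A := hA ▸ AddSubgroup.mem_top y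
    exact this
  let g : F →+* F :=
    { toFun := fun x => f x / f 1
      map_one' := div_self hc
      map_mul' := hm
      map_zero' := by
        have : f 0 = 0 := by simpa using hadd 0 0
        simp [this]
      map_add' := fun x y => by rw [hadd, add_div] }
  refine ⟨RingEquiv.ofBijective g (Finite.injective_iff_bijective.1 g.injective), s, f 1, hc, ?_⟩
  intro x
  have : f 1 * (f x / f 1) = f x := by field_simp
  change α (u x) = s * u (f 1 * (f x / f 1)) * s⁻¹
  rw [this, ← hf]
  group

theorem Rel_unique {α : MulAut (PSL2 F)} {τ τ' : RingAut F} (h : Rel α τ) (h' : Rel α τ') : τ = τ' := by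
  obtain ⟨s, c, hc, hs⟩ := h
  obtain ⟨s', c', hc', hs'⟩ := h'
  have h1 : ∀ x, (s'⁻¹ * s) * u (c * τ x) * (s'⁻¹ * s)⁻¹ = u (c' * τ' x) := by
    intro x
    have := (hs x).symm.trans (hs' x)
    calc _ = s'⁻¹ * (s * u (c * τ x) * s⁻¹) * s' := by group
      _ = _ := by rw [this]; group
  have h2 : (s'⁻¹ * s) • (∞ : PX F) = ∞ := by
    rw [fix_iff (y := u (c * τ 1)) (by simpa using hc) (u_mem _), h1]
    exact u_mem _
  obtain ⟨a, ha⟩ := fix_conj h2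
  have h3 : ∀ x, (a : F) ^ 2 * (c * τ x) = c' * τ' x := by
    intro x
    apply u_inj
    rw [← ha, h1]
  have h4 := h3 1
  rw [map_one, map_one] at h4
  ext x
  have h5 := h3 x
  apply mul_left_cancel₀ hc'
  linear_combination h5 - τ x * h4

theorem Rel_mul {α β : MulAut (PSL2 F)} {τ τ' : RingAut F} (h : Rel α τ) (h' : Rel β τ') :
    Rel (α * β) (τ * τ') := by
  obtain ⟨s, c, hc, hs⟩ := h
  obtain ⟨s', c', hc', hs'⟩ := h'
  refine ⟨α s' * s, c * τ c', mul_ne_zero hc (by simpa using hc'), fun x => ?_⟩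
  rw [MulAut.mul_apply, hs', map_mul, map_mul, map_inv, hs, map_mul, RingAut.mul_apply, mul_assoc c]
  group

/-- field automorphism part -/
noncomputable def sigma : MulAut (PSL2 F) →* RingAut F :=
  MonoidHom.mk' (fun α => (Rel_ex α).choose)
    (fun α β => Rel_unique (Rel_ex (α * β)).choose_spec
      (Rel_mul (Rel_ex α).choose_spec (Rel_ex β).choose_spec))

theorem sigma_spec (α : MulAut (PSL2 F)) : Rel α (sigma α) := (Rel_ex α).choose_spec

theorem sigma_conj (g : PSL2 F) : sigma (MulAut.conj g) = 1 := by
  refine Rel_unique (sigma_spec _) ⟨g, 1, one_ne_zero, fun x => ?_⟩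
  rw [one_mul]
  rfl

/-- diagonal type -/
def Dg (α : MulAut (PSL2 F)) (c : F) : Prop :=
  c ≠ 0 ∧ ∃ s, ∀ x, α (u x) = s * u (c * x) * s⁻¹ ∧ α (v x) = s * v (x / c) * s⁻¹

theorem Dg_ex {α : MulAut (PSL2 F)} (h : sigma α = 1) : ∃ c, Dg α c := by
  have h0 := sigma_spec α
  rw [h] at h0
  obtain ⟨s0, c, hc, hs0⟩ := h0
  change ∀ x, α (u x) = s0 * u (c * x) * s0⁻¹ at hs0
  obtain ⟨P', hP'⟩ := aut_Q α v_one_ne (v_mem (F := F) 1)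
  have h1 := zact.conj_Q s0⁻¹ ((hP' _).1 (v_mem 1))
  have hz : ∃ z : F, s0⁻¹ • P' = ((io z : Kb F) : PX F) := by
    rcases rat_pt (conj_ne (by simp)) h1 with h2 | h2
    · exfalso
      have e : P' = s0 • (∞ : PX F) := by rw [← h2, smul_inv_smul]
      have h3 := zact.conj_Q s0 (u_mem (c * 1))
      rw [← hs0, ← e, ← hP'] at h3
      exact inf_ne_zero (zact.Q_disj h3 (u_mem 1) u_one_ne)
    · exact h2
  obtain ⟨z, hz⟩ := hz
  set s := s0 * u z with hsdef
  have hs : ∀ x, s⁻¹ * α (u x) * s = u (c * x) := by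
    intro x
    rw [hs0, hsdef]
    calc _ = (u z)⁻¹ * (u (c * x) * u z) := by group
      _ = _ := by rw [comm_u]; group
  have hsP : s⁻¹ • P' = ((0 : Kb F) : PX F) := by
    rw [hsdef, mul_inv_rev, mul_smul, hz, ← u_neg, u_smul, ← map_add, add_neg_cancel, map_zero]
  have hsV : ∀ y, y ∈ Qp ((0 : Kb F) : PX F) → s⁻¹ * α y * s ∈ Qp ((0 : Kb F) : PX F) := by
    intro y hy
    have := zact.conj_Q s⁻¹ ((hP' _).1 hy)
    rwa [hsP, inv_inv] at this
  choose f hf using fun x => mem_Q_zero.1 (hsV _ (v_mem x))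
  have key : ∀ t, f t = t / c := by
    intro t
    by_cases ht : t = 0
    · subst ht
      rw [zero_div]
      apply v_inj
      rw [← hf, v_zero]; simp
    have hft : f t ≠ 0 := by
      intro h0
      have := hf t
      rw [h0, v_zero, mul_eq_one_iff_eq_inv, inv_mul_eq_iff_eq_mul, mul_inv_cancel] at this
      exact ht (by simpa using this)
    have h3 := zact.conj_Q (u (-(1 / t)) * v t) (u_mem 1)
    rw [(uv_zero ht).2 rfl] at h3
    have h4 := hsV _ h3
    have h5 : s⁻¹ * α (u (-(1 / t)) * v t * u 1 * (u (-(1 / t)) * v t)⁻¹) * s =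
        (u (c * -(1 / t)) * v (f t)) * u (c * 1) * (u (c * -(1 / t)) * v (f t))⁻¹ := by
      rw [← hs, ← hs, ← hf]
      simp only [map_mul, map_inv]
      group
    rw [h5] at h4
    have h6 := zact.conj_Q (u (c * -(1 / t)) * v (f t)) (u_mem (c * 1))
    have h7 := zact.Q_disj h4 h6 (conj_ne (by simpa using hc))
    rw [uv_zero hft] at h7
    field_simp at h7 ⊢
    linear_combination -h7
  refine ⟨c, hc, s, fun x => ⟨?_, ?_⟩⟩
  · rw [← hs]; group
  · rw [← key, ← hf]; group

theorem Dg_mul {α β : MulAut (PSL2 F)} {c c' : F} (h : Dg α c) (h' : Dg β c') : Dg (α * β) (c * c') := by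
  obtain ⟨hc, s, hs⟩ := h
  obtain ⟨hc', s', hs'⟩ := h'
  refine ⟨mul_ne_zero hc hc', α s' * s, fun x => ⟨?_, ?_⟩⟩
  · rw [MulAut.mul_apply, (hs' x).1, map_mul, map_mul, map_inv, (hs _).1, mul_assoc c]
    group
  · rw [MulAut.mul_apply, (hs' x).2, map_mul, map_mul, map_inv, (hs _).2, div_div, mul_comm c' c]
    group

theorem Dg_sq {α : MulAut (PSL2 F)} {c : F} (h : Dg α c) (hsq : IsSquare c) :
    α ∈ (MulAut.conj : PSL2 F →* _).range := by
  obtain ⟨hc, s, hs⟩ := h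
  obtain ⟨a, rfl⟩ := hsq
  have ha : a ≠ 0 := by rintro rfl; simp at hc
  refine ⟨s * hh (Units.mk0 a ha), ?_⟩
  have h1 : (MulAut.conj (s * hh (Units.mk0 a ha))).toMonoidHom.eqLocus α.toMonoidHom = ⊤ := by
    apply gen_uv
    · intro x
      change s * hh (Units.mk0 a ha) * u x * (s * hh (Units.mk0 a ha))⁻¹ = α (u x)
      have e := hh_u (Units.mk0 a ha) x
      rw [Units.val_mk0] at e
      rw [(hs x).1, ← sq, ← e]
      group
    · intro x
      change s * hh (Units.mk0 a ha) * v x * (s * hh (Units.mk0 a ha))⁻¹ = α (v x)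
      have e := hh_v (Units.mk0 a ha) x
      rw [Units.val_mk0] at e
      rw [(hs x).2, ← sq, ← e]
      group
  ext g
  have : g ∈ (MulAut.conj (s * hh (Units.mk0 a ha))).toMonoidHom.eqLocus α.toMonoidHom :=
    h1 ▸ Subgroup.mem_top g
  exact this

theorem sq_mul {c c' : F} (hc : ¬ IsSquare c) (hc' : ¬ IsSquare c') : IsSquare (c * c') := by
  classical
  by_cases h2 : ringChar F = 2
  · exact FiniteField.isSquare_of_char_two h2 _
  · have h0 : c * c' ≠ 0 := mul_ne_zero (fun h => hc (by simp [h])) (fun h => hc' (by simp [h]))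
    rw [← quadraticChar_one_iff_isSquare h0, map_mul, quadraticChar_neg_one_iff_not_isSquare.2 hc,
      quadraticChar_neg_one_iff_not_isSquare.2 hc']
    norm_num

theorem outer_mul {α β : MulAut (PSL2 F)} (h : sigma α = 1) (h' : sigma β = 1)
    (hα : α ∉ (MulAut.conj : PSL2 F →* _).range) (hβ : β ∉ (MulAut.conj : PSL2 F →* _).range) :
    α * β ∈ (MulAut.conj : PSL2 F →* _).range := by
  obtain ⟨c, hc⟩ := Dg_ex h
  obtain ⟨c', hc'⟩ := Dg_ex h'
  exact Dg_sq (Dg_mul hc hc') (sq_mul (fun e => hα (Dg_sq hc e)) (fun e => hβ (Dg_sq hc' e)))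

theorem cyc_aut : IsCyclic (RingAut F) := by
  have hp : (ringChar F).Prime := CharP.prime_ringChar F
  have : Fact (ringChar F).Prime := ⟨hp⟩
  letI : Algebra (ZMod (ringChar F)) F := ZMod.algebra _ _
  have : IsCyclic (Gal(F/ZMod (ringChar F))) := inferInstance
  let f : Gal(F/ZMod (ringChar F)) →* RingAut F :=
    MonoidHom.mk' (fun e => e.toRingEquiv) (fun _ _ => rfl)
  refine isCyclic_of_surjective f ?_
  intro τ
  refine ⟨AlgEquiv.ofRingEquiv (f := τ) ?_, rfl⟩
  intro r
  obtain ⟨n, rfl⟩ := ZMod.natCast_zmod_surjective r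
  simp

end PS

set_option linter.unusedSectionVars false

theorem cyc_lift {B C : Type*} [Group B] [Group C] [IsCyclic C] (f : B →* C) (K : Subgroup B) :
    ∃ k1 ∈ K, ∀ k ∈ K, ∃ n : ℤ, f k = f k1 ^ n := by
  obtain ⟨⟨g, hg⟩, hgen⟩ := IsCyclic.exists_generator (α := K.map f)
  obtain ⟨k1, hk1, rfl⟩ := hg
  refine ⟨k1, hk1, fun k hk => ?_⟩
  obtain ⟨n, hn⟩ := hgen ⟨f k, Subgroup.mem_map_of_mem f hk⟩
  exact ⟨n, (congrArg Subtype.val hn).symm⟩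

theorem two_lift {A C : Type*} [Group A] [Group C] [IsCyclic C] (σ : A →* C) (K : Subgroup (A × A)) :
    ∃ k1 ∈ K, ∃ k2 ∈ K, ∀ N : Subgroup (A × A), k1 ∈ N → k2 ∈ N →
      (∀ k ∈ K, σ k.1 = 1 → σ k.2 = 1 → k ∈ N) → K ≤ N := by
  obtain ⟨k1, hk1, h1⟩ := cyc_lift (σ.comp (MonoidHom.fst A A)) K
  obtain ⟨k2, ⟨hk2, hk2'⟩, h2⟩ := cyc_lift (σ.comp (MonoidHom.snd A A)) (K ⊓ (σ.comp (MonoidHom.fst A A)).ker)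
  refine ⟨k1, hk1, k2, hk2, fun N hN1 hN2 hN k hk => ?_⟩
  have hk2'' : σ k2.1 = 1 := hk2'
  obtain ⟨n, hn⟩ := h1 k hk
  have hn' : σ k.1 = σ k1.1 ^ n := hn
  have ha : k1 ^ (-n) * k ∈ K := mul_mem (zpow_mem hk1 _) hk
  have hb : σ (k1 ^ (-n) * k).1 = 1 := by simp [hn']
  obtain ⟨m, hm⟩ := h2 (k1 ^ (-n) * k) ⟨ha, hb⟩
  have hm' : σ (k1 ^ (-n) * k).2 = σ k2.2 ^ m := hm
  have hc := hN (k2 ^ (-m) * (k1 ^ (-n) * k)) (K.mul_mem (K.zpow_mem hk2 _) ha)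
    (by rw [Prod.fst_mul, map_mul, hb]; simp [hk2'']) (by rw [Prod.snd_mul, map_mul, hm']; simp)
  have : k = k1 ^ n * (k2 ^ m * (k2 ^ (-m) * (k1 ^ (-n) * k))) := by simp
  rw [this]
  exact mul_mem (zpow_mem hN1 _) (mul_mem (zpow_mem hN2 _) hc)

section
variable {A C W : Type*} [Group A] [Group C] [Group W] [IsCyclic C] (σ : A →* C)
    (I : Subgroup A)

theorem full_of_pair (hIσ : ∀ a ∈ I, σ a = 1)
    (hI : ∀ a b, σ a = 1 → σ b = 1 → a ∉ I → b ∉ I → a * b ∈ I)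
    (N : Subgroup (A × A)) (hN : I.prod I ≤ N) (m m' : A × A) (hm : m ∈ N) (hm' : m' ∈ N)
    (h1 : σ m.1 = 1) (h2 : m.1 ∉ I) (h3 : m.2 ∈ I)
    (h4 : σ m'.2 = 1) (h5 : m'.2 ∉ I) (h6 : m'.1 ∈ I) (k : A × A) (hk1 : σ k.1 = 1) (hk2 : σ k.2 = 1) :
    k ∈ N := by
  have key : ∀ k : A × A, σ k.1 = 1 → σ k.2 = 1 → k.1 ∈ I → k ∈ N := by
    intro k hk1 hk2 hk3
    by_cases hk4 : k.2 ∈ I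
    · exact hN ⟨hk3, hk4⟩
    · rw [← Subgroup.mul_mem_cancel_left N hm']
      exact hN ⟨mul_mem h6 hk3, hI _ _ h4 hk2 h5 hk4⟩
  by_cases hk3 : k.1 ∈ I
  · exact key k hk1 hk2 hk3
  · rw [← Subgroup.mul_mem_cancel_left N hm]
    refine key _ ?_ ?_ (hI _ _ h1 hk1 h2 hk3)
    · rw [Prod.fst_mul, map_mul, h1, hk1, mul_one]
    · rw [Prod.snd_mul, map_mul, hIσ _ h3, hk2, mul_one]

theorem four_gen [I.Normal] (hIσ : ∀ a ∈ I, σ a = 1)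
    (hI : ∀ a b, σ a = 1 → σ b = 1 → a ∉ I → b ∉ I → a * b ∈ I)
    (j : A × A →* W) (w : W)
    (hw : ∀ a b, w * j (a, b) * w⁻¹ = j (b, a)) (hW : ∀ φ, (∃ k, φ = j k) ∨ ∃ k, φ = w * j k)
    (H : Subgroup W) : ∃ T : Finset W, T.card ≤ 4 ∧ (T : Set W) ⊆ H ∧
      H ≤ Subgroup.closure (T : Set W) ⊔ (I.prod I).map j := by
  classical
  obtain ⟨k1, hk1, k2, hk2, hK⟩ := two_lift σ (H.comap j)
  have hJ : ∀ N : Subgroup W, I.prod I ≤ (N ⊔ (I.prod I).map j).comap j := by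
    intro N
    rw [← Subgroup.map_le_iff_le_comap]
    exact le_sup_right
  have hmem : ∀ (T : Finset W) (k : A × A), j k ∈ T → k ∈ (Subgroup.closure (T : Set W) ⊔ (I.prod I).map j).comap j :=
    fun T k hk => Subgroup.mem_sup_left (Subgroup.subset_closure hk)
  by_cases hsw : ∃ k, w * j k ∈ H
  · obtain ⟨⟨a, b⟩, ht⟩ := hsw
    have red : ∀ N : Subgroup W, w * j (a, b) ∈ N → H.comap j ≤ N.comap j → H ≤ N := by
      intro N h1 h2 φ hφ
      rcases hW φ with ⟨k, rfl⟩ | ⟨k, rfl⟩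
      · exact h2 hφ
      · have e : w * j k = (w * j (a, b)) * j ((a, b)⁻¹ * k) := by rw [map_mul, map_inv]; group
        rw [e] at hφ ⊢
        exact mul_mem h1 (h2 ((Subgroup.mul_mem_cancel_left H ht).1 hφ))
    have tc : ∀ m : A × A, (w * j (a, b)) * j m * (w * j (a, b))⁻¹ = j (b * m.2 * b⁻¹, a * m.1 * a⁻¹) := by
      intro m
      rw [← hw (a * m.1 * a⁻¹)]
      have : ((a * m.1 * a⁻¹, b * m.2 * b⁻¹) : A × A) = (a, b) * m * (a, b)⁻¹ := rfl
      rw [this, map_mul, map_mul, map_inv]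
      group
    have sc : ∀ x : A, σ x = 1 → ∀ y, σ (y * x * y⁻¹) = 1 := by
      intro x hx y
      simp [hx]
    have ic : ∀ x y : A, y * x * y⁻¹ ∈ I ↔ x ∈ I := by
      intro x y
      refine ⟨fun h => ?_, fun h => Subgroup.Normal.conj_mem inferInstance x h y⟩
      have := Subgroup.Normal.conj_mem (inferInstanceAs I.Normal) _ h y⁻¹
      simpa [mul_assoc] using this
    -- choose the third element
    have fin : ∀ m : A × A, m ∈ H.comap j →
        (∀ N : Subgroup W, (I.prod I).map j ≤ N → w * j (a, b) ∈ N → j m ∈ N →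
          ∀ k ∈ H.comap j, σ k.1 = 1 → σ k.2 = 1 → j k ∈ N) →
        ∃ T : Finset W, T.card ≤ 4 ∧ (T : Set W) ⊆ H ∧
          H ≤ Subgroup.closure (T : Set W) ⊔ (I.prod I).map j := by
      intro m hm hN
      refine ⟨{w * j (a, b), j k1, j k2, j m}, Finset.card_le_four, ?_, ?_⟩
      · intro x hx
        simp only [Finset.coe_insert, Finset.coe_singleton, Set.mem_insert_iff, Set.mem_singleton_iff] at hx
        rcases hx with rfl | rfl | rfl | rfl
        · exact ht
        · exact hk1
        · exact hk2
        · exact hm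
      · apply red
        · exact Subgroup.mem_sup_left (Subgroup.subset_closure (by simp))
        · apply hK
          · exact hmem _ _ (by simp)
          · exact hmem _ _ (by simp)
          · exact hN _ le_sup_right (Subgroup.mem_sup_left (Subgroup.subset_closure (by simp)))
              (Subgroup.mem_sup_left (Subgroup.subset_closure (by simp)))
    by_cases hA : ∃ m ∈ H.comap j, σ m.1 = 1 ∧ σ m.2 = 1 ∧ (m.1 ∈ I ∧ m.2 ∉ I ∨ m.1 ∉ I ∧ m.2 ∈ I)
    · obtain ⟨m, hm, hs1, hs2, hm'⟩ := hA
      apply fin m hm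
      intro N hN htN hmN k hk hk1 hk2
      have htm : j (b * m.2 * b⁻¹, a * m.1 * a⁻¹) ∈ N := by
        rw [← tc]
        exact mul_mem (mul_mem htN hmN) (inv_mem htN)
      have hN' : I.prod I ≤ N.comap j := by rwa [← Subgroup.map_le_iff_le_comap]
      rcases hm' with ⟨h1, h2⟩ | ⟨h1, h2⟩
      · exact full_of_pair σ I hIσ hI (N.comap j) hN' (b * m.2 * b⁻¹, a * m.1 * a⁻¹) m htm hmN
          (sc _ hs2 _) (by simpa only [ic] using h2) (by simpa only [ic] using h1) hs2 h2 h1 k hk1 hk2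
      · exact full_of_pair σ I hIσ hI (N.comap j) hN' m (b * m.2 * b⁻¹, a * m.1 * a⁻¹) hmN htm
          hs1 h1 h2 (sc _ hs1 _) (by simpa only [ic] using h1) (by simpa only [ic] using h2) k hk1 hk2
    · push Not at hA
      by_cases hB : ∃ m ∈ H.comap j, σ m.1 = 1 ∧ σ m.2 = 1 ∧ m.1 ∉ I
      · obtain ⟨m, hm, hs1, hs2, hm'⟩ := hB
        have hm2 := (hA m hm hs1 hs2).2 hm'
        apply fin m hm
        intro N hN htN hmN k hk hk1 hk2
        have hN' : I.prod I ≤ N.comap j := by rwa [← Subgroup.map_le_iff_le_comap]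
        change k ∈ N.comap j
        by_cases h1 : k.1 ∈ I
        · exact hN' ⟨h1, (hA k hk hk1 hk2).1 h1⟩
        · rw [← Subgroup.mul_mem_cancel_left (N.comap j) hmN]
          exact hN' ⟨hI _ _ hs1 hk1 hm' h1, hI _ _ hs2 hk2 hm2 ((hA k hk hk1 hk2).2 h1)⟩
      · push Not at hB
        apply fin 1 (one_mem _)
        intro N hN htN hmN k hk hk1 hk2
        have hN' : I.prod I ≤ N.comap j := by rwa [← Subgroup.map_le_iff_le_comap]
        exact hN' ⟨hB k hk hk1 hk2, (hA k hk hk1 hk2).1 (hB k hk hk1 hk2)⟩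
  · push Not at hsw
    have ex1 : ∃ m ∈ H.comap j, ∀ N : Subgroup (A × A), I.prod I ≤ N → m ∈ N →
        (∀ k ∈ H.comap j, σ k.1 = 1 → σ k.2 = 1 → k.1 ∈ I → k ∈ N) →
        (∀ k ∈ H.comap j, σ k.1 = 1 → σ k.2 = 1 → k ∈ N) := by
      by_cases hB : ∃ m ∈ H.comap j, σ m.1 = 1 ∧ σ m.2 = 1 ∧ m.1 ∉ I
      · obtain ⟨m, hm, hs1, hs2, hm'⟩ := hB
        refine ⟨m, hm, fun N hN hmN h k hk hk1 hk2 => ?_⟩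
        by_cases h1 : k.1 ∈ I
        · exact h k hk hk1 hk2 h1
        · rw [← Subgroup.mul_mem_cancel_left N hmN]
          exact h _ (mul_mem hm hk) (by simp [hs1, hk1]) (by simp [hs2, hk2]) (hI _ _ hs1 hk1 hm' h1)
      · push Not at hB
        exact ⟨1, one_mem _, fun N hN _ h k hk hk1 hk2 => h k hk hk1 hk2 (hB k hk hk1 hk2)⟩
    have ex2 : ∃ m ∈ H.comap j, ∀ N : Subgroup (A × A), I.prod I ≤ N → m ∈ N →
        (∀ k ∈ H.comap j, σ k.1 = 1 → σ k.2 = 1 → k.1 ∈ I → k ∈ N) := by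
      by_cases hB : ∃ m ∈ H.comap j, σ m.1 = 1 ∧ σ m.2 = 1 ∧ m.1 ∈ I ∧ m.2 ∉ I
      · obtain ⟨m, hm, hs1, hs2, hm1, hm2⟩ := hB
        refine ⟨m, hm, fun N hN hmN k hk hk1 hk2 hk3 => ?_⟩
        by_cases h1 : k.2 ∈ I
        · exact hN ⟨hk3, h1⟩
        · rw [← Subgroup.mul_mem_cancel_left N hmN]
          exact hN ⟨mul_mem hm1 hk3, hI _ _ hs2 hk2 hm2 h1⟩
      · push Not at hB
        exact ⟨1, one_mem _, fun N hN _ k hk hk1 hk2 hk3 => hN ⟨hk3, hB k hk hk1 hk2 hk3⟩⟩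
    obtain ⟨m, hm, hmN⟩ := ex1
    obtain ⟨m', hm', hmN'⟩ := ex2
    refine ⟨{j k1, j k2, j m, j m'}, Finset.card_le_four, ?_, ?_⟩
    · intro x hx
      simp only [Finset.coe_insert, Finset.coe_singleton, Set.mem_insert_iff, Set.mem_singleton_iff] at hx
      rcases hx with rfl | rfl | rfl | rfl
      · exact hk1
      · exact hk2
      · exact hm
      · exact hm'
    · intro φ hφ
      rcases hW φ with ⟨k, rfl⟩ | ⟨k, rfl⟩
      · have h1 := hK ((Subgroup.closure (({j k1, j k2, j m, j m'} : Finset W) : Set W) ⊔ (I.prod I).map j).comap j)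
          (hmem _ _ (by simp)) (hmem _ _ (by simp))
          (hmN _ (hJ _) (hmem _ _ (by simp)) (hmN' _ (hJ _) (hmem _ _ (by simp))))
        exact h1 hφ
      · exact absurd hφ (hsw k)

end

namespace PS
open MulAction OnePoint

variable {F : Type} [Field F] [Fintype F]

theorem indec (f1 f2 : PSL2 F →* PSL2 F) (hc : ∀ a b, f1 a * f2 b = f2 b * f1 a)
    (hs : ∀ g, ∃ a b, g = f1 a * f2 b) : f1 = 1 ∨ f2 = 1 := by
  have key : ∀ (f1 f2 : PSL2 F →* PSL2 F), (∀ a b, f1 a * f2 b = f2 b * f1 a) →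
      (∀ g, ∃ a b, g = f1 a * f2 b) → (∃ a, f1 a ∈ Qp (∞ : PX F) ∧ f1 a ≠ 1) → f2 = 1 := by
    rintro f1 f2 hc hs ⟨a, ha, ha1⟩
    have h1 : ∀ b, f2 b ∈ Qp (∞ : PX F) := fun b => zact.cent ha ha1 (hc _ _).symm
    by_contra hne
    have : ∃ b, f2 b ≠ 1 := by
      by_contra h
      push Not at h
      exact hne (MonoidHom.ext h)
    obtain ⟨b, hb⟩ := this
    apply no_fix (∞ : PX F)
    rw [eq_top_iff]
    rintro g -
    obtain ⟨x, z, rfl⟩ := hs g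
    rw [mem_stabilizer_iff, fix_iff hb (h1 b)]
    have : f1 x * f2 z * f2 b * (f1 x * f2 z)⁻¹ = f2 (z * b * z⁻¹) := by
      calc _ = f1 x * f2 (z * b * z⁻¹) * (f1 x)⁻¹ := by simp only [map_mul, map_inv]; group
        _ = _ := by rw [hc]; group
    rw [this]
    exact h1 _
  obtain ⟨a, b, hab⟩ := hs (u 1)
  have ha : f1 a ∈ Qp (∞ : PX F) := by
    refine zact.cent (u_mem 1) u_one_ne ?_
    rw [hab]
    calc f1 a * (f1 a * f2 b) = f1 a * (f2 b * f1 a) := by rw [hc]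
      _ = _ := by group
  have hb : f2 b ∈ Qp (∞ : PX F) := by
    refine zact.cent (u_mem 1) u_one_ne ?_
    rw [hab]
    calc f2 b * (f1 a * f2 b) = (f2 b * f1 a) * f2 b := by group
      _ = _ := by rw [hc]
  by_cases ha1 : f1 a = 1
  · left
    refine key f2 f1 (fun x y => (hc y x).symm) (fun g => ?_) ⟨b, hb, ?_⟩
    · obtain ⟨x, y, h⟩ := hs g
      exact ⟨y, x, by rw [h, hc]⟩
    · intro h
      rw [ha1, h, one_mul] at hab
      exact u_one_ne hab
  · right
    exact key f1 f2 hc hs ⟨a, ha, ha1⟩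

/-- product automorphisms -/
def jj : MulAut (PSL2 F) × MulAut (PSL2 F) →* MulAut (PSL2 F × PSL2 F) :=
  MonoidHom.mk' (fun k => MulEquiv.prodCongr k.1 k.2) (fun _ _ => rfl)

/-- the swap -/
def ww : MulAut (PSL2 F × PSL2 F) := MulEquiv.prodComm

@[simp] theorem jj_apply (k : MulAut (PSL2 F) × MulAut (PSL2 F)) (x : PSL2 F × PSL2 F) :
    jj k x = (k.1 x.1, k.2 x.2) := rfl

@[simp] theorem ww_apply (x : PSL2 F × PSL2 F) : ww x = (x.2, x.1) := rfl

theorem ww_conj (a b : MulAut (PSL2 F)) : ww * jj (a, b) * ww⁻¹ = jj (b, a) := rfl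

theorem aut_prod (φ : MulAut (PSL2 F × PSL2 F)) : (∃ k, φ = jj k) ∨ ∃ k, φ = ww * jj k := by
  let f1 := ((MonoidHom.fst _ _).comp φ.toMonoidHom).comp (MonoidHom.inl (PSL2 F) (PSL2 F))
  let f2 := ((MonoidHom.fst _ _).comp φ.toMonoidHom).comp (MonoidHom.inr (PSL2 F) (PSL2 F))
  let g1 := ((MonoidHom.snd _ _).comp φ.toMonoidHom).comp (MonoidHom.inl (PSL2 F) (PSL2 F))
  let g2 := ((MonoidHom.snd _ _).comp φ.toMonoidHom).comp (MonoidHom.inr (PSL2 F) (PSL2 F))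
  have hdec : ∀ a b, φ (a, b) = φ (a, 1) * φ (1, b) := by
    intro a b
    rw [← map_mul]; simp
  have hcom : ∀ a b, φ (a, 1) * φ (1, b) = φ (1, b) * φ (a, 1) := by
    intro a b
    rw [← map_mul, ← map_mul]; simp
  have hF := indec f1 f2 (fun a b => congrArg Prod.fst (hcom a b)) (fun g => by
    obtain ⟨⟨a, b⟩, h⟩ := φ.surjective (g, 1)
    exact ⟨a, b, by rw [hdec] at h; exact (congrArg Prod.fst h).symm⟩)
  have hG := indec g1 g2 (fun a b => congrArg Prod.snd (hcom a b)) (fun g => by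
    obtain ⟨⟨a, b⟩, h⟩ := φ.surjective (1, g)
    exact ⟨a, b, by rw [hdec] at h; exact (congrArg Prod.snd h).symm⟩)
  have hφ : ∀ a b, φ (a, b) = (f1 a * f2 b, g1 a * g2 b) := fun a b => hdec a b
  have hinj1 : ∀ a, f1 a = 1 → g1 a = 1 → a = 1 := by
    intro a h1 h2
    have := hφ a 1
    rw [h1, h2, map_one, map_one] at this
    have h3 : φ (a, 1) = 1 := by rw [this]; simp
    rw [EmbeddingLike.map_eq_one_iff] at h3
    exact congrArg Prod.fst h3
  have hinj2 : ∀ a, f2 a = 1 → g2 a = 1 → a = 1 := by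
    intro a h1 h2
    have := hφ 1 a
    rw [h1, h2, map_one, map_one] at this
    have h3 : φ (1, a) = 1 := by rw [this]; simp
    rw [EmbeddingLike.map_eq_one_iff] at h3
    exact congrArg Prod.snd h3
  have bij : ∀ f : PSL2 F →* PSL2 F, (∀ a, f a = 1 → a = 1) → Function.Bijective f := by
    intro f hf
    exact Finite.injective_iff_bijective.1 ((injective_iff_map_eq_one f).2 hf)
  rcases hF with hF | hF <;> rcases hG with hG | hG
  · exact absurd (hinj1 (u 1) (by rw [hF]; rfl) (by rw [hG]; rfl)) u_one_ne
  · right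
    refine ⟨(MulEquiv.ofBijective g1 (bij g1 fun a h => hinj1 a (by rw [hF]; rfl) h),
      MulEquiv.ofBijective f2 (bij f2 fun a h => hinj2 a h (by rw [hG]; rfl))), ?_⟩
    ext1 ⟨a, b⟩
    have e1 := DFunLike.congr_fun hF a
    have e2 := DFunLike.congr_fun hG b
    rw [hφ, e1, e2]
    simp
  · left
    refine ⟨(MulEquiv.ofBijective f1 (bij f1 fun a h => hinj1 a h (by rw [hG]; rfl)),
      MulEquiv.ofBijective g2 (bij g2 fun a h => hinj2 a (by rw [hF]; rfl) h)), ?_⟩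
    ext1 ⟨a, b⟩
    have e1 := DFunLike.congr_fun hF b
    have e2 := DFunLike.congr_fun hG a
    rw [hφ, e1, e2]
    simp
  · exact absurd (hinj2 (u 1) (by rw [hF]; rfl) (by rw [hG]; rfl)) u_one_ne

theorem inn_prod : ((MulAut.conj : PSL2 F →* _).range.prod (MulAut.conj : PSL2 F →* _).range).map jj =
    (MulAut.conj : (PSL2 F × PSL2 F) →* _).range := by
  ext φ
  constructor
  · rintro ⟨⟨_, _⟩, ⟨⟨a, rfl⟩, ⟨b, rfl⟩⟩, rfl⟩
    exact ⟨(a, b), rfl⟩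
  · rintro ⟨⟨a, b⟩, rfl⟩
    exact ⟨(MulAut.conj a, MulAut.conj b), ⟨⟨a, rfl⟩, ⟨b, rfl⟩⟩, rfl⟩

theorem four (H : Subgroup (MulAut (PSL2 F × PSL2 F))) :
    ∃ T : Finset (MulAut (PSL2 F × PSL2 F)), T.card ≤ 4 ∧ (T : Set (MulAut (PSL2 F × PSL2 F))) ⊆ H ∧
      H ≤ Subgroup.closure (T : Set (MulAut (PSL2 F × PSL2 F))) ⊔ (MulAut.conj : (PSL2 F × PSL2 F) →* _).range := by
  have := cyc_aut (F := F)
  have hn : (MulAut.conj : PSL2 F →* _).range.Normal := by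
    constructor
    rintro _ ⟨g, rfl⟩ α
    refine ⟨α g, ?_⟩
    ext x
    simp
  have h := four_gen (sigma (F := F)) (MulAut.conj : PSL2 F →* _).range
    (by rintro _ ⟨g, rfl⟩; exact sigma_conj g) (fun a b h1 h2 h3 h4 => outer_mul h1 h2 h3 h4)
    jj ww ww_conj aut_prod H
  rwa [inn_prod] at h

end PS

set_option linter.unusedSectionVars false

/-- n-generated -/
def Gn {W : Type*} [Group W] (H : Subgroup W) (n : ℕ) : Prop :=
  ∃ T : Finset W, T.card ≤ n ∧ Subgroup.closure (T : Set W) = H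

theorem Gn.minGen_le {W : Type*} [Group W] {H : Subgroup W} {n : ℕ} (h : Gn H n) : minGen ↥H ≤ n := by
  classical
  obtain ⟨T, hT, rfl⟩ := h
  have h1 : (T.subtype (fun x => x ∈ Subgroup.closure (T : Set W))).card ≤ n := by
    rw [Finset.card_subtype]
    exact (Finset.card_filter_le _ _).trans hT
  refine le_trans (Nat.sInf_le ⟨T.subtype (fun x => x ∈ Subgroup.closure (T : Set W)), rfl, ?_⟩) h1
  rw [← Subgroup.closure_closure_coe_preimage (k := (T : Set W))]
  congr 1
  ext x
  simp

theorem Gn.two {W : Type*} [Group W] {H : Subgroup W} {x y : W} (h : Subgroup.closure {x, y} = H) :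
    Gn H 2 := by
  classical
  exact ⟨{x, y}, Finset.card_le_two, by simpa using h⟩

theorem Gn.map {W V : Type*} [Group W] [Group V] {H : Subgroup W} {n : ℕ} (h : Gn H n) (f : W →* V) :
    Gn (H.map f) n := by
  classical
  obtain ⟨T, hT, rfl⟩ := h
  refine ⟨T.image f, Finset.card_image_le.trans hT, ?_⟩
  rw [MonoidHom.map_closure, Finset.coe_image]

theorem Gn.sup {W : Type*} [Group W] {H K : Subgroup W} {n m : ℕ} (h : Gn H n) (h' : Gn K m) :
    Gn (H ⊔ K) (n + m) := by
  classical
  obtain ⟨T, hT, rfl⟩ := h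
  obtain ⟨T', hT', rfl⟩ := h'
  refine ⟨T ∪ T', (Finset.card_union_le _ _).trans (by omega), ?_⟩
  rw [Finset.coe_union, Subgroup.closure_union]

theorem Gn.prod {W V : Type*} [Group W] [Group V] {H : Subgroup W} {K : Subgroup V} {n m : ℕ}
    (h : Gn H n) (h' : Gn K m) : Gn (H.prod K) (n + m) := by
  have := (h.map (MonoidHom.inl W V)).sup (h'.map (MonoidHom.inr W V))
  convert this using 1
  apply le_antisymm
  · rintro ⟨a, b⟩ ⟨ha, hb⟩
    have e : ((a, b) : W × V) = MonoidHom.inl W V a * MonoidHom.inr W V b := by simp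
    rw [e]
    exact mul_mem (Subgroup.mem_sup_left (Subgroup.mem_map_of_mem _ ha))
      (Subgroup.mem_sup_right (Subgroup.mem_map_of_mem _ hb))
  · rw [sup_le_iff]
    constructor
    · rintro _ ⟨a, ha, rfl⟩
      exact ⟨ha, one_mem _⟩
    · rintro _ ⟨a, ha, rfl⟩
      exact ⟨one_mem _, ha⟩

theorem Gn.ext {W : Type*} [Group W] {H J : Subgroup W} [J.Normal] {T : Finset W} {n m : ℕ}
    (hT : T.card ≤ n) (hTH : (T : Set W) ⊆ H) (hH : H ≤ Subgroup.closure (T : Set W) ⊔ J)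
    (h : Gn (H ⊓ J) m) : Gn H (n + m) := by
  have h1 : Gn (Subgroup.closure (T : Set W)) n := ⟨T, hT, rfl⟩
  have h2 := h1.sup h
  convert h2 using 1
  have hcl : Subgroup.closure (T : Set W) ≤ H := (Subgroup.closure_le _).2 hTH
  apply le_antisymm
  · intro x hx
    obtain ⟨c, hc, y, hy, rfl⟩ := Subgroup.mem_sup_of_normal_right.1 (hH hx)
    exact mul_mem (Subgroup.mem_sup_left hc)
      (Subgroup.mem_sup_right ⟨(Subgroup.mul_mem_cancel_left H (hcl hc)).1 hx, hy⟩)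
  · exact sup_le hcl inf_le_left

theorem Gn.fib {W V : Type*} [Group W] [Group V] {M : Subgroup (W × V)} {n m : ℕ}
    (h : Gn (M.comap (MonoidHom.inl W V)) n) (h' : Gn (M.map (MonoidHom.snd W V)) m) : Gn M (n + m) := by
  classical
  obtain ⟨T', hT', he⟩ := h'
  have hl : ∀ t : V, ∃ x : W × V, t ∈ T' → x ∈ M ∧ x.2 = t := by
    intro t
    by_cases ht : t ∈ T'
    · have : t ∈ M.map (MonoidHom.snd W V) := he ▸ Subgroup.subset_closure ht
      obtain ⟨x, hx, e⟩ := this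
      exact ⟨x, fun _ => ⟨hx, e⟩⟩
    · exact ⟨1, fun h => absurd h ht⟩
  choose f hf using hl
  have h2 : Gn (Subgroup.closure ((T'.image f : Finset (W × V)) : Set (W × V))) m :=
    ⟨T'.image f, Finset.card_image_le.trans hT', rfl⟩
  have h3 := (h.map (MonoidHom.inl W V)).sup h2
  convert h3 using 1
  have hcl : Subgroup.closure ((T'.image f : Finset (W × V)) : Set (W × V)) ≤ M := by
    rw [Subgroup.closure_le]
    intro x hx
    rw [Finset.mem_coe, Finset.mem_image] at hx
    obtain ⟨t, ht, rfl⟩ := hx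
    exact (hf t ht).1
  have hmap : M.map (MonoidHom.snd W V) ≤
      (Subgroup.closure ((T'.image f : Finset (W × V)) : Set (W × V))).map (MonoidHom.snd W V) := by
    rw [← he, Subgroup.closure_le]
    intro t ht
    exact ⟨f t, Subgroup.subset_closure (Finset.mem_coe.2 (Finset.mem_image_of_mem f ht)), (hf t ht).2⟩
  apply le_antisymm
  · intro x hx
    obtain ⟨l, hl, e⟩ := hmap (Subgroup.mem_map_of_mem _ hx)
    have e' : l.2 = x.2 := e
    have h4 : x * l⁻¹ = MonoidHom.inl W V (x.1 * l.1⁻¹) := by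
      ext
      · simp
      · simp [e']
    have h5 : x * l⁻¹ ∈ M := mul_mem hx (inv_mem (hcl hl))
    have e2 : x = MonoidHom.inl W V (x.1 * l.1⁻¹) * l := by rw [← h4]; group
    rw [e2]
    refine mul_mem (Subgroup.mem_sup_left (Subgroup.mem_map_of_mem _ ?_)) (Subgroup.mem_sup_right hl)
    rw [Subgroup.mem_comap, ← h4]
    exact h5
  · exact sup_le (Subgroup.map_comap_le _ _) hcl

theorem pair_gen {S : Type*} [Group S] {x y : S} (h : Subgroup.closure {x, y} = ⊤)
    (hc : Nat.Coprime (orderOf x) (orderOf y)) : Gn (⊤ : Subgroup (S × S)) 2 := by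
  refine Gn.two (x := (x, y)) (y := (y, x)) ?_
  set N := Subgroup.closure {(x, y), (y, x)} with hN
  have a1 : (x, y) ∈ N := Subgroup.subset_closure (by simp)
  have a2 : (y, x) ∈ N := Subgroup.subset_closure (by simp)
  obtain ⟨k, hk1, hk2⟩ := Nat.chineseRemainder hc 1 0
  have e1 : x ^ k = x := by
    conv_rhs => rw [← pow_one x]
    exact pow_eq_pow_iff_modEq.2 hk1
  have e2 : y ^ k = 1 := by
    rw [← pow_zero y]
    exact pow_eq_pow_iff_modEq.2 hk2
  have b1 : (x, 1) ∈ N := by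
    have := pow_mem a1 k
    rwa [Prod.pow_mk, e1, e2] at this
  have b2 : (1, x) ∈ N := by
    have := pow_mem a2 k
    rwa [Prod.pow_mk, e1, e2] at this
  have b3 : (1, y) ∈ N := by
    have := mul_mem (inv_mem b1) a1
    simpa using this
  have b4 : (y, 1) ∈ N := by
    have := mul_mem (inv_mem b2) a2
    simpa using this
  have c1 : (⊤ : Subgroup S) ≤ N.comap (MonoidHom.inl S S) := by
    rw [← h, Subgroup.closure_le]
    rintro z (rfl | rfl)
    · exact b1
    · exact b4
  have c2 : (⊤ : Subgroup S) ≤ N.comap (MonoidHom.inr S S) := by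
    rw [← h, Subgroup.closure_le]
    rintro z (rfl | rfl)
    · exact b2
    · exact b3
  rw [eq_top_iff]
  rintro ⟨a, b⟩ -
  have e : ((a, b) : S × S) = MonoidHom.inl S S a * MonoidHom.inr S S b := by simp
  rw [e]
  exact mul_mem (c1 (Subgroup.mem_top a)) (c2 (Subgroup.mem_top b))

namespace PS
open MulAction OnePoint

variable {F : Type} [Field F] [Fintype F]

/-- bad subgroups -/
def Bad (T : Subgroup (PSL2 F)) (P : PX F) : Prop :=
  T ≤ stabilizer (PSL2 F) P ∧ ∃ y ∈ T, y ∈ Qp P ∧ y ≠ 1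

/-- enveloping Borel -/
def beta (T : Subgroup (PSL2 F)) : Subgroup (PSL2 F) :=
  sInf {B | ∃ P, Bad T P ∧ B = stabilizer (PSL2 F) P}

theorem mem_beta {T : Subgroup (PSL2 F)} {g : PSL2 F} : g ∈ beta T ↔ ∀ P, Bad T P → g • P = P := by
  rw [beta, Subgroup.mem_sInf]
  constructor
  · intro h P hP
    exact h _ ⟨P, hP, rfl⟩
  · rintro h _ ⟨P, hP, rfl⟩
    exact h P hP

theorem le_beta (T : Subgroup (PSL2 F)) : T ≤ beta T := by
  intro g hg
  rw [mem_beta]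
  exact fun P hP => hP.1 hg

theorem beta_bad {T : Subgroup (PSL2 F)} {P : PX F} (h : Bad T P) : beta T = stabilizer (PSL2 F) P := by
  ext g
  rw [mem_beta, mem_stabilizer_iff]
  refine ⟨fun h' => h' P h, fun h' P' hP' => ?_⟩
  obtain ⟨hT, y, hy, hyQ, hy1⟩ := h
  have : P' = P := zact.uni_unique hyQ hy1 (hP'.1 hy)
  rw [this, h']

theorem beta_gen (T : Subgroup (PSL2 F)) : Gn (beta T) 2 := by
  by_cases h : ∃ P, Bad T P
  · obtain ⟨P, hP⟩ := h
    rw [beta_bad hP]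
    obtain ⟨hT, y, hy, hyQ, hy1⟩ := hP
    obtain ⟨a, b, hab⟩ := borel hy1 hyQ
    exact Gn.two hab
  · obtain ⟨a, b, hab, -⟩ := gen_S (F := F)
    have : beta T = ⊤ := by
      rw [eq_top_iff]
      rintro g -
      rw [mem_beta]
      exact fun P hP => absurd ⟨P, hP⟩ h
    rw [this]
    exact Gn.two hab

theorem beta_map (α : MulAut (PSL2 F)) (T T' : Subgroup (PSL2 F)) (hT : ∀ t, t ∈ T ↔ α t ∈ T') {g : PSL2 F}
    (hg : g ∈ beta T) : α g ∈ beta T' := by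
  rw [mem_beta] at hg ⊢
  rintro P' ⟨hP', y, hy, hyQ, hy1⟩
  obtain ⟨P, hP⟩ := aut_Q α⁻¹ hy1 hyQ
  have hfix := aut_fix α⁻¹ hy1 hyQ hP
  have hcan : ∀ t, α (α⁻¹ t) = t := fun t => MulAut.apply_inv_self _ α t
  have hcan' : ∀ t, α⁻¹ (α t) = t := fun t => MulAut.inv_apply_self _ α t
  rw [hfix, hcan']
  apply hg
  refine ⟨fun t ht => ?_, α⁻¹ y, ?_, (hP y).1 hyQ, by simpa using hy1⟩
  · have := (hfix (α t)).1 (hP' ((hT t).1 ht))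
    rwa [hcan'] at this
  · rw [hT, hcan]; exact hy

theorem two_gen' (T : Subgroup (PSL2 F)) (h : ∀ P, ¬ Bad T P) : Gn T 2 := by
  rcases zact.two_gen T with ⟨x, y, hxy⟩ | ⟨P, h1, h2⟩
  · exact Gn.two hxy
  · exfalso
    refine h P ⟨h1, ?_⟩
    obtain ⟨y, hy⟩ := Subgroup.ne_bot_iff_exists_ne_one.1 h2
    exact ⟨y.1, y.2.1, y.2.2, fun e => hy (Subtype.ext e)⟩

theorem not_bad {T : Subgroup (PSL2 F)} (h : beta T = ⊤) (P : PX F) : ¬ Bad T P := by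
  intro hP
  rw [beta_bad hP] at h
  exact no_fix P h

theorem beta_inv (H : Subgroup (MulAut (PSL2 F × PSL2 F))) {φ : MulAut (PSL2 F × PSL2 F)} (hφ : φ ∈ H)
    {x : PSL2 F × PSL2 F}
    (hx : x ∈ (beta ((H.comap MulAut.conj).map (MonoidHom.fst _ _))).prod
      (beta ((H.comap MulAut.conj).map (MonoidHom.snd _ _)))) :
    φ x ∈ (beta ((H.comap MulAut.conj).map (MonoidHom.fst _ _))).prod
      (beta ((H.comap MulAut.conj).map (MonoidHom.snd _ _))) := by
  have hM : ∀ (ψ : MulAut (PSL2 F × PSL2 F)) m, ψ ∈ H → m ∈ H.comap MulAut.conj → ψ m ∈ H.comap MulAut.conj := by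
    intro ψ m hψ hm
    rw [Subgroup.mem_comap] at hm ⊢
    have : MulAut.conj (ψ m) = ψ * MulAut.conj m * ψ⁻¹ := by
      ext1 z; simp
    rw [this]
    exact mul_mem (mul_mem hψ hm) (inv_mem hψ)
  have hM' : ∀ m, φ m ∈ H.comap MulAut.conj → m ∈ H.comap MulAut.conj := by
    intro m hm
    have := hM φ⁻¹ _ (inv_mem hφ) hm
    rwa [MulAut.inv_apply_self] at this
  obtain ⟨x1, x2⟩ := x
  obtain ⟨hx1, hx2⟩ := hx
  rcases aut_prod φ with ⟨k, rfl⟩ | ⟨k, rfl⟩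
  · refine ⟨beta_map k.1 _ _ ?_ hx1, beta_map k.2 _ _ ?_ hx2⟩
    · intro t
      constructor
      · rintro ⟨⟨t, b⟩, h, rfl⟩
        exact ⟨jj k (t, b), hM _ _ hφ h, rfl⟩
      · rintro ⟨⟨c, b⟩, h, e⟩
        have e' : c = k.1 t := e
        subst e'
        refine ⟨(t, k.2⁻¹ b), hM' _ ?_, rfl⟩
        simpa using h
    · intro t
      constructor
      · rintro ⟨⟨b, t⟩, h, rfl⟩
        exact ⟨jj k (b, t), hM _ _ hφ h, rfl⟩
      · rintro ⟨⟨b, c⟩, h, e⟩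
        have e' : c = k.2 t := e
        subst e'
        refine ⟨(k.1⁻¹ b, t), hM' _ ?_, rfl⟩
        simpa using h
  · refine ⟨beta_map k.2 _ _ ?_ hx2, beta_map k.1 _ _ ?_ hx1⟩
    · intro t
      constructor
      · rintro ⟨⟨b, t⟩, h, rfl⟩
        exact ⟨ww (jj k (b, t)), hM (ww * jj k) (b, t) hφ h, rfl⟩
      · rintro ⟨⟨c, b⟩, h, e⟩
        have e' : c = k.2 t := e
        subst e'
        refine ⟨(k.1⁻¹ b, t), hM' _ ?_, rfl⟩
        simpa using h
    · intro t
      constructor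
      · rintro ⟨⟨t, b⟩, h, rfl⟩
        exact ⟨ww (jj k (t, b)), hM (ww * jj k) (t, b) hφ h, rfl⟩
      · rintro ⟨⟨b, c⟩, h, e⟩
        have e' : c = k.1 t := e
        subst e'
        refine ⟨(t, k.2⁻¹ b), hM' _ ?_, rfl⟩
        simpa using h

theorem max_dich {G0 : Type*} [Group G0] (G H : Subgroup (MulAut G0)) (hG : (MulAut.conj : G0 →* _).range ≤ G)
    (hHG : H ≤ G) (hH : IsCoatom (H.subgroupOf G)) (W : Subgroup G0) (hMW : H.comap MulAut.conj ≤ W)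
    (hinv : ∀ φ ∈ H, ∀ x ∈ W, φ x ∈ W) : W = ⊤ ∨ H.comap MulAut.conj = W := by
  by_cases h : W ≤ H.comap MulAut.conj
  · right; exact le_antisymm hMW h
  left
  have hcj : ∀ (φ : MulAut G0) w, φ * MulAut.conj w = MulAut.conj (φ w) * φ := by
    intro φ w
    ext z; simp
  let L : Subgroup (MulAut G0) :=
    { carrier := {l | ∃ h ∈ H, ∃ w ∈ W, l = MulAut.conj w * h}
      one_mem' := ⟨1, one_mem _, 1, one_mem _, by simp⟩
      mul_mem' := by
        rintro _ _ ⟨h, hh, w, hw, rfl⟩ ⟨h', hh', w', hw', rfl⟩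
        refine ⟨h * h', mul_mem hh hh', w * h w', mul_mem hw (hinv h hh w' hw'), ?_⟩
        rw [map_mul]
        calc _ = MulAut.conj w * (h * MulAut.conj w') * h' := by group
          _ = _ := by rw [hcj]; group
      inv_mem' := by
        rintro _ ⟨h, hh, w, hw, rfl⟩
        refine ⟨h⁻¹, inv_mem hh, h⁻¹ w⁻¹, hinv _ (inv_mem hh) _ (inv_mem hw), ?_⟩
        rw [← hcj, map_inv]
        group }
  have hHL : H ≤ L := fun x hx => ⟨x, hx, 1, one_mem _, by simp⟩
  have hlt : H.subgroupOf G < L.subgroupOf G := by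
    refine lt_of_le_of_ne (fun x hx => hHL hx) ?_
    intro e
    apply h
    intro w hw
    have h1 : (⟨MulAut.conj w, hG ⟨w, rfl⟩⟩ : G) ∈ L.subgroupOf G := ⟨1, one_mem _, w, hw, by simp⟩
    rw [← e] at h1
    exact h1
  have htop := hH.2 _ hlt
  rw [eq_top_iff]
  rintro g -
  have h1 : (⟨MulAut.conj g, hG ⟨g, rfl⟩⟩ : G) ∈ L.subgroupOf G := htop ▸ Subgroup.mem_top _
  obtain ⟨h, hh, w, hw, e⟩ := h1
  change MulAut.conj g = _ at e
  have h2 : w⁻¹ * g ∈ W := by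
    apply hMW
    rw [Subgroup.mem_comap, map_mul, e, map_inv, inv_mul_cancel_left]
    exact hh
  exact (Subgroup.mul_mem_cancel_left W (inv_mem hw)).1 h2

theorem main_M (G H : Subgroup (MulAut (PSL2 F × PSL2 F)))
    (hG : (MulAut.conj : (PSL2 F × PSL2 F) →* _).range ≤ G)
    (hHG : H ≤ G) (hH : IsCoatom (H.subgroupOf G)) : Gn (H.comap MulAut.conj) 4 := by
  have hle : H.comap MulAut.conj ≤ (beta ((H.comap MulAut.conj).map (MonoidHom.fst _ _))).prod
      (beta ((H.comap MulAut.conj).map (MonoidHom.snd _ _))) := fun x hx =>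
    ⟨le_beta _ (Subgroup.mem_map_of_mem (MonoidHom.fst _ _) hx),
      le_beta _ (Subgroup.mem_map_of_mem (MonoidHom.snd _ _) hx)⟩
  have hiv : ∀ φ ∈ H, ∀ x ∈ (beta ((H.comap MulAut.conj).map (MonoidHom.fst _ _))).prod
      (beta ((H.comap MulAut.conj).map (MonoidHom.snd _ _))),
      φ x ∈ (beta ((H.comap MulAut.conj).map (MonoidHom.fst _ _))).prod
      (beta ((H.comap MulAut.conj).map (MonoidHom.snd _ _))) := by
    intro φ hφ x hx
    exact beta_inv H hφ hx
  rcases max_dich G H hG hHG hH _ hle hiv with h | h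
  · have t1 : beta ((H.comap MulAut.conj).map (MonoidHom.fst (PSL2 F) (PSL2 F))) = ⊤ := by
      rw [eq_top_iff]
      rintro g -
      have : (g, (1 : PSL2 F)) ∈ (⊤ : Subgroup (PSL2 F × PSL2 F)) := Subgroup.mem_top _
      rw [← h] at this
      exact this.1
    have t2 : beta ((H.comap MulAut.conj).map (MonoidHom.snd (PSL2 F) (PSL2 F))) = ⊤ := by
      rw [eq_top_iff]
      rintro g -
      have : ((1 : PSL2 F), g) ∈ (⊤ : Subgroup (PSL2 F × PSL2 F)) := Subgroup.mem_top _
      rw [← h] at this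
      exact this.2
    refine Gn.fib (n := 2) (m := 2) (two_gen' _ ?_) (two_gen' _ (not_bad t2))
    rintro P ⟨hP, y, hy, hyQ, hy1⟩
    apply not_bad t1 P
    refine ⟨?_, y, ⟨(y, 1), hy, rfl⟩, hyQ, hy1⟩
    rintro _ ⟨⟨g, b⟩, hg, rfl⟩
    change g • P = P
    have h1 : g * y * g⁻¹ ∈ (H.comap MulAut.conj).comap (MonoidHom.inl (PSL2 F) (PSL2 F)) := by
      have := mul_mem (mul_mem hg hy) (inv_mem hg)
      simpa using this
    have h2 := zact.conj_Q g hyQ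
    exact (zact.uni_unique h2 (conj_ne hy1) (hP h1)).symm
  · rw [h]
    exact Gn.prod (n := 2) (m := 2) (beta_gen _) (beta_gen _)

theorem conj_normal {G0 : Type*} [Group G0] : (MulAut.conj : G0 →* MulAut G0).range.Normal := by
  constructor
  rintro _ ⟨g, rfl⟩ α
  refine ⟨α g, ?_⟩
  ext x
  simp

end PS

theorem psl2_times_psl2_automorphism_generation
    (F : Type) [Field F] [Fintype F] :
    Subgroup.center (PSL2 F × PSL2 F) = ⊥ ∧
    ∀ G : Subgroup (MulAut (PSL2 F × PSL2 F)),
      (MulAut.conj : (PSL2 F × PSL2 F) →* MulAut (PSL2 F × PSL2 F)).range ≤ G →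
      minGen ↥G ≤ 6 ∧
      ∀ H : Subgroup (MulAut (PSL2 F × PSL2 F)), H ≤ G →
        IsCoatom (H.subgroupOf G) →
        minGen ↥H ≤ 8 ∧
        minGen ↥(H ⊓ (MulAut.conj :
          (PSL2 F × PSL2 F) →* MulAut (PSL2 F × PSL2 F)).range) ≤ 4 := by
  have hn : (MulAut.conj : (PSL2 F × PSL2 F) →* MulAut (PSL2 F × PSL2 F)).range.Normal := PS.conj_normal
  constructor
  · rw [eq_bot_iff]
    rintro ⟨a, b⟩ hab
    rw [Subgroup.mem_center_iff] at hab
    have ha : a ∈ Subgroup.center (PSL2 F) := by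
      rw [Subgroup.mem_center_iff]
      exact fun g => congrArg Prod.fst (hab (g, 1))
    have hb : b ∈ Subgroup.center (PSL2 F) := by
      rw [Subgroup.mem_center_iff]
      exact fun g => congrArg Prod.snd (hab (1, g))
    rw [PS.center_bot, Subgroup.mem_bot] at ha hb
    rw [ha, hb]
    exact one_mem _
  intro G hG
  constructor
  · obtain ⟨T, h1, h2, h3⟩ := PS.four G
    apply Gn.minGen_le
    refine Gn.ext (n := 4) (m := 2) h1 h2 h3 ?_
    rw [inf_eq_right.2 hG, MonoidHom.range_eq_map]
    obtain ⟨x, y, hxy, hc⟩ := PS.gen_S (F := F)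
    exact (pair_gen hxy hc).map _
  · intro H hHG hH
    have h4 : Gn (H ⊓ (MulAut.conj :
          (PSL2 F × PSL2 F) →* MulAut (PSL2 F × PSL2 F)).range) 4 := by
      rw [inf_comm, ← Subgroup.map_comap_eq]
      exact (PS.main_M G H hG hHG hH).map _
    refine ⟨?_, h4.minGen_le⟩
    obtain ⟨T, h1, h2, h3⟩ := PS.four H
    apply Gn.minGen_le
    exact Gn.ext (n := 4) (m := 4) h1 h2 h3 h4
end

section
/- Let p be a prime, k ≥ 1, let F be a finite field of order q = p^k, and set d = gcd(2, q − 1). Let s be a prime such that d·s divides q − 1, and set e = (q − 1)/(d·s). Let M be the image in PSL₂(F) (under the quotient map from SL₂(F)) of the set of upper triangular matrices {(a b; 0 a⁻¹) : a ∈ F^×, a^{d·e} = 1, b ∈ F}. Let ℓ = min{ i ≥ 1 : e divides p^i − 1 } be the multiplicative order of p modulo e (so ℓ divides k). Then k/ℓ ≤ d(M) ≤ k/ℓ + 1. -/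
open Classical in
theorem minGen_le_aux {G : Type*} [Group G] (M : Subgroup G) (S : Finset G)
    (h : Subgroup.closure (S : Set G) = M) : minGen ↥M ≤ S.card := by
  subst h
  refine le_trans (Nat.sInf_le ⟨S.subtype (· ∈ Subgroup.closure (S : Set G)), rfl, ?_⟩) ?_
  · rw [← Subgroup.closure_closure_coe_preimage (k := (S : Set G))]
    congr 1
    ext x
    simp
  · rw [Finset.card_subtype]
    exact Finset.card_filter_le _ _

open Classical in
theorem exists_of_minGen_aux {G : Type*} [Group G] [Finite G] (M : Subgroup G) :
    ∃ S : Finset G, S.card ≤ minGen ↥M ∧ Subgroup.closure (S : Set G) = M := by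
  have hne : {n : ℕ | ∃ S : Finset ↥M, S.card = n ∧ Subgroup.closure (S : Set ↥M) = ⊤}.Nonempty := by
    have := Fintype.ofFinite ↥M
    exact ⟨_, Finset.univ, rfl, by simp⟩
  obtain ⟨S, hc, hS⟩ := Nat.sInf_mem hne
  refine ⟨S.image M.subtype, Finset.card_image_le.trans hc.le, ?_⟩
  rw [Finset.coe_image, ← MonoidHom.map_closure, hS]
  rw [← MonoidHom.range_eq_map, Subgroup.range_subtype]

/-- upper triangular matrix -/
def TT {F : Type*} [Field F] (a : F) (b : F) (ha : a ≠ 0) : Matrix.SpecialLinearGroup (Fin 2) F :=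
  ⟨!![a, b; 0, a⁻¹], by simp [Matrix.det_fin_two, ha]⟩

theorem TT_mul {F : Type*} [Field F] (a b a' b' : F) (ha : a ≠ 0) (ha' : a' ≠ 0) :
    TT a b ha * TT a' b' ha' = TT (a * a') (a * b' + b * a'⁻¹) (mul_ne_zero ha ha') := by
  ext i j
  rw [Matrix.SpecialLinearGroup.coe_mul]
  fin_cases i <;> fin_cases j <;> simp [TT, Matrix.mul_apply, Fin.sum_univ_two, mul_comm]

theorem TT_inv {F : Type*} [Field F] (a b : F) (ha : a ≠ 0) :
    (TT a b ha)⁻¹ = TT a⁻¹ (-b) (inv_ne_zero ha) := by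
  rw [inv_eq_iff_mul_eq_one, TT_mul]
  ext i j
  fin_cases i <;> fin_cases j <;> simp [TT, ha]
  ring

theorem TT_one {F : Type*} [Field F] : TT (1 : F) 0 one_ne_zero = 1 := by
  ext i j
  fin_cases i <;> fin_cases j <;> simp [TT]

theorem TT_congr {F : Type*} [Field F] {a b a' b' : F} (ha : a ≠ 0) (h : a = a') (h' : b = b') :
    TT a b ha = TT a' b' (h ▸ ha) := by
  subst h; subst h'; rfl

theorem TT_inj {F : Type*} [Field F] {a b a' b' : F} (ha : a ≠ 0) (ha' : a' ≠ 0)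
    (h : TT a b ha = TT a' b' ha') : a = a' ∧ b = b' := by
  have h1 := congrArg (fun g : Matrix.SpecialLinearGroup (Fin 2) F => (g : Matrix (Fin 2) (Fin 2) F) 0 0) h
  have h2 := congrArg (fun g : Matrix.SpecialLinearGroup (Fin 2) F => (g : Matrix (Fin 2) (Fin 2) F) 0 1) h
  exact ⟨by simpa [TT] using h1, by simpa [TT] using h2⟩

theorem TT_zero_pow {F : Type*} [Field F] (a : F) (ha : a ≠ 0) (n : ℕ) :
    (TT a 0 ha) ^ n = TT (a ^ n) 0 (pow_ne_zero n ha) := by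
  induction n with
  | zero => simp [TT_one]
  | succ n ih => rw [pow_succ, ih, TT_mul]; apply TT_congr <;> simp [pow_succ]

/-- subgroup of triangular matrices attached to `V`. -/
def NN {F : Type*} [Field F] (n : ℕ) (V : AddSubgroup F)
    (hV : ∀ a : F, a ^ n = 1 → ∀ x ∈ V, a ^ 2 * x ∈ V) :
    Subgroup (Matrix.SpecialLinearGroup (Fin 2) F) where
  carrier := {g | ∃ (a b : F) (ha : a ≠ 0), a ^ n = 1 ∧ a * b ∈ V ∧ g = TT a b ha}
  one_mem' := ⟨1, 0, one_ne_zero, by simp, by simp, TT_one.symm⟩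
  mul_mem' := by
    rintro _ _ ⟨a, b, ha, h1, h2, rfl⟩ ⟨a', b', ha', h1', h2', rfl⟩
    refine ⟨_, _, mul_ne_zero ha ha', by rw [mul_pow, h1, h1', one_mul], ?_, TT_mul _ _ _ _ _ _⟩
    have : a * a' * (a * b' + b * a'⁻¹) = a ^ 2 * (a' * b') + a * b := by field_simp
    rw [this]
    exact V.add_mem (hV a h1 _ h2') h2
  inv_mem' := by
    rintro _ ⟨a, b, ha, h1, h2, rfl⟩
    refine ⟨_, _, inv_ne_zero ha, by rw [inv_pow, h1, inv_one], ?_, TT_inv _ _ _⟩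
    have : a⁻¹ * -b = -((a⁻¹) ^ 2 * (a * b)) := by field_simp
    rw [this]
    exact V.neg_mem (hV a⁻¹ (by rw [inv_pow, h1, inv_one]) _ h2)

theorem center_le_NN {F : Type*} [Field F] (n : ℕ) (V : AddSubgroup F)
    (hV : ∀ a : F, a ^ n = 1 → ∀ x ∈ V, a ^ 2 * x ∈ V) (hn : ∀ r : F, r ^ 2 = 1 → r ^ n = 1) :
    Subgroup.center _ ≤ NN n V hV := by
  intro g hg
  rw [Matrix.SpecialLinearGroup.mem_center_iff] at hg
  obtain ⟨r, hr, h⟩ := hg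
  have hr : r ^ 2 = 1 := by simpa using hr
  have hr0 : r ≠ 0 := by rintro rfl; simp at hr
  refine ⟨r, 0, hr0, hn r hr, by simp, ?_⟩
  have : r⁻¹ = r := by field_simp; exact hr.symm
  ext i j
  rw [← h]
  fin_cases i <;> fin_cases j <;> simp [TT, this]

/-- the subfield generated by the squares of the `n`-th roots of unity -/
def KK (F : Type*) [Field F] (n : ℕ) : Subfield F :=
  Subfield.closure {x | ∃ a : F, a ^ n = 1 ∧ x = a ^ 2}

theorem KK_rank (p k : ℕ) (hp : p.Prime) (hk : 1 ≤ k)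
    (F : Type) [Field F] [Fintype F] (hF : Fintype.card F = p ^ k)
    (d : ℕ) (hd : d = Nat.gcd 2 (p ^ k - 1))
    (s : ℕ) (hs : s.Prime) (hds : d * s ∣ p ^ k - 1)
    (e : ℕ) (he : e = (p ^ k - 1) / (d * s))
    (ℓ : ℕ) (hℓ : ℓ = sInf {i : ℕ | 1 ≤ i ∧ e ∣ p ^ i - 1}) :
    Module.finrank (KK F (d * e)) F = k / ℓ := by
  classical
  set K := KK F (d * e) with hK
  have hq : d * s * e = p ^ k - 1 := by rw [he]; exact Nat.mul_div_cancel' hds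
  have hek : e ∣ p ^ k - 1 := ⟨d * s, by rw [← hq]; ring⟩
  have hmem := Nat.sInf_mem (s := {i : ℕ | 1 ≤ i ∧ e ∣ p ^ i - 1}) ⟨k, hk, hek⟩
  rw [← hℓ] at hmem
  obtain ⟨hl1, hle⟩ := hmem
  have : Fact p.Prime := ⟨hp⟩
  have : CharP F p := charP_of_card_eq_prime_pow hF
  have : Fintype K := Fintype.ofFinite K
  have hd2 : d ∣ 2 := hd ▸ Nat.gcd_dvd_left _ _
  have hcard : p ^ k = Fintype.card K ^ Module.finrank K F := by
    rw [← hF]; exact Module.card_eq_pow_finrank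
  have hpos : 0 < Module.finrank K F := Module.finrank_pos
  have hdvd : Fintype.card K ∣ p ^ k := by rw [hcard]; exact dvd_pow_self _ hpos.ne'
  obtain ⟨m, hmk, hm⟩ := (Nat.dvd_prime_pow hp).1 hdvd
  have hkm : k = m * Module.finrank K F := by
    rw [hm, ← pow_mul] at hcard
    exact Nat.pow_right_injective hp.two_le hcard
  have hm0 : 1 ≤ m := by
    rcases Nat.eq_zero_or_pos m with h | h
    · rw [h] at hkm; omega
    · exact h
  -- m ≤ ℓ
  have hfix : ∀ x ∈ K, x ^ p ^ ℓ = x := by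
    intro x hx
    induction hx using Subfield.closure_induction with
    | mem x hx =>
      obtain ⟨a, ha, rfl⟩ := hx
      obtain ⟨c, hc⟩ := hle
      obtain ⟨c', hc'⟩ := hd2
      have h1 : p ^ ℓ = e * c + 1 := by
        have := Nat.pow_pos (n := ℓ) hp.pos
        omega
      rw [h1, pow_succ, ← pow_mul]
      have : 2 * (e * c) = d * e * (c' * c) := by rw [hc']; ring
      rw [this, pow_mul, ha, one_pow, one_mul]
    | one => simp
    | add x y _ _ hx hy => rw [add_pow_char_pow, hx, hy]
    | neg x _ hx => 
      have h := add_pow_char_pow x (-x) p ℓ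
      rw [hx, add_neg_cancel, zero_pow (Nat.pow_pos hp.pos).ne'] at h
      exact (neg_eq_of_add_eq_zero_right h.symm).symm
    | inv x _ hx => rw [inv_pow, hx]
    | mul x y _ _ hx hy => rw [mul_pow, hx, hy]
  have hpl : 1 < p ^ ℓ := Nat.one_lt_pow (by omega) hp.one_lt
  have hml : m ≤ ℓ := by
    have h1 : ∀ x : Kˣ, x ^ (p ^ ℓ - 1) = 1 := by
      intro x
      have h2 : x ^ p ^ ℓ = x := by
        ext
        simpa using hfix _ (x : K).2
      have h3 : x ^ (p ^ ℓ - 1) * x = 1 * x := by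
        rw [← pow_succ, Nat.sub_add_cancel hpl.le, h2, one_mul]
      exact mul_right_cancel h3
    rw [FiniteField.forall_pow_eq_one_iff, hm] at h1
    have h4 := Nat.le_of_dvd (by omega) h1
    exact (Nat.pow_le_pow_iff_right hp.one_lt).1 (by omega)
  have hlm : ℓ ≤ m := by
    rw [hℓ]
    refine Nat.sInf_le ⟨hm0, ?_⟩
    have h1 : ∀ x : Fˣ, x ^ (2 * s * (p ^ m - 1)) = 1 := by
      intro x
      have hx : (x : F) ^ (2 * s) ∈ K := by
        refine Subfield.subset_closure ⟨(x : F) ^ s, ?_, by rw [← pow_mul, mul_comm]⟩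
        rw [← pow_mul, show s * (d * e) = d * s * e by ring, hq, ← hF]
        exact FiniteField.pow_card_sub_one_eq_one _ x.ne_zero
      have h2 := FiniteField.pow_card_sub_one_eq_one (K := K) ⟨_, hx⟩ (by
        intro h
        exact pow_ne_zero (2 * s) x.ne_zero (congrArg Subtype.val h))
      rw [hm] at h2
      have h3 := congrArg Subtype.val h2
      ext
      push_cast
      rw [pow_mul]
      simpa using h3
    rw [FiniteField.forall_pow_eq_one_iff, hF, ← hq] at h1
    have h2 : d * e ∣ 2 * (p ^ m - 1) := by
      refine Nat.dvd_of_mul_dvd_mul_left hs.pos ?_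
      convert h1 using 1 <;> ring
    rcases (Nat.dvd_prime Nat.prime_two).1 hd2 with h | h
    · have hc : Nat.Coprime 2 (p ^ k - 1) := by rw [Nat.Coprime, ← hd, h]
      rw [h, one_mul] at h2
      exact (Nat.Coprime.coprime_dvd_right hek hc).symm.dvd_of_dvd_mul_left h2
    · rw [h] at h2
      exact Nat.dvd_of_mul_dvd_mul_left (by norm_num) h2
  have : m = ℓ := le_antisymm hml hlm
  rw [hkm, this, Nat.mul_div_cancel_left _ (by omega)]

theorem KK_stable {F : Type} [Field F] [Fintype F] (n : ℕ) (A : AddSubgroup F)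
    (hA : ∀ a : F, a ^ n = 1 → ∀ x ∈ A, a ^ 2 * x ∈ A) (c : F) (hc : c ∈ KK F n) :
    ∀ x ∈ A, c * x ∈ A := by
  have hpow : ∀ y : F, (∀ x ∈ A, y * x ∈ A) → ∀ m : ℕ, ∀ x ∈ A, y ^ m * x ∈ A := by
    intro y hy m
    induction m with
    | zero => simp
    | succ m ih => intro x hx; rw [pow_succ, mul_assoc]; exact ih _ (hy x hx)
  induction hc using Subfield.closure_induction with
  | mem y hy => obtain ⟨a, ha, rfl⟩ := hy; exact hA a ha
  | one => simp
  | add y z _ _ hy hz => intro x hx; rw [add_mul]; exact A.add_mem (hy x hx) (hz x hx)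
  | neg y _ hy => intro x hx; rw [neg_mul]; exact A.neg_mem (hy x hx)
  | inv y _ hy =>
    by_cases h0 : y = 0
    · simp [h0]
    · have h1 : y⁻¹ = y ^ (Fintype.card F - 2) := by
        symm
        apply eq_inv_of_mul_eq_one_left
        rw [← pow_succ]
        rw [← FiniteField.pow_card_sub_one_eq_one y h0]
        congr 1
        have := Fintype.one_lt_card (α := F)
        omega
      rw [h1]; exact hpow y hy _
  | mul y z _ _ hy hz => intro x hx; rw [mul_assoc]; exact hy _ (hz x hx)

/-- Let `F` be a field of order `q = p^k` (`p` prime), `d = gcd(2, q - 1)`, `s` a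
prime with `d·s ∣ q - 1`, and `e = (q - 1)/(d·s)`.  Let `M ≤ PSL₂(F)` be the image
of the upper triangular matrices `(a b; 0 a⁻¹)` with `a^{d·e} = 1`, and let
`ℓ = min {i ≥ 1 : e ∣ p^i - 1}` be the multiplicative order of `p` modulo `e`.
Then `k/ℓ ≤ d(M) ≤ k/ℓ + 1`. -/
theorem borel_index_s_subgroup_generation
    (p k : ℕ) (hp : p.Prime) (hk : 1 ≤ k)
    (F : Type) [Field F] [Fintype F] (hF : Fintype.card F = p ^ k)
    (d : ℕ) (hd : d = Nat.gcd 2 (p ^ k - 1))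
    (s : ℕ) (hs : s.Prime) (hds : d * s ∣ p ^ k - 1)
    (e : ℕ) (he : e = (p ^ k - 1) / (d * s))
    (M : Subgroup (PSL2 F))
    (hM : ∀ x : PSL2 F, x ∈ M ↔
      ∃ (a b : F), a ≠ 0 ∧ a ^ (d * e) = 1 ∧
        ∃ g : Matrix.SpecialLinearGroup (Fin 2) F,
          (g : Matrix (Fin 2) (Fin 2) F) = !![a, b; 0, a⁻¹] ∧
          x = QuotientGroup.mk g)
    (ℓ : ℕ) (hℓ : ℓ = sInf {i : ℕ | 1 ≤ i ∧ e ∣ p ^ i - 1}) :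
    k / ℓ ≤ minGen ↥M ∧ minGen ↥M ≤ k / ℓ + 1 := by
  classical
  have hrank := KK_rank p k hp hk F hF d hd s hs hds e he ℓ hℓ
  have hq : d * s * e = p ^ k - 1 := by rw [he]; exact Nat.mul_div_cancel' hds
  have hq1 : 1 < p ^ k := Nat.one_lt_pow (by omega) hp.one_lt
  have hde : d * e ≠ 0 := by
    intro h
    have : d * s * e = s * (d * e) := by ring
    rw [this, h] at hq
    omega
  have hn : ∀ r : F, r ^ 2 = 1 → r ^ (d * e) = 1 := by
    intro r hr
    have hd2 : d ∣ 2 := hd ▸ Nat.gcd_dvd_left _ _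
    rcases (Nat.dvd_prime Nat.prime_two).1 hd2 with h | h
    · have hc : Nat.Coprime 2 (p ^ k - 1) := by rw [Nat.Coprime, ← hd, h]
      have hr0 : r ≠ 0 := by rintro rfl; simp at hr
      have h2 := FiniteField.pow_card_sub_one_eq_one r hr0
      rw [hF] at h2
      have h3 := pow_gcd_eq_one.2 ⟨hr, h2⟩
      rw [hc] at h3
      rw [show r = 1 by simpa using h3, one_pow]
    · rw [h, pow_mul, hr, one_pow]
  have hM' : ∀ x : PSL2 F, x ∈ M ↔ ∃ (a b : F) (ha : a ≠ 0), a ^ (d * e) = 1 ∧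
      x = QuotientGroup.mk (TT a b ha) := by
    intro x
    rw [hM]
    constructor
    · rintro ⟨a, b, ha, h, g, hg, rfl⟩
      exact ⟨a, b, ha, h, by congr 1; exact Subtype.ext hg⟩
    · rintro ⟨a, b, ha, h, rfl⟩
      exact ⟨a, b, ha, h, _, rfl, rfl⟩
  generalize d * e = n at *
  rw [← hrank]
  constructor
  · obtain ⟨S, hc, hS⟩ := exists_of_minGen_aux M
    refine le_trans ?_ hc
    have hSM : ∀ x ∈ S, ∃ (a b : F) (ha : a ≠ 0), a ^ n = 1 ∧
        x = QuotientGroup.mk (TT a b ha) := fun x hx =>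
      (hM' x).1 (hS ▸ Subgroup.subset_closure hx)
    choose! a b ha h1 h2 using hSM
    set V : Submodule (KK F n) F :=
      Submodule.span (KK F n) ((S.image fun x => a x * b x : Finset F) : Set F) with hVdef
    have hV : ∀ a : F, a ^ n = 1 → ∀ x ∈ V.toAddSubgroup, a ^ 2 * x ∈ V.toAddSubgroup := by
      intro a ha x hx
      exact V.smul_mem (⟨a ^ 2, Subfield.subset_closure ⟨a, ha, rfl⟩⟩ : KK F n) hx
    have hle : M ≤ (NN n V.toAddSubgroup hV).map (QuotientGroup.mk' _) := by
      rw [← hS, Subgroup.closure_le]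
      intro x hx
      have hx : x ∈ S := hx
      refine ⟨TT (a x) (b x) (ha x hx), ⟨a x, b x, ha x hx, h1 x hx, ?_, rfl⟩, (h2 x hx).symm⟩
      exact Submodule.subset_span (Finset.mem_coe.2 (Finset.mem_image_of_mem _ hx))
    have hVtop : V = ⊤ := by
      rw [eq_top_iff]
      intro x _
      have hxM : (QuotientGroup.mk (TT 1 x one_ne_zero) : PSL2 F) ∈ M :=
        (hM' _).2 ⟨1, x, one_ne_zero, one_pow _, rfl⟩
      obtain ⟨g, hg, hgx⟩ := hle hxM
      have hz : g⁻¹ * TT 1 x one_ne_zero ∈ Subgroup.center _ := QuotientGroup.eq.1 hgx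
      have hN := (NN n V.toAddSubgroup hV).mul_mem hg (center_le_NN n _ hV hn hz)
      rw [mul_inv_cancel_left] at hN
      obtain ⟨a', b', ha', -, h4, h5⟩ := hN
      obtain ⟨rfl, rfl⟩ := TT_inj _ _ h5
      simpa using h4
    have := finrank_span_finset_le_card (R := KK F n) (S.image fun x => a x * b x)
    rw [← finrank_top, ← hVtop]
    exact this.trans Finset.card_image_le
  · have : NeZero n := ⟨hde⟩
    obtain ⟨z, hz⟩ := IsCyclic.exists_monoid_generator (α := rootsOfUnity n F)
    have hz0 : ((z : Fˣ) : F) ≠ 0 := (z : Fˣ).ne_zero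
    have hzn : ((z : Fˣ) : F) ^ n = 1 := by
      have := z.2
      rw [mem_rootsOfUnity'] at this
      exact this
    have hgen : ∀ a : F, a ^ n = 1 → ∃ m : ℕ, ((z : Fˣ) : F) ^ m = a := by
      intro a ha
      obtain ⟨m, hm⟩ := Submonoid.mem_powers_iff _ _ |>.1 (hz (rootsOfUnity.mkOfPowEq a ha))
      refine ⟨m, ?_⟩
      have := congrArg (fun y : rootsOfUnity n F => ((y : Fˣ) : F)) hm
      simpa using this
    generalize ((z : Fˣ) : F) = ζ at *
    let B := Module.finBasis (KK F n) F
    let S : Finset (PSL2 F) := insert (QuotientGroup.mk (TT ζ 0 hz0))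
      (Finset.univ.image fun i => QuotientGroup.mk (TT 1 (B i) one_ne_zero))
    have hcard : S.card ≤ Module.finrank (KK F n) F + 1 := by
      refine (Finset.card_insert_le _ _).trans (Nat.succ_le_succ ?_)
      refine Finset.card_image_le.trans ?_
      simp
    refine le_trans (minGen_le_aux M S ?_) hcard
    apply le_antisymm
    · rw [Subgroup.closure_le]
      intro x hx
      have hx : x ∈ S := hx
      rw [Finset.mem_insert, Finset.mem_image] at hx
      rcases hx with rfl | ⟨i, -, rfl⟩
      · exact (hM' _).2 ⟨_, _, hz0, hzn, rfl⟩
      · exact (hM' _).2 ⟨_, _, one_ne_zero, one_pow _, rfl⟩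
    · set G := (Subgroup.closure (S : Set (PSL2 F))).comap (QuotientGroup.mk' _) with hG
      have hGz : TT ζ 0 hz0 ∈ G := Subgroup.subset_closure (by simp [S])
      have hGB : ∀ i, TT 1 (B i) one_ne_zero ∈ G := fun i =>
        Subgroup.subset_closure (by simp [S])
      have hGa : ∀ (a : F) (ha : a ≠ 0), a ^ n = 1 → TT a 0 ha ∈ G := by
        intro a ha h
        obtain ⟨m, rfl⟩ := hgen a h
        rw [← TT_zero_pow _ hz0]
        exact G.pow_mem hGz m
      let A : AddSubgroup F :=
        { carrier := {x | TT 1 x one_ne_zero ∈ G}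
          zero_mem' := by
            change TT 1 0 one_ne_zero ∈ G
            rw [TT_one]; exact G.one_mem
          add_mem' := by
            intro x y hx hy
            have h := G.mul_mem hx hy
            rw [TT_mul] at h
            change TT 1 (x + y) one_ne_zero ∈ G
            convert h using 1
            apply TT_congr <;> simp [add_comm]
          neg_mem' := by
            intro x hx
            have h := G.inv_mem hx
            rw [TT_inv] at h
            change TT 1 (-x) one_ne_zero ∈ G
            convert h using 1
            apply TT_congr <;> simp }
      have hA : ∀ a : F, a ^ n = 1 → ∀ x ∈ A, a ^ 2 * x ∈ A := by
        intro a h x hx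
        have ha : a ≠ 0 := by
          rintro rfl
          rw [zero_pow hde] at h
          exact zero_ne_one h
        have h1 := G.mul_mem (G.mul_mem (hGa a ha h) hx) (G.inv_mem (hGa a ha h))
        rw [TT_inv, TT_mul, TT_mul] at h1
        change TT 1 (a ^ 2 * x) one_ne_zero ∈ G
        convert h1 using 1
        apply TT_congr
        · field_simp
        · simp; ring
      have hK := KK_stable n A hA
      have hAtop : ∀ x, x ∈ A := by
        intro x
        rw [← B.sum_repr x]
        refine A.sum_mem fun i _ => ?_
        exact hK _ (B.repr x i).2 _ (hGB i)
      intro x hx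
      obtain ⟨a, b, ha, h, rfl⟩ := (hM' x).1 hx
      have h1 : TT 1 (a * b) one_ne_zero * TT a 0 ha ∈ G := G.mul_mem (hAtop _) (hGa a ha h)
      rw [TT_mul] at h1
      have h2 : TT a b ha ∈ G := by
        convert h1 using 1
        apply TT_congr
        · simp
        · field_simp; simp
      exact h2
end
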